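/- arXiv:1704.08789 — 3 statements merged into one kernel-verified Lean document; each statement's English description precedes it below -/
import Mathlib

section
/- Let M be a compact metric space admitting a good covering 𝒰 (which is then necessarily finite). Then M is Lipschitz homotopy equivalent to the geometric realization |𝒩_𝒰| of the nerve of 𝒰. -/
open Metric Set

/-- Two maps between metric spaces are *Lipschitz homotopic* if there is a Lipschitz map
`H : X × [0,1] → Y` with `H(·,0) = f` and `H(·,1) = g`. -/
def LipHomotopic {X Y : Type*} [MetricSpace X] [MetricSpace Y] (f g : X → Y) : Prop :=
  ∃ (H : X × unitInterval → Y) (K : NNReal), LipschitzWith K H ∧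
    (∀ x, H (x, 0) = f x) ∧ (∀ x, H (x, 1) = g x)

/-- Two metric spaces are *Lipschitz homotopy equivalent* if there are Lipschitz maps
`f : X → Y` and `g : Y → X` with `g ∘ f` and `f ∘ g` Lipschitz homotopic to identities. -/
def LipHomotopyEquiv (X Y : Type*) [MetricSpace X] [MetricSpace Y] : Prop :=
  ∃ (f : X → Y) (g : Y → X) (Kf Kg : NNReal),
    LipschitzWith Kf f ∧ LipschitzWith Kg g ∧
      LipHomotopic (g ∘ f) id ∧ LipHomotopic (f ∘ g) id

/-- A subset `V` of a metric space admits a *Lipschitz strong deformation retraction to a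
point* `p ∈ V` if there is a Lipschitz `F : V × [0,1] → V` with `F(x,0) = x`, `F(x,1) = p`
and `F(p,t) = p` for all `t`. -/
def IsLipSDRToPoint {X : Type*} [MetricSpace X] (V : Set X) : Prop :=
  ∃ (p : V) (F : V × unitInterval → V) (K : NNReal),
    LipschitzWith K F ∧ (∀ x, F (x, 0) = x) ∧ (∀ x, F (x, 1) = p) ∧ (∀ t, F (p, t) = p)

/-- A locally finite open covering is *good* if closures of its elements are compact and
every nonempty intersection of finitely many elements admits a Lipschitz strong deformation
retraction to a point. -/
def IsGoodCovering {X : Type*} [MetricSpace X] {J : Type*} (U : J → Set X) : Prop :=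
  (∀ j, IsOpen (U j)) ∧ (⋃ j, U j) = univ ∧ LocallyFinite U ∧
    (∀ j, IsCompact (closure (U j))) ∧
    ∀ s : Finset J, s.Nonempty → (⋂ j ∈ s, U j).Nonempty → IsLipSDRToPoint (⋂ j ∈ s, U j)

/-- The geometric realization of the nerve of a finite covering `U : Fin N → Set M`:
the set of `θ : Fin N → ℝ` with values in `[0,1]`, total sum `1`, whose support spans a
simplex of the nerve (i.e. the corresponding intersection is nonempty).  It carries the
sup metric, induced from the product metric on `Fin N → ℝ`. -/
def NerveSet {M : Type*} [MetricSpace M] {N : ℕ} (U : Fin N → Set M) : Set (Fin N → ℝ) :=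
  {θ | (∀ j, θ j ∈ Icc (0:ℝ) 1) ∧ ∑ j, θ j = 1 ∧ (⋂ j ∈ {j | θ j ≠ 0}, U j).Nonempty}

/-! A Lipschitz partition of unity subordinate to `U` gives `f : M → NerveSet U`. In the other
direction, attach to each simplex `s` of the nerve a Lipschitz cutoff `τ s`, supported in the open
star of the barycenter of `s`, such that at every `θ` some cutoff equals `1`. The simplices active
at `θ` then form a chain of faces of the support of `θ`. Start at any `y ∈ ⋂ j ∈ supp θ, U j` and
run the contractions of the sets `⋂ j ∈ s, U j` for the times `τ s θ`, larger simplices first. As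
one of them is run to its end, the endpoint `g θ` does not depend on `y`; hence `y` may be kept
locally constant in `θ`, and `g` is locally Lipschitz.

For `θ = f x` one may start at `y = x`, and scaling the times down to `0` deforms `g ∘ f` to the
identity. Conversely, every simplex active at `θ` contains the vertices `j` at which `θ` is maximal,
so `g θ ∈ U j` for these; hence `f ∘ g` and the identity are both contiguous to a partition of unity
subordinate to the sets `{θ | θ j ≠ 0 ∧ g θ ∈ U j}`. -/

open scoped unitInterval

section Lipschitz

variable {X Y : Type*}

theorem exists_lipschitzWith_of_locallyLipschitz [PseudoMetricSpace X] [PseudoMetricSpace Y]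
    [CompactSpace X] {f : X → Y} (hf : LocallyLipschitz f) : ∃ K, LipschitzWith K f := by
  simpa only [lipschitzOnWith_univ] using
    (hf.locallyLipschitzOn (s := univ)).exists_lipschitzOnWith_of_compact isCompact_univ

theorem locallyLipschitz_of_isOpen_cover [PseudoEMetricSpace X] [PseudoEMetricSpace Y] {f : X → Y}
    (h : ∀ x, ∃ s : Set X, IsOpen s ∧ x ∈ s ∧ LocallyLipschitz fun y : s ↦ f y) :
    LocallyLipschitz f := by
  intro x
  obtain ⟨s, hs, hx, hfs⟩ := h x
  obtain ⟨K, t, ht, hK⟩ := locallyLipschitzOn_iff_restrict.2 hfs hx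
  exact ⟨K, t, hs.nhdsWithin_eq hx ▸ ht, hK⟩

theorem lipschitzWith_ite_snd_le [PseudoEMetricSpace X] [PseudoEMetricSpace Y] {f g : X × ℝ → Y}
    {Kf Kg : NNReal} {a : ℝ} (hf : LipschitzWith Kf f) (hg : LipschitzWith Kg g)
    (hfg : ∀ x, f (x, a) = g (x, a)) :
    LipschitzWith (Kf + Kg) fun p ↦ if p.2 ≤ a then f p else g p := by
  have across : ∀ p q : X × ℝ, p.2 ≤ a → a ≤ q.2 →
      edist (f p) (g q) ≤ ↑(Kf + Kg) * edist p q := by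
    intro p q hp hq
    have hpa : edist p (p.1, a) ≤ edist p q := by
      simp only [Prod.edist_eq, edist_self, edist_dist, Real.dist_eq]
      rw [abs_of_nonpos (by linarith), abs_of_nonpos (by linarith)]
      exact max_le zero_le (le_max_of_le_right (ENNReal.ofReal_le_ofReal (by linarith)))
    have haq : edist (p.1, a) q ≤ edist p q := by
      simp only [Prod.edist_eq, edist_dist a, edist_dist p.2, Real.dist_eq]
      rw [abs_of_nonpos (by linarith), abs_of_nonpos (by linarith)]
      exact max_le_max le_rfl (ENNReal.ofReal_le_ofReal (by linarith))
    calc edist (f p) (g q) ≤ edist (f p) (f (p.1, a)) + edist (g (p.1, a)) (g q) :=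
          hfg p.1 ▸ edist_triangle _ _ _
      _ ≤ Kf * edist p q + Kg * edist p q :=
          add_le_add ((hf _ _).trans (by gcongr)) ((hg _ _).trans (by gcongr))
      _ = ↑(Kf + Kg) * edist p q := by rw [ENNReal.coe_add, add_mul]
  intro p q
  dsimp only
  split_ifs with hp hq hq
  · exact hf.weaken le_self_add p q
  · exact across p q hp (not_le.1 hq).le
  · rw [edist_comm, edist_comm p]
    exact across q p hq (not_le.1 hp).le
  · exact hg.weaken le_add_self p q

end Lipschitz

namespace LipHomotopic

variable {X Y : Type*} [MetricSpace X] [MetricSpace Y] {f g h : X → Y}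

theorem of_locallyLipschitz [CompactSpace X] {H : X × I → Y} (hH : LocallyLipschitz H)
    (h0 : ∀ x, H (x, 0) = f x) (h1 : ∀ x, H (x, 1) = g x) : LipHomotopic f g :=
  let ⟨K, hK⟩ := exists_lipschitzWith_of_locallyLipschitz hH
  ⟨H, K, hK, h0, h1⟩

theorem trans (hfg : LipHomotopic f g) (hgh : LipHomotopic g h) : LipHomotopic f h := by
  obtain ⟨H, K, hH, hf, hg⟩ := hfg
  obtain ⟨H', K', hH', hg', hh⟩ := hgh
  have lipschitz_reparam (c : ℝ) : LipschitzWith (max 1 (1 * 2))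
      fun p : X × ℝ ↦ (p.1, projIcc (0 : ℝ) 1 zero_le_one (2 * p.2 - c)) := by
    refine LipschitzWith.prod_fst.prodMk ((LipschitzWith.projIcc _).comp ?_)
    refine LipschitzWith.of_dist_le_mul fun p q ↦ ?_
    rw [Real.dist_eq, sub_sub_sub_cancel_right, ← mul_sub, abs_mul, abs_two]
    exact mul_le_mul_of_nonneg_left (le_max_right _ _) zero_le_two
  have hglue := lipschitzWith_ite_snd_le (a := 1 / 2) (hH.comp (lipschitz_reparam 0))
    (hH'.comp (lipschitz_reparam 1)) fun x ↦ by simp [hg, hg']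
  refine ⟨_, _, hglue.comp (LipschitzWith.prod_fst.prodMk
    ((LipschitzWith.subtype_val _).comp LipschitzWith.prod_snd)), fun x ↦ ?_, fun x ↦ ?_⟩
  · simp [hf]
  · norm_num [hh]

end LipHomotopic

section Cutoffs

variable {X ι : Type*} [PseudoMetricSpace X] [CompactSpace X] {O : ι → Set X}

theorem exists_lipschitz_cutoffs (hO : ∀ i, IsOpen (O i)) (hcov : ∀ x, ∃ i, x ∈ O i) :
    ∃ (τ : ι → X → I) (K : NNReal), (∀ i, LipschitzWith K (τ i)) ∧
      (∀ i, tsupport (τ i) ⊆ O i) ∧ ∀ x, ∃ i, τ i x = 1 := by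
  obtain ⟨δ, hδ, hball⟩ := lebesgue_number_lemma_of_metric isCompact_univ hO
    (fun x _ ↦ mem_iUnion.2 (hcov x))
  let core (i : ι) : Set X := {x | ball x δ ⊆ O i}
  let φ (i : ι) := thickenedIndicator (half_pos hδ) (core i)
  have hφ (i : ι) (x : X) : (φ i x : ℝ) ≤ 1 := mod_cast thickenedIndicator_le_one _ _ x
  refine ⟨fun i x ↦ ⟨φ i x, (φ i x).2, hφ i x⟩, _,
    fun i ↦ lipschitzWith_thickenedIndicator (half_pos hδ) (core i), fun i ↦ ?_, fun x ↦ ?_⟩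
  · have hsupp : Function.support (fun x ↦ (⟨φ i x, (φ i x).2, hφ i x⟩ : I)) ⊆
        thickening (δ / 2) (core i) := fun x hx ↦ by
      by_contra hx'
      exact hx (Subtype.ext (congrArg NNReal.toReal (thickenedIndicator_zero _ _ hx')))
    calc tsupport _ ⊆ closure (thickening (δ / 2) (core i)) := closure_mono hsupp
      _ ⊆ cthickening (δ / 2) (core i) := closure_thickening_subset_cthickening _ _
      _ ⊆ thickening δ (core i) := cthickening_subset_thickening' hδ (half_lt_self hδ) _
      _ ⊆ O i := fun x hx ↦ by
        obtain ⟨y, hy, hxy⟩ := mem_thickening_iff.1 hx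
        exact hy hxy
  · obtain ⟨i, hi⟩ := hball x (mem_univ x)
    exact ⟨i, Subtype.ext (congrArg NNReal.toReal (thickenedIndicator_one _ _ hi))⟩

theorem exists_locallyLipschitz_partitionOfUnity [Fintype ι] [LinearOrder ι]
    (hO : ∀ i, IsOpen (O i)) (hcov : ∀ x, ∃ i, x ∈ O i) :
    ∃ c : X → ι → ℝ, LocallyLipschitz c ∧ (∀ x, c x ∈ stdSimplex ℝ ι) ∧
      ∀ x i, c x i ≠ 0 → x ∈ O i := by
  obtain ⟨τ, K, hτ, hsupp, hone⟩ := exists_lipschitz_cutoffs hO hcov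
  let stick (t : ι → ℝ) (i : ι) : ℝ := t i * ∏ j with j < i, (1 - t j)
  have hstick : ContDiff ℝ 1 stick := contDiff_pi.2 fun i ↦
    (contDiff_apply ℝ ℝ i).mul (contDiff_prod fun j _ ↦ contDiff_const.sub (contDiff_apply ℝ ℝ j))
  refine ⟨fun x ↦ stick fun i ↦ τ i x, hstick.locallyLipschitz.comp ?_, fun x ↦ ⟨fun i ↦ ?_, ?_⟩,
    fun x i hi ↦ hsupp i (subset_tsupport _ ?_)⟩
  · exact (LipschitzWith.locallyLipschitz (K := K) fun x y ↦
      edist_pi_le_iff.2 fun i ↦ hτ i x y)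
  · exact mul_nonneg (τ i x).2.1 (Finset.prod_nonneg fun j _ ↦ sub_nonneg.2 (τ j x).2.2)
  · obtain ⟨i, hi⟩ := hone x
    have hprod : ∏ j, (1 - (τ j x : ℝ)) = 0 :=
      Finset.prod_eq_zero (Finset.mem_univ i) (by simp [hi])
    rw [Finset.prod_one_sub_ordered, sub_eq_zero] at hprod
    exact hprod.symm
  · exact fun h ↦ left_ne_zero_of_mul hi (by simp [h])

end Cutoffs

section Contraction

variable {M P ι : Type*} [PseudoEMetricSpace M] [PseudoEMetricSpace P]

/-- A locally Lipschitz contraction of `W` onto a point. Unlike in `IsLipSDRToPoint`, the homotopy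
may move the point. -/
structure LocLipContraction (W : Set M) where
  homotopy : W × I → W
  center : W
  locallyLipschitz : LocallyLipschitz homotopy
  map_zero : ∀ x, homotopy (x, 0) = x
  map_one : ∀ x, homotopy (x, 1) = center

namespace LocLipContraction

variable {W A : Set M} (F : LocLipContraction W)

open Classical in
/-- The contraction as a homotopy of the ambient space, stationary off `W`
(hence in general discontinuous). -/
noncomputable def extend (y : M) (t : I) : M :=
  if h : y ∈ W then F.homotopy (⟨y, h⟩, t) else y

theorem extend_of_mem {y : M} (h : y ∈ W) (t : I) : F.extend y t = F.homotopy (⟨y, h⟩, t) :=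
  dif_pos h

theorem extend_zero (y : M) : F.extend y 0 = y := by
  by_cases h : y ∈ W
  · rw [F.extend_of_mem h, F.map_zero]
  · exact dif_neg h

theorem extend_one {y : M} (h : y ∈ W) : F.extend y 1 = F.center := by
  rw [F.extend_of_mem h, F.map_one]

theorem extend_mem {y : M} {t : I} (hy : y ∈ A) (hWA : t ≠ 0 → W ⊆ A) : F.extend y t ∈ A := by
  by_cases ht : t = 0
  · rwa [ht, F.extend_zero]
  by_cases h : y ∈ W
  · rw [F.extend_of_mem h]
    exact hWA ht (Subtype.property _)
  · rwa [extend, dif_neg h]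

theorem locallyLipschitz_extend_comp (hW : IsOpen W) {k : P → M} {τ : P → I}
    (hk : LocallyLipschitz k) (hτ : LocallyLipschitz τ) (hkW : ∀ p ∈ tsupport τ, k p ∈ W) :
    LocallyLipschitz fun p ↦ F.extend (k p) (τ p) := by
  refine locallyLipschitz_of_isOpen_cover fun p ↦ ?_
  have hval (s : Set P) := (LipschitzWith.subtype_val s).locallyLipschitz
  by_cases hp : p ∈ tsupport τ
  · refine ⟨k ⁻¹' W, hW.preimage hk.continuous, hkW p hp, ?_⟩
    have hkq : LocallyLipschitz fun q : k ⁻¹' W ↦ (⟨k q, q.2⟩ : W) := hk.comp (hval _)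
    have hext : (fun q : k ⁻¹' W ↦ F.extend (k q) (τ q)) =
        fun q : k ⁻¹' W ↦ (F.homotopy (⟨k q, q.2⟩, τ q) : M) := funext fun q ↦ F.extend_of_mem q.2 _
    rw [hext]
    exact (LipschitzWith.subtype_val W).locallyLipschitz.comp
      (F.locallyLipschitz.comp (hkq.prodMk (hτ.comp (hval _))))
  · refine ⟨(tsupport τ)ᶜ, (isClosed_tsupport τ).isOpen_compl, hp, ?_⟩
    have hext : (fun q : ↥(tsupport τ)ᶜ ↦ F.extend (k q) (τ q)) =
        fun q : ↥(tsupport τ)ᶜ ↦ k q := funext fun q ↦ by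
          rw [image_eq_zero_of_notMem_tsupport q.2, F.extend_zero]
    rw [hext]
    exact hk.comp (hval _)

end LocLipContraction

/-- Apply the contractions in the list one after the other, the last one first,
running the `i`-th for the time `t i`. -/
noncomputable def contractAlong {V : ι → Set M} (F : ∀ i, LocLipContraction (V i)) (L : List ι)
    (t : ι → I) (x : M) : M :=
  L.foldr (fun i y ↦ (F i).extend y (t i)) x

section ContractAlong

variable {V : ι → Set M} (F : ∀ i, LocLipContraction (V i)) {L : List ι}

theorem contractAlong_zero (x : M) : contractAlong F L 0 x = x := by
  induction L with
  | nil => rfl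
  | cons i L ih => exact (congrArg (fun y ↦ (F i).extend y 0) ih).trans ((F i).extend_zero x)

theorem contractAlong_mem {t : ι → I} {x : M} {A : Set M} (hx : x ∈ A)
    (hVA : ∀ i ∈ L, t i ≠ 0 → V i ⊆ A) : contractAlong F L t x ∈ A := by
  induction L with
  | nil => exact hx
  | cons i L ih =>
    rw [List.forall_mem_cons] at hVA
    exact (F i).extend_mem (ih hVA.2) hVA.1

theorem contractAlong_eq_of_exists_eq_one {t : ι → I} {x y : M}
    (hL : L.Pairwise fun i j ↦ t i ≠ 0 → t j ≠ 0 → V j ⊆ V i)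
    (hx : ∀ i ∈ L, t i ≠ 0 → x ∈ V i) (hy : ∀ i ∈ L, t i ≠ 0 → y ∈ V i)
    (hone : ∃ i ∈ L, t i = 1) : contractAlong F L t x = contractAlong F L t y := by
  induction L with
  | nil => simp at hone
  | cons i L ih =>
    rw [List.pairwise_cons] at hL
    rw [List.forall_mem_cons] at hx hy
    simp only [List.mem_cons, exists_eq_or_imp] at hone
    rcases hone with hi | hone
    · have hi0 : t i ≠ 0 := hi ▸ one_ne_zero
      have mem {z : M} (hz : z ∈ V i) : contractAlong F L t z ∈ V i :=
        contractAlong_mem F hz fun j hj ↦ hL.1 j hj hi0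
      calc (F i).extend (contractAlong F L t x) (t i)
          = (F i).center := by rw [hi, (F i).extend_one (mem (hx.1 hi0))]
        _ = (F i).extend (contractAlong F L t y) (t i) := by
          rw [hi, (F i).extend_one (mem (hy.1 hi0))]
    · exact congrArg (fun z ↦ (F i).extend z (t i)) (ih hL.2 hx.2 hy.2 hone)

theorem locallyLipschitz_contractAlong (hV : ∀ i, IsOpen (V i)) {τ : ι → P → I}
    (hτ : ∀ i, LocallyLipschitz (τ i)) {k : P → M} (hk : LocallyLipschitz k)
    (hL : L.Pairwise fun i j ↦ ∀ p ∈ tsupport (τ i), p ∈ tsupport (τ j) → V j ⊆ V i)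
    (hkV : ∀ i ∈ L, ∀ p ∈ tsupport (τ i), k p ∈ V i) :
    LocallyLipschitz fun p ↦ contractAlong F L (τ · p) (k p) := by
  induction L with
  | nil => exact hk
  | cons i L ih =>
    rw [List.pairwise_cons] at hL
    rw [List.forall_mem_cons] at hkV
    refine (F i).locallyLipschitz_extend_comp (hV i) (ih hL.2 hkV.2) (hτ i) fun p hp ↦ ?_
    exact contractAlong_mem F (hkV.1 p hp) fun j hj hjp ↦ hL.1 j hj p hp (subset_tsupport _ hjp)

end ContractAlong

section Collapse

variable {X : Type*} [PseudoEMetricSpace X] {V : ι → Set M} (F : ∀ i, LocLipContraction (V i))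
  {L : List ι} {τ : ι → X → I}

theorem exists_locallyLipschitz_eq_contractAlong [Finite ι] (hV : ∀ i, IsOpen (V i))
    (hτ : ∀ i, LocallyLipschitz (τ i))
    (hL : L.Pairwise fun i j ↦ ∀ θ ∈ tsupport (τ i), θ ∈ tsupport (τ j) → V j ⊆ V i)
    (hone : ∀ θ, ∃ i ∈ L, τ i θ = 1) (hne : ∀ θ, ∃ y, ∀ i, θ ∈ tsupport (τ i) → y ∈ V i) :
    ∃ g : X → M, LocallyLipschitz g ∧
      ∀ θ y, (∀ i, θ ∈ tsupport (τ i) → y ∈ V i) → contractAlong F L (τ · θ) y = g θ := by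
  choose b hb using hne
  have indep {θ : X} {x y : M} (hx : ∀ i, θ ∈ tsupport (τ i) → x ∈ V i)
      (hy : ∀ i, θ ∈ tsupport (τ i) → y ∈ V i) :
      contractAlong F L (τ · θ) x = contractAlong F L (τ · θ) y := by
    refine contractAlong_eq_of_exists_eq_one F (hL.imp fun h hi hj ↦ ?_) (fun i _ hi ↦ ?_)
      (fun i _ hi ↦ ?_) (hone θ)
    · exact h θ (subset_tsupport _ hi) (subset_tsupport _ hj)
    · exact hx i (subset_tsupport _ hi)
    · exact hy i (subset_tsupport _ hi)
  refine ⟨fun θ ↦ contractAlong F L (τ · θ) (b θ), locallyLipschitz_of_isOpen_cover fun θ₀ ↦ ?_,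
    fun θ y hy ↦ indep hy (hb θ)⟩
  -- Near `θ₀` no further time becomes positive, so the base point `b θ₀` may be kept fixed there.
  let O : Set X := {θ | ∀ i, θ ∈ tsupport (τ i) → θ₀ ∈ tsupport (τ i)}
  have hO : IsOpen O := by
    simp only [O, ofPred_forall]
    refine isOpen_iInter_of_finite fun i ↦ ?_
    by_cases hi : θ₀ ∈ tsupport (τ i)
    · simp [hi]
    · simp only [hi, imp_false]
      exact (isClosed_tsupport (τ i)).isOpen_compl
  have htsupp (i : ι) : tsupport (fun θ : O ↦ τ i θ) ⊆ (↑) ⁻¹' tsupport (τ i) :=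
    tsupport_comp_subset_preimage (τ i) continuous_subtype_val
  refine ⟨O, hO, fun _ ↦ id, ?_⟩
  have hbase : (fun θ : O ↦ contractAlong F L (τ · θ) (b θ)) =
      fun θ : O ↦ contractAlong F L (τ · θ) (b θ₀) :=
    funext fun θ ↦ indep (hb θ) fun i hi ↦ hb θ₀ i (θ.2 i hi)
  rw [hbase]
  refine locallyLipschitz_contractAlong F hV
    (fun i ↦ (hτ i).comp (LipschitzWith.subtype_val O).locallyLipschitz) (.const (b θ₀))
    (hL.imp fun h θ hi hj ↦ h θ.1 (htsupp _ hi) (htsupp _ hj)) fun i _ θ hi ↦ ?_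
  exact hb θ₀ i (θ.2 i (htsupp i hi))

end Collapse

end Contraction

theorem lipHomotopic_contractAlong_id {M X ι : Type*} [MetricSpace M] [CompactSpace M]
    [PseudoEMetricSpace X] {V : ι → Set M} (F : ∀ i, LocLipContraction (V i)) {L : List ι}
    {τ : ι → X → I} (hV : ∀ i, IsOpen (V i)) (hτ : ∀ i, LocallyLipschitz (τ i))
    (hL : L.Pairwise fun i j ↦ ∀ θ ∈ tsupport (τ i), θ ∈ tsupport (τ j) → V j ⊆ V i)
    {f : M → X} (hf : LocallyLipschitz f) (hfV : ∀ x i, f x ∈ tsupport (τ i) → x ∈ V i) :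
    LipHomotopic (fun x ↦ contractAlong F L (τ · (f x)) x) id := by
  let T (i : ι) (p : M × I) : I := unitInterval.symm p.2 * τ i (f p.1)
  have hfst : LocallyLipschitz (Prod.fst : M × I → M) := LipschitzWith.prod_fst.locallyLipschitz
  have hT (i : ι) : LocallyLipschitz (T i) := by
    have hmul : ContDiff ℝ 1 fun r : ℝ × ℝ ↦ (1 - r.1) * r.2 := by fun_prop
    have hval := (LipschitzWith.subtype_val (Icc (0 : ℝ) 1)).locallyLipschitz
    exact hmul.locallyLipschitz.comp ((hval.comp LipschitzWith.prod_snd.locallyLipschitz).prodMk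
      (hval.comp ((hτ i).comp (hf.comp hfst))))
  have htsupp (i : ι) : tsupport (T i) ⊆ (fun p ↦ f p.1) ⁻¹' tsupport (τ i) :=
    tsupport_mul_subset_right.trans
      (tsupport_comp_subset_preimage (τ i) (hf.continuous.comp continuous_fst))
  have hH := locallyLipschitz_contractAlong F hV hT hfst
    (hL.imp fun h p hi hj ↦ h (f p.1) (htsupp _ hi) (htsupp _ hj))
    fun i _ p hi ↦ hfV p.1 i (htsupp i hi)
  refine .of_locallyLipschitz hH (fun x ↦ ?_) fun x ↦ ?_
  · simp [T]
  · have hT0 : (T · (x, 1)) = 0 := funext fun i ↦ by simp [T]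
    exact hT0 ▸ contractAlong_zero F x

section BarycentricStar

variable {ι : Type*} {θ : ι → ℝ} {s t : Finset ι}

/-- The open star, in the first barycentric subdivision, of the barycenter of the face `s`, written
in the barycentric coordinates of the original simplex. -/
def barycentricStar (s : Finset ι) : Set (ι → ℝ) :=
  {θ | ∀ j ∈ s, 0 < θ j ∧ ∀ k ∉ s, θ k < θ j}

theorem isOpen_barycentricStar [Finite ι] (s : Finset ι) : IsOpen (barycentricStar s) := by
  simp only [barycentricStar, ofPred_forall, ofPred_and]
  refine isOpen_iInter_of_finite fun j ↦ isOpen_iInter_of_finite fun _ ↦ ?_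
  refine (isOpen_lt continuous_const (continuous_apply j)).inter ?_
  exact isOpen_iInter_of_finite fun k ↦ isOpen_iInter_of_finite fun _ ↦
    isOpen_lt (continuous_apply k) (continuous_apply j)

theorem subset_of_mem_barycentricStar (hs : θ ∈ barycentricStar s) (ht : θ ∈ barycentricStar t)
    (hcard : s.card ≤ t.card) : s ⊆ t := by
  by_contra hst
  obtain ⟨j, hjs, hjt⟩ := Finset.not_subset.1 hst
  have hts : t ⊆ s := fun k hkt ↦ by
    by_contra hks
    exact lt_asymm ((hs j hjs).2 k hks) ((ht k hkt).2 j hjt)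
  exact hst (Finset.eq_of_subset_of_card_le hts hcard).ge

theorem exists_forall_mem_barycentricStar_mem [Finite ι] [Nonempty ι] (θ : ι → ℝ) :
    ∃ j, ∀ s : Finset ι, s.Nonempty → θ ∈ barycentricStar s → j ∈ s := by
  obtain ⟨j, hj⟩ := Finite.exists_max θ
  refine ⟨j, fun s ⟨k, hk⟩ hs ↦ ?_⟩
  by_contra hjs
  exact ((hs k hk).2 j hjs).not_ge (hj k)

theorem mem_barycentricStar_support [Fintype ι] (hθ : 0 ≤ θ) :
    θ ∈ barycentricStar {j | θ j ≠ 0} := by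
  intro j hj
  have hpos : 0 < θ j := (hθ j).lt_of_ne' (Finset.mem_filter.1 hj).2
  exact ⟨hpos, fun k hk ↦ by simp_all⟩

end BarycentricStar

theorem exists_list_pairwise_le {ι α : Type*} [Finite ι] [LinearOrder α] (c : ι → α) :
    ∃ L : List ι, (∀ i, i ∈ L) ∧ L.Pairwise fun i j ↦ c i ≤ c j := by
  have := Fintype.ofFinite ι
  refine ⟨Finset.univ.toList.mergeSort fun i j ↦ c i ≤ c j, by simp, ?_⟩
  simpa using List.pairwise_mergeSort (le := fun i j ↦ decide (c i ≤ c j))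
    (by simpa using fun _ _ _ ↦ le_trans) (by simp [le_total]) (Finset.univ : Finset ι).toList

/-- The simplices of the nerve of `U`, as finite sets of vertices. -/
abbrev NerveSimplex {M ι : Type*} (U : ι → Set M) :=
  {s : Finset ι // s.Nonempty ∧ (⋂ j ∈ s, U j).Nonempty}

section Nerve

variable {M : Type*} [MetricSpace M] {N : ℕ} {U : Fin N → Set M}

theorem mem_nerveSet_iff {θ : Fin N → ℝ} :
    θ ∈ NerveSet U ↔ θ ∈ stdSimplex ℝ (Fin N) ∧ ∃ y, ∀ j, θ j ≠ 0 → y ∈ U j := by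
  simp only [NerveSet, ← and_assoc, mem_ofPred_eq, Set.Nonempty, mem_iInter]
  refine and_congr_left fun _ ↦ ⟨fun h ↦ ⟨fun j ↦ (h.1 j).1, h.2⟩, fun h ↦ ⟨fun j ↦ ?_, h.2⟩⟩
  exact mem_Icc_of_mem_stdSimplex h j

theorem isCompact_nerveSet (U : Fin N → Set M) : IsCompact (NerveSet U) := by
  let face (s : Finset (Fin N)) : Set (Fin N → ℝ) :=
    stdSimplex ℝ (Fin N) ∩ {θ | ∀ j ∉ s, θ j = 0}
  have hface (s : Finset (Fin N)) : IsCompact (face s) := by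
    refine (isCompact_stdSimplex ℝ _).inter_right ?_
    simp only [ofPred_forall]
    exact isClosed_iInter fun j ↦ isClosed_iInter fun _ ↦
      isClosed_eq (continuous_apply j) continuous_const
  have hunion : NerveSet U = ⋃ s ∈ {s : Finset (Fin N) | (⋂ j ∈ s, U j).Nonempty}, face s := by
    ext θ
    simp only [mem_nerveSet_iff, face, mem_iUnion₂, mem_inter_iff]
    constructor
    · rintro ⟨hθ, y, hy⟩
      exact ⟨({j | θ j ≠ 0} : Finset _), ⟨y, by simpa using hy⟩, hθ, by simp⟩
    · rintro ⟨s, ⟨y, hy⟩, hθ, hs⟩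
      exact ⟨hθ, y, fun j hj ↦ mem_iInter₂.1 hy j (not_imp_comm.1 (hs j) hj)⟩
  exact hunion ▸ (toFinite _).isCompact_biUnion fun s _ ↦ hface s

instance : CompactSpace (NerveSet U) := isCompact_iff_compactSpace.1 (isCompact_nerveSet U)

theorem lipHomotopic_of_contiguous {X : Type*} [MetricSpace X] [CompactSpace X]
    {a b : X → NerveSet U} (ha : LocallyLipschitz a) (hb : LocallyLipschitz b)
    (hab : ∀ x, ∃ y, ∀ j, (a x : Fin N → ℝ) j ≠ 0 ∨ (b x : Fin N → ℝ) j ≠ 0 → y ∈ U j) :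
    LipHomotopic a b := by
  let segment (r : ℝ × (Fin N → ℝ) × (Fin N → ℝ)) : Fin N → ℝ := (1 - r.1) • r.2.1 + r.1 • r.2.2
  have hsegment : ContDiff ℝ 1 segment := by fun_prop
  have hmem (p : X × I) : segment (p.2, a p.1, b p.1) ∈ NerveSet U := by
    obtain ⟨y, hy⟩ := hab p.1
    refine mem_nerveSet_iff.2 ⟨convex_stdSimplex ℝ _ (mem_nerveSet_iff.1 (a p.1).2).1
      (mem_nerveSet_iff.1 (b p.1).2).1 (sub_nonneg.2 p.2.2.2) p.2.2.1 (sub_add_cancel _ _), y,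
      fun j hj ↦ hy j ?_⟩
    contrapose! hj
    simp [segment, hj]
  have hval := (LipschitzWith.subtype_val (NerveSet U)).locallyLipschitz
  have hfst : LocallyLipschitz (Prod.fst : X × I → X) := LipschitzWith.prod_fst.locallyLipschitz
  have hsnd : LocallyLipschitz fun p : X × I ↦ (p.2 : ℝ) :=
    ((LipschitzWith.subtype_val _).comp LipschitzWith.prod_snd).locallyLipschitz
  have hH : LocallyLipschitz fun p : X × I ↦ (⟨_, hmem p⟩ : NerveSet U) :=
    hsegment.locallyLipschitz.comp
      (hsnd.prodMk ((hval.comp (ha.comp hfst)).prodMk (hval.comp (hb.comp hfst))))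
  exact .of_locallyLipschitz hH (fun x ↦ by simp [segment]) fun x ↦ by simp [segment]

theorem exists_locallyLipschitz_toNerve {X : Type*} [PseudoMetricSpace X] [CompactSpace X]
    {O : Fin N → Set X} (hO : ∀ j, IsOpen (O j)) (hcov : ∀ x, ∃ j, x ∈ O j)
    (hmeet : ∀ x, ∃ y, ∀ j, x ∈ O j → y ∈ U j) :
    ∃ f : X → NerveSet U, LocallyLipschitz f ∧ ∀ x j, (f x : Fin N → ℝ) j ≠ 0 → x ∈ O j := by
  obtain ⟨c, hc, hmem, hsupp⟩ := exists_locallyLipschitz_partitionOfUnity hO hcov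
  have hnerve (x : X) : c x ∈ NerveSet U := mem_nerveSet_iff.2
    ⟨hmem x, (hmeet x).imp fun y hy j hj ↦ hy j (hsupp x j hj)⟩
  exact ⟨fun x ↦ ⟨c x, hnerve x⟩, hc, hsupp⟩

theorem lipHomotopic_comp_id_of_exists_mem (ho : ∀ j, IsOpen (U j)) {f : M → NerveSet U}
    (hf : LocallyLipschitz f) (hfU : ∀ x j, (f x : Fin N → ℝ) j ≠ 0 → x ∈ U j)
    {g : NerveSet U → M} (hg : LocallyLipschitz g)
    (hgU : ∀ θ : NerveSet U, ∃ j, (θ : Fin N → ℝ) j ≠ 0 ∧ g θ ∈ U j) :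
    LipHomotopic (f ∘ g) id := by
  have hO (j : Fin N) : IsOpen {θ : NerveSet U | (θ : Fin N → ℝ) j ≠ 0 ∧ g θ ∈ U j} :=
    (isOpen_ne_fun ((continuous_apply j).comp continuous_subtype_val) continuous_const).inter
      ((ho j).preimage hg.continuous)
  obtain ⟨c, hc, hcO⟩ := exists_locallyLipschitz_toNerve (U := U) hO hgU
    fun θ ↦ ⟨g θ, fun j hj ↦ hj.2⟩
  refine LipHomotopic.trans (g := c)
    (lipHomotopic_of_contiguous (hf.comp hg) hc fun θ ↦ ⟨g θ, fun j hj ↦ ?_⟩)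
    (lipHomotopic_of_contiguous hc .id fun θ ↦ ?_)
  · exact hj.elim (hfU (g θ) j) fun h ↦ (hcO θ j h).2
  · obtain ⟨y, hy⟩ := (mem_nerveSet_iff.1 θ.2).2
    exact ⟨y, fun j hj ↦ hy j (hj.elim (fun h ↦ (hcO θ j h).1) id)⟩

theorem exists_mem_barycentricStar (θ : NerveSet U) :
    ∃ s : NerveSimplex U, (θ : Fin N → ℝ) ∈ barycentricStar s.1 := by
  obtain ⟨⟨hθ, hsum⟩, y, hy⟩ := mem_nerveSet_iff.1 θ.2
  refine ⟨⟨({j | θ.1 j ≠ 0} : Finset _), ?_, y, by simpa using hy⟩, mem_barycentricStar_support hθ⟩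
  obtain ⟨j, -, hj⟩ := Finset.exists_ne_zero_of_sum_ne_zero (hsum ▸ one_ne_zero)
  exact ⟨j, by simpa using hj⟩

theorem exists_barycentricStar_cutoffs (U : Fin N → Set M) :
    ∃ τ : NerveSimplex U → NerveSet U → I, (∀ s, LocallyLipschitz (τ s)) ∧
      (∀ s, ∀ θ ∈ tsupport (τ s), (θ : Fin N → ℝ) ∈ barycentricStar s.1) ∧
        ∀ θ, ∃ s, τ s θ = 1 := by
  obtain ⟨τ, K, hτ, hsupp, hone⟩ := exists_lipschitz_cutoffs
    (fun s : NerveSimplex U ↦ (isOpen_barycentricStar s.1).preimage continuous_subtype_val)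
    (exists_mem_barycentricStar (U := U))
  exact ⟨τ, fun s ↦ (hτ s).locallyLipschitz, fun s θ hθ ↦ hsupp s hθ, hone⟩

theorem exists_locallyLipschitz_fromNerve [CompactSpace M] (ho : ∀ j, IsOpen (U j))
    (F : ∀ s : NerveSimplex U, LocLipContraction (⋂ j ∈ s.1, U j)) :
    ∃ g : NerveSet U → M, LocallyLipschitz g ∧
      (∀ θ : NerveSet U, ∃ j, (θ : Fin N → ℝ) j ≠ 0 ∧ g θ ∈ U j) ∧
      ∀ f : M → NerveSet U, LocallyLipschitz f →
        (∀ x j, (f x : Fin N → ℝ) j ≠ 0 → x ∈ U j) → LipHomotopic (g ∘ f) id := by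
  obtain ⟨τ, hτ, hstar, hone⟩ := exists_barycentricStar_cutoffs U
  obtain ⟨L, hL, hsorted⟩ := exists_list_pairwise_le fun s : NerveSimplex U ↦ s.1.card
  have hopen (s : NerveSimplex U) : IsOpen (⋂ j ∈ s.1, U j) := isOpen_biInter_finset fun j _ ↦ ho j
  have hchain : L.Pairwise fun s t ↦ ∀ θ ∈ tsupport (τ s), θ ∈ tsupport (τ t) →
      ⋂ j ∈ t.1, U j ⊆ ⋂ j ∈ s.1, U j := hsorted.imp fun hst θ hs ht ↦
    biInter_subset_biInter_left (subset_of_mem_barycentricStar (hstar _ θ hs) (hstar _ θ ht) hst)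
  have hmem {y : M} {θ : NerveSet U} (hy : ∀ j, (θ : Fin N → ℝ) j ≠ 0 → y ∈ U j)
      (s : NerveSimplex U) (hs : θ ∈ tsupport (τ s)) : y ∈ ⋂ j ∈ s.1, U j :=
    mem_iInter₂.2 fun j hj ↦ hy j (hstar s θ hs j hj).1.ne'
  obtain ⟨g, hg, hcomp⟩ := exists_locallyLipschitz_eq_contractAlong F hopen hτ hchain
    (fun θ ↦ (hone θ).imp fun s hs ↦ ⟨hL s, hs⟩)
    fun θ ↦ (mem_nerveSet_iff.1 θ.2).2.imp fun y hy ↦ hmem hy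
  refine ⟨g, hg, fun θ ↦ ?_, fun f hf hfU ↦ ?_⟩
  · obtain ⟨y, hy⟩ := (mem_nerveSet_iff.1 θ.2).2
    obtain ⟨s, hs⟩ := hone θ
    have : Nonempty (Fin N) := s.2.1.to_type
    obtain ⟨j, hj⟩ := exists_forall_mem_barycentricStar_mem θ.1
    have hjt (t : NerveSimplex U) (ht : τ t θ ≠ 0) : j ∈ t.1 :=
      hj t.1 t.2.1 (hstar t θ (subset_tsupport _ ht))
    have hs0 : τ s θ ≠ 0 := hs.trans_ne one_ne_zero
    have hθj : θ.1 j ≠ 0 := (hstar s θ (subset_tsupport _ hs0) j (hjt s hs0)).1.ne'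
    refine ⟨j, hθj, hcomp θ y (hmem hy) ▸ contractAlong_mem F (hy j hθj) fun t _ ht ↦ ?_⟩
    exact biInter_subset_of_mem (hjt t ht)
  · have hgf : g ∘ f = fun x ↦ contractAlong F L (τ · (f x)) x :=
      funext fun x ↦ (hcomp (f x) x (hmem (hfU x))).symm
    exact hgf ▸ lipHomotopic_contractAlong_id F hopen hτ hchain hf fun x ↦ hmem (hfU x)

end Nerve

theorem IsLipSDRToPoint.nonempty_locLipContraction {M : Type*} [MetricSpace M] {W : Set M}
    (hW : IsLipSDRToPoint W) : Nonempty (LocLipContraction W) :=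
  let ⟨p, F, _, hF, h0, h1, _⟩ := hW
  ⟨⟨F, p, hF.locallyLipschitz, h0, h1⟩⟩

theorem compact_lipHomotopyEquiv_nerve_general {M : Type*} [MetricSpace M] [CompactSpace M]
    {N : ℕ} (U : Fin N → Set M) (ho : ∀ j, IsOpen (U j)) (hcov : ⋃ j, U j = univ)
    (hcontr : ∀ s : Finset (Fin N), s.Nonempty → (⋂ j ∈ s, U j).Nonempty →
      Nonempty (LocLipContraction (⋂ j ∈ s, U j))) :
    LipHomotopyEquiv M (NerveSet U) := by
  obtain ⟨f, hf, hfU⟩ := exists_locallyLipschitz_toNerve ho (iUnion_eq_univ_iff.1 hcov)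
    fun x ↦ ⟨x, fun _ ↦ id⟩
  obtain ⟨g, hg, hgU, hgf⟩ := exists_locallyLipschitz_fromNerve ho
    fun s ↦ (hcontr s.1 s.2.1 s.2.2).some
  obtain ⟨Kf, hKf⟩ := exists_lipschitzWith_of_locallyLipschitz hf
  obtain ⟨Kg, hKg⟩ := exists_lipschitzWith_of_locallyLipschitz hg
  exact ⟨f, g, Kf, Kg, hKf, hKg, hgf f hf hfU,
    lipHomotopic_comp_id_of_exists_mem ho hf hfU hg hgU⟩

/-- A compact metric space admitting a (finite) good covering is Lipschitz
homotopy equivalent to the geometric realization of the nerve of the covering. -/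
theorem compact_lipHomotopyEquiv_nerve {M : Type*} [MetricSpace M] [CompactSpace M]
    {N : ℕ} (U : Fin N → Set M) (hU : IsGoodCovering U) :
    LipHomotopyEquiv M (NerveSet U) :=
  compact_lipHomotopyEquiv_nerve_general U hU.1 hU.2.1 fun s hs hne ↦
    (hU.2.2.2.2 s hs hne).nonempty_locLipContraction
end

section
/- Let M be a σ-compact metric space admitting a good covering 𝒰 (with countable index set J). Then M is locally Lipschitz homotopy equivalent to the geometric realization |𝒩_𝒰| of the nerve of 𝒰. -/
open Metric Set

/-- Two maps between metric spaces are *locally Lipschitz homotopic* if there is a locally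
Lipschitz map `H : X × [0,1] → Y` with `H(·,0) = f` and `H(·,1) = g`. -/
def LocLipHomotopic {X Y : Type*} [MetricSpace X] [MetricSpace Y] (f g : X → Y) : Prop :=
  ∃ H : X × unitInterval → Y, LocallyLipschitz H ∧
    (∀ x, H (x, 0) = f x) ∧ (∀ x, H (x, 1) = g x)

/-- Two metric spaces are *locally Lipschitz homotopy equivalent* if there are locally
Lipschitz maps `f : X → Y` and `g : Y → X` with `g ∘ f` and `f ∘ g` locally Lipschitz
homotopic to the identities. -/
def LocLipHomotopyEquiv (X Y : Type*) [MetricSpace X] [MetricSpace Y] : Prop :=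
  ∃ (f : X → Y) (g : Y → X), LocallyLipschitz f ∧ LocallyLipschitz g ∧
    LocLipHomotopic (g ∘ f) id ∧ LocLipHomotopic (f ∘ g) id

/-- The geometric realization of the nerve of a covering `U : J → Set M` with countable
index set: the set of finitely supported `θ : J → ℝ` (realized inside `ℓ^∞(J)`, so that
the induced metric is the sup metric) with values in `[0,1]`, total sum `1`, whose support
spans a simplex of the nerve. -/
noncomputable def NerveSetInf {M : Type*} [MetricSpace M] {J : Type*} (U : J → Set M) :
    Set (lp (fun _ : J => ℝ) ⊤) :=
  {θ | (∀ j, θ j ∈ Icc (0:ℝ) 1) ∧ (Function.support fun j => θ j).Finite ∧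
    (∑ᶠ j, θ j) = 1 ∧ (⋂ j ∈ Function.support fun j => θ j, U j).Nonempty}

/-!
A partition of unity gives `f : M → |𝒩|` with `x` in every `U j` for which `j` is a vertex of the
carrier of `f x`. In the other direction, the simplices `σ` across whose boundary `θ` has a positive
gap, that is, `θ` is larger on `σ` than outside by a definite amount, form a chain, and so do the
intersections `⋂ j ∈ σ, U j`. Starting at any point common to all the sets in the carrier of `θ`,
run contractions of these intersections, from the smallest to the largest, for times depending on
the relative size of the gap. Some simplex is run for the full time, which erases the starting
point, so that the end point depends locally Lipschitz continuously on `θ` alone and defines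
`g : |𝒩| → M`.

Slowing down all the contractions deforms `g ∘ f` to the identity. Truncating `θ` to its nearly
maximal coordinates gives `r θ` whose vertices belong to every simplex that is run. Hence `g θ` lies
in all the sets of the carrier of `r θ`, and the segments from `f (g θ)` to `r θ` and from `r θ` to
`θ` stay in the nerve.
-/

open Function Filter
open scoped NNReal ENNReal Topology lp

section LocallyLipschitz

variable {Y X E : Type*} [PseudoEMetricSpace Y] [PseudoEMetricSpace X] [NormedAddCommGroup E]

theorem locallyLipschitz_of_eventuallyEq {f : Y → X}
    (h : ∀ y, ∃ g : Y → X, (∃ K, ∃ V ∈ 𝓝 y, LipschitzOnWith K g V) ∧ f =ᶠ[𝓝 y] g) :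
    LocallyLipschitz f := by
  intro y
  obtain ⟨g, ⟨K, V, hV, hK⟩, hfg⟩ := h y
  refine ⟨K, V ∩ {z | f z = g z}, inter_mem hV hfg, fun a ha b hb => ?_⟩
  rw [ha.2, hb.2]
  exact hK ha.1 hb.1

theorem locallyLipschitz_coe_comp_iff {S : Set X} {f : Y → S} :
    LocallyLipschitz (fun y => (f y : X)) ↔ LocallyLipschitz f :=
  Iff.rfl

theorem locallyLipschitz_smul [NormedSpace ℝ E] {c : Y → ℝ} {f : Y → E}
    (hc : LocallyLipschitz c) (hf : LocallyLipschitz f) : LocallyLipschitz fun y => c y • f y :=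
  (contDiff_smul (𝕜 := ℝ) (n := 1)).locallyLipschitz.comp (hc.prodMk hf)

theorem locallyLipschitz_inv {c : Y → ℝ} (hc : LocallyLipschitz c) (h0 : ∀ y, c y ≠ 0) :
    LocallyLipschitz fun y => (c y)⁻¹ := by
  intro y
  obtain ⟨K, t, ht, hK⟩ := (contDiffAt_inv ℝ (h0 y) (n := 1)).exists_lipschitzOnWith
  obtain ⟨L, s, hs, hL⟩ := hc y
  exact ⟨K * L, s ∩ c ⁻¹' t, inter_mem hs (hc.continuous.continuousAt ht),
    hK.comp (hL.mono inter_subset_left) fun _ hz => hz.2⟩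

theorem locallyLipschitz_finset_sum {ι : Type*} {f : ι → Y → E} (s : Finset ι)
    (hf : ∀ i, LocallyLipschitz (f i)) : LocallyLipschitz fun y => ∑ i ∈ s, f i y := by
  classical
  induction s using Finset.induction_on with
  | empty => simpa only [Finset.sum_empty] using LocallyLipschitz.const (0 : E)
  | insert i s hi ih => simpa only [Finset.sum_insert hi] using (hf i).add ih

theorem locallyLipschitz_finsum {ι : Type*} {f : ι → Y → E} (hf : ∀ i, LocallyLipschitz (f i))
    (hfin : LocallyFinite fun i => support (f i)) : LocallyLipschitz fun y => ∑ᶠ i, f i y :=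
  locallyLipschitz_of_eventuallyEq fun y =>
    let ⟨s, hs⟩ := finsum_eventually_eq_sum hfin y
    ⟨_, locallyLipschitz_finset_sum s hf y, hs⟩

end LocallyLipschitz

section Homotopies

variable {X E : Type*} [MetricSpace X] [NormedAddCommGroup E] {S : Set E}

theorem LocLipHomotopic.trans {f g h : X → S} (hfg : LocLipHomotopic f g)
    (hgh : LocLipHomotopic g h) : LocLipHomotopic f h := by
  obtain ⟨F, hF, hF0, hF1⟩ := hfg
  obtain ⟨G, hG, hG0, hG1⟩ := hgh
  have hg : LocallyLipschitz g := by
    simpa only [comp_def, hF1] using hF.comp (LocallyLipschitz.prodMk_right 1)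
  let clamp (c : ℝ) (t : unitInterval) : unitInterval := projIcc 0 1 zero_le_one (2 * (t : ℝ) - c)
  have hclamp (c : ℝ) : LocallyLipschitz fun q : X × unitInterval => (q.1, clamp c q.2) := by
    have haffine : ContDiff ℝ 1 fun t : ℝ => 2 * t - c := by fun_prop
    exact LipschitzWith.prod_fst.locallyLipschitz.prodMk <|
      (LipschitzWith.projIcc zero_le_one).locallyLipschitz.comp <|
        haffine.locallyLipschitz.comp <|
          ((LipschitzWith.subtype_val _).comp LipschitzWith.prod_snd).locallyLipschitz
  -- One of the first two summands is always `g x`, so every value is a value of `F` or of `G`.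
  let H (q : X × unitInterval) : E := F (q.1, clamp 0 q.2) + G (q.1, clamp 1 q.2) - g q.1
  have hH : LocallyLipschitz H :=
    ((hF.comp (hclamp 0)).add (hG.comp (hclamp 1))).sub
      (hg.comp LipschitzWith.prod_fst.locallyLipschitz)
  have H_left (q : X × unitInterval) (hq : (q.2 : ℝ) ≤ 1 / 2) : H q = F (q.1, clamp 0 q.2) := by
    have h0 : clamp 1 q.2 = 0 := projIcc_of_le_left _ (by linarith)
    simp only [H, h0, hG0, add_sub_cancel_right]
  have H_right (q : X × unitInterval) (hq : 1 / 2 ≤ (q.2 : ℝ)) : H q = G (q.1, clamp 1 q.2) := by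
    have h1 : clamp 0 q.2 = 1 := projIcc_of_right_le _ (by linarith)
    simp only [H, h1, hF1, add_sub_cancel_left]
  have hmem (q : X × unitInterval) : H q ∈ S := by
    rcases le_total (q.2 : ℝ) (1 / 2) with hq | hq
    · exact H_left q hq ▸ Subtype.coe_prop _
    · exact H_right q hq ▸ Subtype.coe_prop _
  refine ⟨fun q => ⟨H q, hmem q⟩, locallyLipschitz_coe_comp_iff.1 hH,
    fun x => Subtype.ext ?_, fun x => Subtype.ext ?_⟩
  · have h0 : clamp 0 0 = 0 := projIcc_of_le_left _ (by norm_num)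
    simpa only [h0, hF0] using H_left (x, 0) (by norm_num)
  · have h1 : clamp 1 1 = 1 := projIcc_of_right_le _ (by norm_num)
    simpa only [h1, hG1] using H_right (x, 1) (by norm_num)

theorem locLipHomotopic_of_segment_subset [NormedSpace ℝ E] {f g : X → S}
    (hf : LocallyLipschitz f) (hg : LocallyLipschitz g)
    (h : ∀ x, segment ℝ (f x : E) (g x) ⊆ S) : LocLipHomotopic f g := by
  have hmem : ∀ q : X × unitInterval, AffineMap.lineMap (f q.1 : E) (g q.1 : E) (q.2 : ℝ) ∈ S :=
    fun q => h q.1 <| by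
      rw [segment_eq_image_lineMap]
      exact mem_image_of_mem _ q.2.2
  have hfst : LocallyLipschitz (Prod.fst : X × unitInterval → X) :=
    LipschitzWith.prod_fst.locallyLipschitz
  have hsnd : LocallyLipschitz fun q : X × unitInterval => (q.2 : ℝ) :=
    LipschitzWith.prod_snd.locallyLipschitz
  have hf' : LocallyLipschitz fun q : X × unitInterval => (f q.1 : E) := hf.comp hfst
  have hg' : LocallyLipschitz fun q : X × unitInterval => (g q.1 : E) := hg.comp hfst
  refine ⟨fun q => ⟨_, hmem q⟩, ?_, fun x => Subtype.ext ?_, fun x => Subtype.ext ?_⟩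
  · refine locallyLipschitz_coe_comp_iff.1 ?_
    simpa only [AffineMap.lineMap_apply_module'] using
      (locallyLipschitz_smul hsnd (hg'.sub hf')).add hf'
  · exact AffineMap.lineMap_apply_zero _ _
  · exact AffineMap.lineMap_apply_one _ _

end Homotopies

section LipschitzContraction

variable {X Y : Type*} [MetricSpace X]

/-- A subset of a metric space is *Lipschitz contractible* if its identity map is homotopic to a
constant map through a globally Lipschitz homotopy; unlike in a Lipschitz strong deformation
retraction, the base point is allowed to move. -/
def IsLipContractible (A : Set X) : Prop :=
  ∃ (p : A) (F : A × unitInterval → A) (K : ℝ≥0),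
    LipschitzWith K F ∧ (∀ x, F (x, 0) = x) ∧ ∀ x, F (x, 1) = p

theorem IsLipSDRToPoint.isLipContractible {A : Set X} (hA : IsLipSDRToPoint A) :
    IsLipContractible A :=
  let ⟨p, F, K, hF, h0, h1, _⟩ := hA
  ⟨p, F, K, hF, h0, h1⟩

/-- A Lipschitz contraction of `A ⊆ X`, encoded by a map on all of `X × ℝ` which is the identity
at time `0` even outside `A`, so that running it for time `0` is harmless everywhere. -/
structure IsLipContraction (A : Set X) (P : X × ℝ → X) : Prop where
  mapsTo : ∀ x ∈ A, ∀ t, P (x, t) ∈ A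
  zero : ∀ x, P (x, 0) = x
  one : ∀ x ∈ A, ∀ y ∈ A, P (x, 1) = P (y, 1)
  lipschitz : ∃ K, LipschitzOnWith K P (A ×ˢ univ)

theorem isLipContraction_empty : IsLipContraction (∅ : Set X) Prod.fst where
  mapsTo _ hx := hx.elim
  zero _ := rfl
  one _ hx := hx.elim
  lipschitz := ⟨1, LipschitzWith.prod_fst.lipschitzOnWith⟩

theorem IsLipContractible.exists_isLipContraction {A : Set X} (hA : IsLipContractible A) :
    ∃ P, IsLipContraction A P := by
  classical
  obtain ⟨p, F, K, hF, h0, h1⟩ := hA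
  let clamp : ℝ → unitInterval := projIcc 0 1 zero_le_one
  let P (q : X × ℝ) : X := if h : q.1 ∈ A then F (⟨q.1, h⟩, clamp q.2) else q.1
  have P_of_mem {x : X} (hx : x ∈ A) (t : ℝ) : P (x, t) = F (⟨x, hx⟩, clamp t) := dif_pos hx
  have clamp_zero : clamp 0 = 0 := projIcc_left _
  have clamp_one : clamp 1 = 1 := projIcc_right _
  refine ⟨P, fun x hx t => ?_, fun x => ?_, fun x hx y hy => ?_, K, ?_⟩
  · exact P_of_mem hx t ▸ Subtype.coe_prop _
  · by_cases hx : x ∈ A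
    · rw [P_of_mem hx, clamp_zero, h0]
    · exact dif_neg hx
  · rw [P_of_mem hx, P_of_mem hy, clamp_one, h1, h1]
  · rintro ⟨x, s⟩ ⟨hx, -⟩ ⟨y, t⟩ ⟨hy, -⟩
    rw [P_of_mem hx, P_of_mem hy]
    refine (hF _ _).trans (mul_le_mul_right (max_le_max le_rfl ?_) _)
    simpa only [ENNReal.coe_one, one_mul] using LipschitzWith.projIcc zero_le_one s t

theorem IsLipContraction.exists_lipschitzOnWith {A : Set X} {P : X × ℝ → X}
    (hP : IsLipContraction A P) : ∃ K, LipschitzOnWith K P {q | q.2 ≠ 0 → q.1 ∈ A} := by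
  obtain ⟨K, hK⟩ := hP.lipschitz
  have dist_of_mem {x y : X} {t : ℝ} (hx : x ∈ A) :
      dist (P (x, t)) y ≤ (K + 1) * dist (x, t) (y, 0) := by
    calc dist (P (x, t)) y ≤ dist (P (x, t)) (P (x, 0)) + dist x y := by
          simpa only [hP.zero] using dist_triangle (P (x, t)) (P (x, 0)) y
      _ ≤ K * dist (x, t) (x, 0) + dist x y :=
          add_le_add_left (hK.dist_le_mul _ ⟨hx, trivial⟩ _ ⟨hx, trivial⟩) _
      _ ≤ K * dist (x, t) (y, 0) + dist (x, t) (y, 0) := by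
          gcongr
          · simp only [Prod.dist_eq, dist_self, le_max_iff, max_le_iff, dist_nonneg, le_refl,
              true_and, or_true]
          · exact le_max_left _ _
      _ = (K + 1) * dist (x, t) (y, 0) := by ring
  refine ⟨K + 1, LipschitzOnWith.of_dist_le_mul ?_⟩
  rintro ⟨x, s⟩ hx ⟨y, t⟩ hy
  have time_eq_zero {z : X} {u : ℝ} (hz : u ≠ 0 → z ∈ A) (hzA : z ∉ A) : u = 0 :=
    not_not.1 (mt hz hzA)
  by_cases hxA : x ∈ A <;> by_cases hyA : y ∈ A
  · refine (hK.dist_le_mul _ ⟨hxA, trivial⟩ _ ⟨hyA, trivial⟩).trans ?_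
    gcongr
    exact le_self_add
  · obtain rfl := time_eq_zero hy hyA
    rw [hP.zero y]
    exact dist_of_mem hxA
  · obtain rfl := time_eq_zero hx hxA
    rw [hP.zero x, dist_comm x, dist_comm (x, (0 : ℝ))]
    exact dist_of_mem hyA
  · obtain rfl := time_eq_zero hx hxA
    obtain rfl := time_eq_zero hy hyA
    rw [hP.zero, hP.zero]
    refine (le_max_left _ _).trans (le_mul_of_one_le_left (le_max_of_le_left dist_nonneg) ?_)
    exact le_add_of_nonneg_left K.2

end LipschitzContraction

section Flow

variable {X Y ι : Type*}

/-- Run the maps `P i : X × ℝ → X` one after the other, for the times `s i`, in the order given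
by the list `l`. -/
def flow (P : ι → X × ℝ → X) (s : ι → ℝ) (l : List ι) (x : X) : X :=
  l.foldl (fun y i => P i (y, s i)) x

/-- A point `x` is *admissible* for the times `s` along the list `l` if it lies in each of the sets
`A i` whose contraction is run for a nonzero time, and these sets increase along `l`. -/
structure IsAdmissible (A : ι → Set X) (s : ι → ℝ) (l : List ι) (x : X) : Prop where
  nested : l.Pairwise fun i k => s i ≠ 0 → s k ≠ 0 → A i ⊆ A k
  mem : ∀ i ∈ l, s i ≠ 0 → x ∈ A i

variable {P : ι → X × ℝ → X} {A : ι → Set X} {s : ι → ℝ} {l : List ι} {x : X}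

theorem flow_cons (i : ι) : flow P s (i :: l) x = flow P s l (P i (x, s i)) :=
  rfl

theorem flow_append (l₁ l₂ : List ι) : flow P s (l₁ ++ l₂) x = flow P s l₂ (flow P s l₁ x) :=
  List.foldl_append

theorem IsAdmissible.restart {l₁ l₂ : List ι} {i : ι} {p : X}
    (h : IsAdmissible A s (l₁ ++ i :: l₂) x) (hi : s i ≠ 0) (hp : p ∈ A i) :
    IsAdmissible A s (i :: l₂) p := by
  obtain ⟨-, nested₂, -⟩ := List.pairwise_append.1 h.nested
  refine ⟨nested₂, List.forall_mem_cons.2 ⟨fun _ => hp, fun k hk hk0 => ?_⟩⟩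
  exact (List.pairwise_cons.1 nested₂).1 k hk hi hk0 hp

variable [MetricSpace X]

theorem flow_eq_self (hP : ∀ i ∈ l, IsLipContraction (A i) (P i)) (hs : ∀ i ∈ l, s i = 0) :
    flow P s l x = x := by
  induction l generalizing x with
  | nil => rfl
  | cons i l ih =>
    rw [List.forall_mem_cons] at hP hs
    rw [flow_cons, hs.1, hP.1.zero, ih hP.2 hs.2]

theorem flow_filter (hP : ∀ i ∈ l, IsLipContraction (A i) (P i)) :
    flow P s (l.filter (s · ≠ 0)) x = flow P s l x := by
  induction l generalizing x with
  | nil => rfl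
  | cons i l ih =>
    rw [List.forall_mem_cons] at hP
    by_cases hi : s i = 0
    · rw [List.filter_cons_of_neg (by simpa only [decide_eq_true_eq, not_not] using hi), ih hP.2,
        flow_cons, hi, hP.1.zero]
    · rw [List.filter_cons_of_pos (by simpa only [decide_eq_true_eq] using hi), flow_cons,
        flow_cons, ih hP.2]

theorem IsAdmissible.tail {i : ι} (h : IsAdmissible A s (i :: l) x)
    (hP : IsLipContraction (A i) (P i)) : IsAdmissible A s l (P i (x, s i)) := by
  obtain ⟨hi, hl⟩ := List.pairwise_cons.1 h.nested
  refine ⟨hl, fun k hk hsk => ?_⟩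
  by_cases hsi : s i = 0
  · rw [hsi, hP.zero]
    exact h.mem k (List.mem_cons_of_mem i hk) hsk
  · exact hi k hk hsi hsk (hP.mapsTo x (h.mem i List.mem_cons_self hsi) _)

theorem flow_mem {B : Set X} (hP : ∀ i ∈ l, IsLipContraction (A i) (P i))
    (h : IsAdmissible A s l x) (hB : ∀ i ∈ l, s i ≠ 0 → A i ⊆ B) (hx : x ∈ B) :
    flow P s l x ∈ B := by
  induction l generalizing x with
  | nil => exact hx
  | cons i l ih =>
    rw [List.forall_mem_cons] at hP hB
    rw [flow_cons]
    refine ih hP.2 (h.tail hP.1) hB.2 ?_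
    by_cases hi : s i = 0
    · rwa [hi, hP.1.zero]
    · exact hB.1 hi (hP.1.mapsTo x (h.mem i List.mem_cons_self hi) _)

/-- A contraction that is run for the full time forgets everything that happened before it. -/
theorem flow_restart {l₁ l₂ : List ι} {i : ι} {p : X}
    (hP : ∀ k ∈ l₁ ++ i :: l₂, IsLipContraction (A k) (P k))
    (h : IsAdmissible A s (l₁ ++ i :: l₂) x) (hi : s i = 1) (hp : p ∈ A i) :
    flow P s (l₁ ++ i :: l₂) x = flow P s (i :: l₂) p := by
  have hi0 : s i ≠ 0 := hi ▸ one_ne_zero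
  obtain ⟨nested₁, -, nested₁₂⟩ := List.pairwise_append.1 h.nested
  have adm₁ : IsAdmissible A s l₁ x := ⟨nested₁, fun k hk => h.mem k (List.mem_append_left _ hk)⟩
  have mem_i : flow P s l₁ x ∈ A i :=
    flow_mem (fun k hk => hP k (List.mem_append_left _ hk)) adm₁
      (fun k hk hk0 => nested₁₂ k hk i List.mem_cons_self hk0 hi0)
      (h.mem i (List.mem_append_right _ List.mem_cons_self) hi0)
  rw [flow_append, flow_cons, flow_cons, hi,
    (hP i (List.mem_append_right _ List.mem_cons_self)).one _ mem_i _ hp]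

theorem exists_lipschitzOnWith_flow [PseudoEMetricSpace Y] {s : Y → ι → ℝ} {x : Y → X} {y₀ : Y}
    (hP : ∀ i ∈ l, IsLipContraction (A i) (P i)) (hs : ∀ i ∈ l, LocallyLipschitz fun y => s y i)
    (hx : ∃ K, ∃ V ∈ 𝓝 y₀, LipschitzOnWith K x V)
    (h : ∀ᶠ y in 𝓝 y₀, IsAdmissible A (s y) l (x y)) :
    ∃ K, ∃ V ∈ 𝓝 y₀, LipschitzOnWith K (fun y => flow P (s y) l (x y)) V := by
  induction l generalizing x with
  | nil => exact hx
  | cons i l ih =>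
    rw [List.forall_mem_cons] at hP hs
    obtain ⟨C, hC⟩ := hP.1.exists_lipschitzOnWith
    obtain ⟨K, V, hV, hK⟩ := hx
    obtain ⟨L, W, hW, hL⟩ := hs.1 y₀
    refine ih hP.2 hs.2 ⟨_, _, inter_mem (inter_mem hV hW) h, hC.comp
      ((hK.mono fun y hy => hy.1.1).prodMk (hL.mono fun y hy => hy.1.2))
      fun y hy => hy.2.mem i List.mem_cons_self⟩ (h.mono fun y hy => hy.tail hP.1)

end Flow

section SimplexList

variable {J : Type*} {s : Finset J → ℝ} {S T : Finset J} {σ : Finset J}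

/-- The nonempty subsets of `S`, listed in order of decreasing cardinality, so that the
intersections indexed by the members of a chain of simplices increase along the list. -/
noncomputable def simplexList (S : Finset J) : List (Finset J) :=
  {σ ∈ S.powerset | σ.Nonempty}.toList.mergeSort fun σ τ => τ.card ≤ σ.card

theorem mem_simplexList : σ ∈ simplexList S ↔ σ ⊆ S ∧ σ.Nonempty := by
  rw [simplexList, List.mem_mergeSort, Finset.mem_toList, Finset.mem_filter, Finset.mem_powerset]

theorem nodup_simplexList : (simplexList S).Nodup :=
  (List.mergeSort_perm _ _).nodup_iff.2 (Finset.nodup_toList _)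

theorem pairwise_card_simplexList :
    (simplexList S).Pairwise fun σ τ => τ.card ≤ σ.card := by
  refine (List.pairwise_mergeSort ?_ ?_ _).imp fun h => of_decide_eq_true h
  · intro σ τ ρ hστ hτρ
    exact decide_eq_true ((of_decide_eq_true hτρ).trans (of_decide_eq_true hστ))
  · intro σ τ
    simpa only [Bool.or_eq_true, decide_eq_true_eq] using le_total τ.card σ.card

/-- A schedule assigns a running time to every simplex; the simplices that are run for a nonzero
time have to be nonempty and totally ordered by inclusion. -/
structure IsSchedule (s : Finset J → ℝ) : Prop where
  nonempty : ∀ σ, s σ ≠ 0 → σ.Nonempty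
  isChain : IsChain (· ⊆ ·) {σ | s σ ≠ 0}

theorem IsSchedule.smul (hs : IsSchedule s) (t : ℝ) : IsSchedule (t • s) where
  nonempty σ h := hs.nonempty σ (right_ne_zero_of_mul h)
  isChain := hs.isChain.mono fun _ h => right_ne_zero_of_mul h

theorem IsSchedule.subset_of_card_le {τ : Finset J} (hs : IsSchedule s) (hσ : s σ ≠ 0)
    (hτ : s τ ≠ 0) (h : τ.card ≤ σ.card) : τ ⊆ σ := by
  rcases hs.isChain.total hσ hτ with hστ | hτσ
  · exact (Finset.eq_of_subset_of_card_le hστ h).ge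
  · exact hτσ

theorem IsSchedule.filter_simplexList_congr (hs : IsSchedule s) (hST : S ⊆ T)
    (hS : ∀ σ, s σ ≠ 0 → σ ⊆ S) :
    (simplexList T).filter (s · ≠ 0) = (simplexList S).filter (s · ≠ 0) := by
  have mem_iff {R : Finset J} (hSR : S ⊆ R) (σ : Finset J) :
      σ ∈ (simplexList R).filter (s · ≠ 0) ↔ s σ ≠ 0 := by
    simp only [List.mem_filter, decide_eq_true_eq, mem_simplexList]
    exact ⟨And.right, fun h => ⟨⟨(hS σ h).trans hSR, hs.nonempty σ h⟩, h⟩⟩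
  refine List.Perm.eq_of_pairwise (fun σ τ hσ hτ hτσ hστ => ?_)
    (pairwise_card_simplexList.filter _) (pairwise_card_simplexList.filter _) <|
    (List.perm_ext_iff_of_nodup (nodup_simplexList.filter _) (nodup_simplexList.filter _)).2
      fun σ => (mem_iff hST σ).trans (mem_iff Subset.rfl σ).symm
  have hσ0 := (mem_iff hST σ).1 hσ
  have hτ0 := (mem_iff Subset.rfl τ).1 hτ
  exact (hs.subset_of_card_le hτ0 hσ0 hστ).antisymm (hs.subset_of_card_le hσ0 hτ0 hτσ)

variable {M : Type*} {U : J → Set M}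

/-- A choice of a Lipschitz contraction of `⋂ j ∈ σ, U j` for every nonempty finite set `σ` of
indices; nothing is required of `P ∅`. -/
def IsContractionSystem [MetricSpace M] (U : J → Set M) (P : Finset J → M × ℝ → M) : Prop :=
  ∀ σ, σ.Nonempty → IsLipContraction (⋂ j ∈ σ, U j) (P σ)

theorem IsContractionSystem.isLipContraction_of_mem_simplexList [MetricSpace M]
    {P : Finset J → M × ℝ → M} (hP : IsContractionSystem U P) (S : Finset J) :
    ∀ σ ∈ simplexList S, IsLipContraction (⋂ j ∈ σ, U j) (P σ) :=
  fun σ hσ => hP σ (mem_simplexList.1 hσ).2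

theorem IsSchedule.flow_simplexList_congr [MetricSpace M] {P : Finset J → M × ℝ → M}
    (hP : IsContractionSystem U P) (hs : IsSchedule s) (hST : S ⊆ T) (hS : ∀ σ, s σ ≠ 0 → σ ⊆ S)
    (x : M) : flow P s (simplexList T) x = flow P s (simplexList S) x := by
  rw [← flow_filter (hP.isLipContraction_of_mem_simplexList T),
    hs.filter_simplexList_congr hST hS, flow_filter (hP.isLipContraction_of_mem_simplexList S)]

theorem IsSchedule.isAdmissible (hs : IsSchedule s) {x : M}
    (hx : ∀ σ, s σ ≠ 0 → ∀ j ∈ σ, x ∈ U j) :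
    IsAdmissible (fun σ => ⋂ j ∈ σ, U j) s (simplexList S) x where
  nested := pairwise_card_simplexList.imp fun h hσ hτ =>
    biInter_subset_biInter_left (hs.subset_of_card_le hσ hτ h)
  mem σ _ hσ := mem_iInter₂.2 (hx σ hσ)

end SimplexList

section Gap

variable {J Y : Type*} {σ τ : Finset J}

/-- The largest `r ≥ 0` such that `θ ≥ r` on `σ` and `θ` drops by at least `r` outside `σ`. The set
contains all `r ≤ 0`, so that the supremum is `0` when no positive `r` qualifies. -/
noncomputable def gap (σ : Finset J) (θ : J → ℝ) : ℝ :=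
  sSup {r | 0 < r → σ.Nonempty ∧ ∀ j ∈ σ, r ≤ θ j ∧ ∀ k ∉ σ, θ k + r ≤ θ j}

section

variable {θ : J → ℝ}

theorem bddAbove_gap (σ : Finset J) (θ : J → ℝ) :
    BddAbove {r | 0 < r → σ.Nonempty ∧ ∀ j ∈ σ, r ≤ θ j ∧ ∀ k ∉ σ, θ k + r ≤ θ j} := by
  rcases σ.eq_empty_or_nonempty with rfl | ⟨j, hj⟩
  · exact ⟨0, fun r hr => not_lt.1 fun hr0 => Finset.not_nonempty_empty (hr hr0).1⟩
  · refine ⟨max 0 (θ j), fun r hr => ?_⟩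
    rcases le_or_gt r 0 with hr0 | hr0
    · exact le_max_of_le_left hr0
    · exact le_max_of_le_right ((hr hr0).2 j hj).1

theorem gap_nonneg : 0 ≤ gap σ θ :=
  le_csSup (bddAbove_gap σ θ) fun h => (lt_irrefl _ h).elim

theorem le_gap_iff {r : ℝ} (hr : 0 < r) :
    r ≤ gap σ θ ↔ σ.Nonempty ∧ ∀ j ∈ σ, r ≤ θ j ∧ ∀ k ∉ σ, θ k + r ≤ θ j := by
  refine ⟨fun h => ?_, fun h => le_csSup (bddAbove_gap σ θ) fun _ => h⟩
  have approx {r' : ℝ} (hr' : r' < r) :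
      ∃ b, r' < b ∧ σ.Nonempty ∧ ∀ j ∈ σ, b ≤ θ j ∧ ∀ k ∉ σ, θ k + b ≤ θ j := by
    obtain ⟨b, hb, hr'b⟩ :=
      (lt_csSup_iff (bddAbove_gap σ θ) ⟨0, fun h0 => (lt_irrefl _ h0).elim⟩).1
        ((max_lt hr' hr).trans_le h)
    exact ⟨b, (le_max_left _ _).trans_lt hr'b, hb ((le_max_right _ _).trans_lt hr'b)⟩
  refine ⟨(approx hr).choose_spec.2.1, fun j hj =>
    ⟨le_of_forall_lt fun r' hr' => ?_, fun k hk => ?_⟩⟩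
  · obtain ⟨b, hr'b, -, hb⟩ := approx hr'
    exact hr'b.trans_le (hb j hj).1
  · rw [← le_sub_iff_add_le']
    refine le_of_forall_lt fun r' hr' => ?_
    obtain ⟨b, hr'b, -, hb⟩ := approx hr'
    exact hr'b.trans_le (le_sub_iff_add_le'.2 ((hb j hj).2 k hk))

theorem gap_spec (h : 0 < gap σ θ) :
    σ.Nonempty ∧ ∀ j ∈ σ, gap σ θ ≤ θ j ∧ ∀ k ∉ σ, θ k + gap σ θ ≤ θ j :=
  (le_gap_iff h).1 le_rfl

theorem subset_or_subset_of_gap_pos (hσ : 0 < gap σ θ) (hτ : 0 < gap τ θ) : σ ⊆ τ ∨ τ ⊆ σ := by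
  by_contra! h
  obtain ⟨j, hjσ, hjτ⟩ := Finset.not_subset.1 h.1
  obtain ⟨k, hkτ, hkσ⟩ := Finset.not_subset.1 h.2
  linarith [((gap_spec hσ).2 j hjσ).2 k hkσ, ((gap_spec hτ).2 k hkτ).2 j hjτ]

theorem gap_toFinset_support_pos (h0 : ∀ j, 0 ≤ θ j) (hfin : (support θ).Finite)
    (hne : (support θ).Nonempty) : 0 < gap hfin.toFinset θ := by
  obtain ⟨i, hi, hmin⟩ := hfin.toFinset.exists_min_image θ (hfin.toFinset_nonempty.2 hne)
  have hpos : 0 < θ i := (h0 i).lt_of_ne' (hfin.mem_toFinset.1 hi)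
  refine hpos.trans_le <| (le_gap_iff hpos).2 ⟨⟨i, hi⟩, fun j hj => ⟨hmin j hj, fun k hk => ?_⟩⟩
  rw [notMem_support.1 (mt hfin.mem_toFinset.2 hk), zero_add]
  exact hmin j hj

end

theorem gap_le_norm (σ : Finset J) (θ : ℓ^∞(J, ℝ)) : gap σ θ ≤ ‖θ‖ := by
  rcases gap_nonneg.eq_or_lt with h | h
  · exact h ▸ norm_nonneg θ
  · obtain ⟨⟨j, hj⟩, hgap⟩ := gap_spec h
    calc gap σ θ ≤ θ j := (hgap j hj).1
      _ ≤ ‖θ j‖ := le_abs_self _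
      _ ≤ ‖θ‖ := lp.norm_apply_le_norm ENNReal.top_ne_zero θ j

theorem lipschitzWith_gap (σ : Finset J) : LipschitzWith 2 fun θ : ℓ^∞(J, ℝ) => gap σ θ := by
  refine LipschitzWith.of_le_add_mul 2 fun θ θ' => ?_
  rw [NNReal.coe_ofNat, ← sub_le_iff_le_add]
  rcases le_or_gt (gap σ θ - 2 * dist θ θ') 0 with h | h
  · exact h.trans gap_nonneg
  have close (j : J) : |θ j - θ' j| ≤ dist θ θ' :=
    dist_eq_norm θ θ' ▸ lp.norm_apply_le_norm ENNReal.top_ne_zero (θ - θ') j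
  obtain ⟨hne, hgap⟩ := gap_spec (θ := θ) (by linarith [dist_nonneg (x := θ) (y := θ')])
  refine (le_gap_iff h).2 ⟨hne, fun j hj => ⟨?_, fun k hk => ?_⟩⟩
  · linarith [(hgap j hj).1, (abs_le.1 (close j)).2, dist_nonneg (x := θ) (y := θ')]
  · linarith [(hgap j hj).2 k hk, (abs_le.1 (close j)).2, (abs_le.1 (close k)).1]

theorem exists_norm_sub_lt {θ : ℓ^∞(J, ℝ)} [Nonempty J] (h0 : ∀ j, 0 ≤ θ j) {ε : ℝ} (hε : 0 < ε) :
    ∃ j, ‖θ‖ - ε < θ j := by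
  have hsup : ‖θ‖ - ε < ⨆ j, ‖θ j‖ := lp.norm_eq_ciSup θ ▸ sub_lt_self _ hε
  obtain ⟨j, hj⟩ := exists_lt_of_lt_ciSup hsup
  exact ⟨j, by rwa [Real.norm_of_nonneg (h0 j)] at hj⟩

/-- The largest gap of `θ`, over all simplices. -/
noncomputable def maxGap (θ : ℓ^∞(J, ℝ)) : ℝ :=
  ⨆ σ : Finset J, gap σ θ

theorem gap_le_maxGap (σ : Finset J) (θ : ℓ^∞(J, ℝ)) : gap σ θ ≤ maxGap θ :=
  le_ciSup (f := fun σ : Finset J => gap σ θ) ⟨‖θ‖, forall_mem_range.2 (gap_le_norm · θ)⟩ σ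

theorem maxGap_nonneg (θ : ℓ^∞(J, ℝ)) : 0 ≤ maxGap θ :=
  gap_nonneg.trans (gap_le_maxGap ∅ θ)

theorem lipschitzWith_maxGap : LipschitzWith 2 (maxGap : ℓ^∞(J, ℝ) → ℝ) :=
  LipschitzWith.of_le_add_mul 2 fun θ η => ciSup_le fun σ =>
    ((lipschitzWith_gap σ).le_add_mul θ η).trans (add_le_add_left (gap_le_maxGap σ η) _)

/-- Simplices whose gap is at least half of the largest one are run for the full time `1`, those
whose gap is at most a quarter of it are not run. -/
noncomputable def schedule (θ : ℓ^∞(J, ℝ)) (σ : Finset J) : ℝ :=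
  max 0 (min 1 (4 * ((maxGap θ)⁻¹ * gap σ θ) - 1))

variable {θ : ℓ^∞(J, ℝ)}

theorem maxGap_lt_of_schedule_ne_zero (h : schedule θ σ ≠ 0) : maxGap θ < 4 * gap σ θ := by
  have hpos : 0 < 4 * ((maxGap θ)⁻¹ * gap σ θ) - 1 := by
    by_contra! hle
    exact h (max_eq_left ((min_le_right _ _).trans hle))
  have hlt : 1 < 4 * gap σ θ / maxGap θ := by
    rw [div_eq_inv_mul]
    linarith
  rcases one_lt_div_iff.1 hlt with hdiv | hdiv
  · exact hdiv.2
  · exact absurd hdiv.1 (maxGap_nonneg θ).not_gt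

theorem schedule_eq_one (hθ : 0 < maxGap θ) (h : maxGap θ ≤ 2 * gap σ θ) : schedule θ σ = 1 := by
  have hhalf : 1 / 2 ≤ (maxGap θ)⁻¹ * gap σ θ := by
    rw [← div_eq_inv_mul, div_le_div_iff₀ two_pos hθ]
    linarith
  rw [schedule, min_eq_left (by linarith), max_eq_right zero_le_one]

theorem gap_pos_of_schedule_ne_zero (h : schedule θ σ ≠ 0) : 0 < gap σ θ := by
  linarith [maxGap_lt_of_schedule_ne_zero h, maxGap_nonneg θ]

theorem isSchedule_schedule (θ : ℓ^∞(J, ℝ)) : IsSchedule (schedule θ) where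
  nonempty _ h := (gap_spec (gap_pos_of_schedule_ne_zero h)).1
  isChain _ hσ _ hτ _ :=
    subset_or_subset_of_gap_pos (gap_pos_of_schedule_ne_zero hσ) (gap_pos_of_schedule_ne_zero hτ)

theorem exists_eventually_schedule_eq_one (hθ : 0 < maxGap θ) :
    ∃ σ, ∀ᶠ θ' in 𝓝 θ, schedule θ' σ = 1 := by
  obtain ⟨σ, hσ⟩ := exists_lt_of_lt_ciSup (half_lt_self hθ)
  refine ⟨σ, ?_⟩
  have pos_nhds : ∀ᶠ θ' in 𝓝 θ, 0 < maxGap θ' :=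
    lipschitzWith_maxGap.continuous.continuousAt.eventually (lt_mem_nhds hθ)
  have half_nhds : ∀ᶠ θ' in 𝓝 θ, maxGap θ' / 2 < gap σ θ' :=
    (lipschitzWith_maxGap.continuous.div_const 2).continuousAt.eventually_lt
      (lipschitzWith_gap σ).continuous.continuousAt hσ
  filter_upwards [pos_nhds, half_nhds] with θ' hθ' hσ'
  exact schedule_eq_one hθ' (by linarith)

theorem mem_of_schedule_ne_zero {j : J} (hσ : schedule θ σ ≠ 0)
    (hj : ‖θ‖ - 4⁻¹ * maxGap θ < θ j) : j ∈ σ := by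
  by_contra hjσ
  obtain ⟨⟨k, hk⟩, hgap⟩ := gap_spec (gap_pos_of_schedule_ne_zero hσ)
  have hθk : θ k ≤ ‖θ‖ := (le_abs_self _).trans (lp.norm_apply_le_norm ENNReal.top_ne_zero θ k)
  linarith [(hgap k hk).2 j hjσ, maxGap_lt_of_schedule_ne_zero hσ]

theorem locallyLipschitz_schedule [PseudoEMetricSpace Y] {Θ : Y → ℓ^∞(J, ℝ)}
    (hΘ : LocallyLipschitz Θ) (hpos : ∀ y, 0 < maxGap (Θ y)) (σ : Finset J) :
    LocallyLipschitz fun y => schedule (Θ y) σ := by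
  have hratio : LocallyLipschitz fun y => (maxGap (Θ y))⁻¹ * gap σ (Θ y) :=
    locallyLipschitz_smul
      (locallyLipschitz_inv (lipschitzWith_maxGap.locallyLipschitz.comp hΘ) fun y => (hpos y).ne')
      ((lipschitzWith_gap σ).locallyLipschitz.comp hΘ)
  have haffine : ContDiff ℝ 1 fun u : ℝ => 4 * u - 1 := by fun_prop
  exact ((haffine.locallyLipschitz.comp hratio).const_min 1).const_max 0

end Gap

section Nerve

variable {M J : Type*} [MetricSpace M] {U : J → Set M} {j : J}

theorem NerveSetInf.nonneg (θ : NerveSetInf U) (j : J) : 0 ≤ (θ : ℓ^∞(J, ℝ)) j :=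
  (θ.2.1 j).1

theorem NerveSetInf.finite_support (θ : NerveSetInf U) :
    (support fun j => (θ : ℓ^∞(J, ℝ)) j).Finite :=
  θ.2.2.1

theorem NerveSetInf.finsum_eq_one (θ : NerveSetInf U) : ∑ᶠ j, (θ : ℓ^∞(J, ℝ)) j = 1 :=
  θ.2.2.2.1

/-- The vertices on which `θ` is positive. -/
noncomputable def carrier (θ : NerveSetInf U) : Finset J :=
  (NerveSetInf.finite_support θ).toFinset

theorem mem_carrier {θ : NerveSetInf U} : j ∈ carrier θ ↔ (θ : ℓ^∞(J, ℝ)) j ≠ 0 :=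
  (NerveSetInf.finite_support θ).mem_toFinset

/-- The points of `M` lying in all the sets of the covering that are vertices of the carrier. -/
def carrierSet (θ : NerveSetInf U) : Set M :=
  ⋂ j ∈ carrier θ, U j

theorem carrierSet_nonempty (θ : NerveSetInf U) : (carrierSet θ).Nonempty :=
  θ.2.2.2.2.imp fun _ hx => mem_iInter₂.2 fun j hj => mem_iInter₂.1 hx j (mem_carrier.1 hj)

theorem carrier_nonempty (θ : NerveSetInf U) : (carrier θ).Nonempty := by
  obtain ⟨j, hj⟩ : ∃ j, (θ : ℓ^∞(J, ℝ)) j ≠ 0 := by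
    by_contra! h
    simpa only [h, finsum_zero, zero_ne_one] using NerveSetInf.finsum_eq_one θ
  exact ⟨j, mem_carrier.2 hj⟩

theorem mem_nerveSetInf_of_finsum_eq_one {θ : ℓ^∞(J, ℝ)} {x : M} (h0 : ∀ j, 0 ≤ θ j)
    (hfin : (support fun j => θ j).Finite) (hsum : ∑ᶠ j, θ j = 1) (hx : ∀ j, θ j ≠ 0 → x ∈ U j) :
    θ ∈ NerveSetInf U :=
  ⟨fun j => ⟨h0 j, hsum ▸ single_le_finsum j hfin h0⟩, hfin, hsum, x, mem_iInter₂.2 hx⟩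

theorem segment_subset_nerveSetInf {θ θ' : NerveSetInf U} {x : M} (hx : x ∈ carrierSet θ)
    (hx' : x ∈ carrierSet θ') : segment ℝ (θ : ℓ^∞(J, ℝ)) θ' ⊆ NerveSetInf U := by
  rintro _ ⟨a, b, ha, hb, hab, rfl⟩
  have hfin : (support fun j => a • (θ : ℓ^∞(J, ℝ)) j).Finite :=
    (NerveSetInf.finite_support θ).subset (support_const_smul_subset a _)
  have hfin' : (support fun j => b • (θ' : ℓ^∞(J, ℝ)) j).Finite :=
    (NerveSetInf.finite_support θ').subset (support_const_smul_subset b _)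
  refine mem_nerveSetInf_of_finsum_eq_one (x := x)
    (fun j => add_nonneg (mul_nonneg ha (NerveSetInf.nonneg θ j))
      (mul_nonneg hb (NerveSetInf.nonneg θ' j)))
    ((hfin.union hfin').subset (support_add _ _)) ?_ fun j hj => ?_
  · calc ∑ᶠ j, (a • (θ : ℓ^∞(J, ℝ)) j + b • (θ' : ℓ^∞(J, ℝ)) j)
        = a • ∑ᶠ j, (θ : ℓ^∞(J, ℝ)) j + b • ∑ᶠ j, (θ' : ℓ^∞(J, ℝ)) j := by
          rw [finsum_add_distrib hfin hfin', smul_finsum, smul_finsum]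
      _ = 1 := by simp only [NerveSetInf.finsum_eq_one, smul_eq_mul, mul_one, hab]
  · rcases support_add _ _ hj with h | h
    · exact mem_iInter₂.1 hx j (mem_carrier.2 (support_const_smul_subset a _ h))
    · exact mem_iInter₂.1 hx' j (mem_carrier.2 (support_const_smul_subset b _ h))

theorem maxGap_pos (θ : NerveSetInf U) : 0 < maxGap (θ : ℓ^∞(J, ℝ)) :=
  (gap_toFinset_support_pos (NerveSetInf.nonneg θ) (NerveSetInf.finite_support θ) <|
    (carrier_nonempty θ).imp fun _ => mem_carrier.1).trans_le (gap_le_maxGap _ _)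

theorem subset_carrier_of_schedule_ne_zero {θ : NerveSetInf U} {σ : Finset J}
    (h : schedule (θ : ℓ^∞(J, ℝ)) σ ≠ 0) : σ ⊆ carrier θ := fun j hj => by
  have hpos := gap_pos_of_schedule_ne_zero h
  exact mem_carrier.2 (ne_of_gt (hpos.trans_le ((gap_spec hpos).2 j hj).1))

/-- Every point of the nerve has a neighborhood on which all but finitely many of the barycentric
coordinates vanish. -/
def NerveIsLocallyFinite (U : J → Set M) : Prop :=
  LocallyFinite fun j => support fun θ : NerveSetInf U => (θ : ℓ^∞(J, ℝ)) j

theorem nerveIsLocallyFinite_of_finite_nonempty_inter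
    (hstar : ∀ j, {k | (U j ∩ U k).Nonempty}.Finite) : NerveIsLocallyFinite U := by
  intro θ
  obtain ⟨j, hj⟩ := carrier_nonempty θ
  have hcont : Continuous fun θ' : NerveSetInf U => (θ' : ℓ^∞(J, ℝ)) j :=
    (lp.lipschitzWith_one_eval ⊤ j).continuous.comp continuous_subtype_val
  refine ⟨_, hcont.continuousAt.eventually_ne (mem_carrier.1 hj),
    (hstar j).subset fun k ⟨θ', hk, hj⟩ => ?_⟩
  obtain ⟨x, hx⟩ := carrierSet_nonempty θ'
  exact ⟨x, mem_iInter₂.1 hx j (mem_carrier.2 hj), mem_iInter₂.1 hx k (mem_carrier.2 hk)⟩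

theorem exists_eventually_carrier_subset (hfin : NerveIsLocallyFinite U) (θ : NerveSetInf U) :
    ∃ S, ∀ᶠ θ' in 𝓝 θ, carrier θ' ⊆ S := by
  obtain ⟨S, hS⟩ := hfin.exists_finset_support θ
  exact ⟨S, hS.mono fun θ' h j hj => h (mem_carrier.1 hj)⟩

theorem exists_locallyLipschitz_normalization {Y : Type*} [PseudoMetricSpace Y] {w : J → Y → ℝ}
    {K : ℝ≥0} (hw : ∀ j, LipschitzWith K (w j)) (h0 : ∀ j y, 0 ≤ w j y)
    (hfin : LocallyFinite fun j => support (w j)) (hne : ∀ y, ∃ j, w j y ≠ 0)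
    (hcommon : ∀ y, ∃ x, ∀ j, w j y ≠ 0 → x ∈ U j) :
    ∃ r : Y → NerveSetInf U, LocallyLipschitz r ∧ ∀ y, ∀ j ∈ carrier (r y), w j y ≠ 0 := by
  have hfin_y (y : Y) : (support fun j => w j y).Finite := hfin.point_finite y
  have bounded (y : Y) : Memℓp (fun j => w j y) ∞ := (memℓp_zero (hfin_y y)).of_exponent_ge zero_le
  let W (y : Y) : ℓ^∞(J, ℝ) := ⟨fun j => w j y, bounded y⟩
  let total (y : Y) : ℝ := ∑ᶠ j, w j y
  have total_pos (y : Y) : 0 < total y := finsum_pos (h0 · y)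
    ((hne y).imp fun j hj => (h0 j y).lt_of_ne' hj) (hfin_y y)
  have hW : LocallyLipschitz W := ((LipschitzWith.coordinate K).2 hw).locallyLipschitz
  have htotal : LocallyLipschitz total :=
    locallyLipschitz_finsum (fun j => (hw j).locallyLipschitz) hfin
  have ne_zero {y : Y} {j : J} (h : ((total y)⁻¹ • W y) j ≠ 0) : w j y ≠ 0 :=
    right_ne_zero_of_mul (a := (total y)⁻¹) h
  have hmem (y : Y) : (total y)⁻¹ • W y ∈ NerveSetInf U := by
    obtain ⟨x, hx⟩ := hcommon y
    refine mem_nerveSetInf_of_finsum_eq_one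
      (fun j => mul_nonneg (inv_nonneg.2 (total_pos y).le) (h0 j y))
      ((hfin_y y).subset fun j hj => ne_zero hj) ?_ fun j hj => hx j (ne_zero hj)
    calc ∑ᶠ j, (total y)⁻¹ • w j y = (total y)⁻¹ • total y := (smul_finsum _ _).symm
      _ = 1 := inv_mul_cancel₀ (total_pos y).ne'
  exact ⟨fun y => ⟨_, hmem y⟩, locallyLipschitz_coe_comp_iff.1
    (locallyLipschitz_smul (locallyLipschitz_inv htotal fun y => (total_pos y).ne') hW),
    fun y j hj => ne_zero (mem_carrier.1 hj)⟩

end Nerve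

section NerveMaps

variable {M J : Type*} [MetricSpace M] {U : J → Set M}

theorem exists_locallyLipschitz_map_to_nerve (hopen : ∀ j, IsOpen (U j))
    (hcover : ⋃ j, U j = univ) (hfin : LocallyFinite U) :
    ∃ f : M → NerveSetInf U, LocallyLipschitz f ∧ ∀ x, x ∈ carrierSet (f x) := by
  classical
  -- `infDist x ∅ = 0`, so the sets `U j = univ` need a weight of their own.
  let w (j : J) (x : M) : ℝ := if U j = univ then 1 else infDist x (U j)ᶜ
  have hw (j : J) : LipschitzWith 1 (w j) := by
    by_cases h : U j = univ
    · simpa only [w, if_pos h] using LipschitzWith.const' (1 : ℝ)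
    · simpa only [w, if_neg h] using lipschitz_infDist_pt _
  have w_nonneg (j : J) (x : M) : 0 ≤ w j x := by
    by_cases h : U j = univ
    · simp only [w, if_pos h, zero_le_one]
    · simpa only [w, if_neg h] using infDist_nonneg
  have w_ne_zero_iff (j : J) (x : M) : w j x ≠ 0 ↔ x ∈ U j := by
    by_cases h : U j = univ
    · simp only [w, if_pos h, h, mem_univ, ne_eq, one_ne_zero, not_false_eq_true]
    · simp only [w, if_neg h, ne_eq]
      rw [← (hopen j).isClosed_compl.mem_iff_infDist_zero (nonempty_compl.2 h), notMem_compl_iff]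
  obtain ⟨f, hf, hfw⟩ := exists_locallyLipschitz_normalization (U := U) hw w_nonneg
    (hfin.subset fun j x => (w_ne_zero_iff j x).1)
    (fun x => (mem_iUnion.1 (hcover.ge (mem_univ x))).imp fun j => (w_ne_zero_iff j x).2)
    fun x => ⟨x, fun j => (w_ne_zero_iff j x).1⟩
  exact ⟨f, hf, fun x => mem_iInter₂.2 fun j hj => (w_ne_zero_iff j x).1 (hfw x j hj)⟩

/-- Every vertex surviving in `r θ` lies in all the simplices run by the schedule of `θ`, so that
`r` interpolates between the identity and the image of `θ` after realization. -/
theorem exists_locallyLipschitz_sharpening (hfin : NerveIsLocallyFinite U) :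
    ∃ r : NerveSetInf U → NerveSetInf U, LocallyLipschitz r ∧ ∀ θ, ∀ j ∈ carrier (r θ),
      j ∈ carrier θ ∧ ∀ σ, schedule (θ : ℓ^∞(J, ℝ)) σ ≠ 0 → j ∈ σ := by
  let w (j : J) (θ : NerveSetInf U) : ℝ := max (θ.1 j - (‖θ.1‖ - 4⁻¹ * maxGap θ.1)) 0
  have w_ne_zero {j : J} {θ : NerveSetInf U} (h : w j θ ≠ 0) :
      ‖θ.1‖ - 4⁻¹ * maxGap θ.1 < θ.1 j := by
    by_contra! hle
    exact h (max_eq_right (sub_nonpos.2 hle))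
  have vertex_mem {j : J} {θ : NerveSetInf U} (h : w j θ ≠ 0) :
      j ∈ carrier θ ∧ ∀ σ, schedule (θ : ℓ^∞(J, ℝ)) σ ≠ 0 → j ∈ σ := by
    have mem_of_ne {σ} := mem_of_schedule_ne_zero (σ := σ) (hj := w_ne_zero h)
    obtain ⟨σ, hσ⟩ := exists_eventually_schedule_eq_one (maxGap_pos θ)
    have hσ0 : schedule θ.1 σ ≠ 0 := hσ.self_of_nhds ▸ one_ne_zero
    exact ⟨subset_carrier_of_schedule_ne_zero hσ0 (mem_of_ne hσ0), fun σ => mem_of_ne⟩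
  have hw : ∃ K, ∀ j, LipschitzWith K (w j) :=
    ⟨_, fun j => ((((lp.lipschitzWith_one_eval ⊤ j).sub
      (lipschitzWith_one_norm.sub ((lipschitzWith_smul (4⁻¹ : ℝ)).comp lipschitzWith_maxGap))).comp
        (LipschitzWith.subtype_val _)).max_const 0)⟩
  obtain ⟨K, hK⟩ := hw
  refine (exists_locallyLipschitz_normalization hK (fun j θ => le_max_right _ _)
    (hfin.subset fun j θ hj => mem_carrier.1 (vertex_mem hj).1) (fun θ => ?_) fun θ => ?_).imp
      fun r hr => ⟨hr.1, fun θ j hj => vertex_mem (hr.2 θ j hj)⟩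
  · have : Nonempty J := (carrier_nonempty θ).to_type
    obtain ⟨j, hj⟩ := exists_norm_sub_lt (NerveSetInf.nonneg θ) <|
      mul_pos (inv_pos.2 (four_pos (α := ℝ))) (maxGap_pos θ)
    exact ⟨j, (lt_max_of_lt_left (sub_pos.2 hj)).ne'⟩
  · exact (carrierSet_nonempty θ).imp fun x hx j hj => mem_iInter₂.1 hx j (vertex_mem hj).1

variable {P : Finset J → M × ℝ → M}

/-- Starting at `x`, run the contractions prescribed by the schedule of `θ`, slowed down by the
factor `t`. -/
noncomputable def nerveFlow (P : Finset J → M × ℝ → M) (θ : NerveSetInf U) (t : ℝ) (x : M) : M :=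
  flow P (t • schedule (θ : ℓ^∞(J, ℝ))) (simplexList (carrier θ)) x

theorem isSchedule_smul_schedule (θ : ℓ^∞(J, ℝ)) (t : ℝ) : IsSchedule (t • schedule θ) :=
  (isSchedule_schedule θ).smul t

theorem isAdmissible_of_mem_carrierSet {θ : NerveSetInf U} {x : M} (hx : x ∈ carrierSet θ) (t : ℝ)
    (S : Finset J) :
    IsAdmissible (fun σ => ⋂ j ∈ σ, U j) (t • schedule (θ : ℓ^∞(J, ℝ))) (simplexList S) x :=
  (isSchedule_smul_schedule _ t).isAdmissible fun _ h j hj =>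
    mem_iInter₂.1 hx j (subset_carrier_of_schedule_ne_zero (right_ne_zero_of_mul h) hj)

theorem nerveFlow_zero (hP : IsContractionSystem U P) (θ : NerveSetInf U) (x : M) :
    nerveFlow P θ 0 x = x :=
  flow_eq_self (hP.isLipContraction_of_mem_simplexList _) fun _ _ => zero_mul _

theorem nerveFlow_mem (hP : IsContractionSystem U P) {θ : NerveSetInf U} {x : M}
    (hx : x ∈ carrierSet θ) (t : ℝ) {j : J} (hj : j ∈ carrier θ)
    (hjσ : ∀ σ, schedule (θ : ℓ^∞(J, ℝ)) σ ≠ 0 → j ∈ σ) :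
    nerveFlow P θ t x ∈ U j :=
  flow_mem (hP.isLipContraction_of_mem_simplexList _) (isAdmissible_of_mem_carrierSet hx t _)
    (fun σ _ hσ => biInter_subset_of_mem (hjσ σ (right_ne_zero_of_mul hσ)))
    (mem_iInter₂.1 hx j hj)

theorem nerveFlow_eq_flow (hP : IsContractionSystem U P) {θ : NerveSetInf U} {S : Finset J}
    (hS : carrier θ ⊆ S) (t : ℝ) (x : M) :
    nerveFlow P θ t x = flow P (t • schedule (θ : ℓ^∞(J, ℝ))) (simplexList S) x :=
  ((isSchedule_smul_schedule _ t).flow_simplexList_congr hP hS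
    (fun _ h => subset_carrier_of_schedule_ne_zero (right_ne_zero_of_mul h)) x).symm

theorem locallyLipschitz_nerveFlow {Y : Type*} [PseudoEMetricSpace Y]
    (hP : IsContractionSystem U P) (hfin : NerveIsLocallyFinite U)
    {Θ : Y → NerveSetInf U} {t : Y → ℝ} {x : Y → M} (hΘ : LocallyLipschitz Θ)
    (ht : LocallyLipschitz t) (hx : LocallyLipschitz x) (hmem : ∀ y, x y ∈ carrierSet (Θ y)) :
    LocallyLipschitz fun y => nerveFlow P (Θ y) (t y) (x y) := by
  refine locallyLipschitz_of_eventuallyEq fun y => ?_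
  obtain ⟨S, hS⟩ := exists_eventually_carrier_subset hfin (Θ y)
  refine ⟨_, exists_lipschitzOnWith_flow (hP.isLipContraction_of_mem_simplexList S)
    (fun σ _ => locallyLipschitz_smul ht
      (locallyLipschitz_schedule hΘ (fun y => maxGap_pos (Θ y)) σ)) (hx y)
    (Eventually.of_forall fun y => isAdmissible_of_mem_carrierSet (hmem y) (t y) S),
    (hΘ.continuous.continuousAt.eventually hS).mono fun y hy => nerveFlow_eq_flow hP hy (t y) (x y)⟩

theorem exists_eventually_nerveFlow_one_eq (hP : IsContractionSystem U P)
    (hfin : NerveIsLocallyFinite U) (θ₀ : NerveSetInf U) :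
    ∃ g : NerveSetInf U → M, (∃ K, ∃ V ∈ 𝓝 θ₀, LipschitzOnWith K g V) ∧
      ∀ᶠ θ in 𝓝 θ₀, ∀ x ∈ carrierSet θ, nerveFlow P θ 1 x = g θ := by
  obtain ⟨S, hS⟩ := exists_eventually_carrier_subset hfin θ₀
  obtain ⟨σ, hσ⟩ := exists_eventually_schedule_eq_one (maxGap_pos θ₀)
  have hσ0 : schedule (θ₀ : ℓ^∞(J, ℝ)) σ ≠ 0 := hσ.self_of_nhds ▸ one_ne_zero
  have hσ_nhds : ∀ᶠ θ : NerveSetInf U in 𝓝 θ₀, ((1 : ℝ) • schedule (θ : ℓ^∞(J, ℝ))) σ = 1 := by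
    simpa only [one_smul] using continuous_subtype_val.continuousAt.eventually hσ
  have hσcarrier : σ ⊆ carrier θ₀ := subset_carrier_of_schedule_ne_zero hσ0
  obtain ⟨p, hp⟩ : (⋂ j ∈ σ, U j).Nonempty :=
    (carrierSet_nonempty θ₀).mono (biInter_subset_biInter_left hσcarrier)
  obtain ⟨l₁, l₂, hl⟩ := List.append_of_mem <|
    mem_simplexList.2 ⟨hσcarrier.trans hS.self_of_nhds, (isSchedule_schedule _).nonempty σ hσ0⟩
  have hPl := hl ▸ hP.isLipContraction_of_mem_simplexList S
  have admissible {θ : NerveSetInf U} {x : M} (hx : x ∈ carrierSet θ) :=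
    hl ▸ isAdmissible_of_mem_carrierSet hx 1 S
  refine ⟨fun θ => flow P ((1 : ℝ) • schedule θ.1) (σ :: l₂) p, ?_, ?_⟩
  · refine exists_lipschitzOnWith_flow (fun τ hτ => hPl τ (List.mem_append_right _ hτ))
      (fun τ _ => locallyLipschitz_smul (LocallyLipschitz.const 1)
        (locallyLipschitz_schedule (LipschitzWith.subtype_val _).locallyLipschitz maxGap_pos τ))
      ⟨0, univ, univ_mem, LipschitzWith.const p |>.lipschitzOnWith⟩ (hσ_nhds.mono fun θ hθ => ?_)
    obtain ⟨x, hx⟩ := carrierSet_nonempty θ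
    exact (admissible hx).restart (hθ.trans_ne one_ne_zero) hp
  · filter_upwards [hS, hσ_nhds] with θ hθS hθσ x hx
    rw [nerveFlow_eq_flow hP hθS, hl]
    exact flow_restart hPl (admissible hx) hθσ hp

theorem nerveFlow_one_eq (hP : IsContractionSystem U P) (hfin : NerveIsLocallyFinite U)
    {θ : NerveSetInf U} {x y : M} (hx : x ∈ carrierSet θ) (hy : y ∈ carrierSet θ) :
    nerveFlow P θ 1 x = nerveFlow P θ 1 y := by
  obtain ⟨g, -, hg⟩ := exists_eventually_nerveFlow_one_eq hP hfin θ
  rw [hg.self_of_nhds x hx, hg.self_of_nhds y hy]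

theorem locallyLipschitz_nerveFlow_one (hP : IsContractionSystem U P)
    (hfin : NerveIsLocallyFinite U) {c : NerveSetInf U → M} (hc : ∀ θ, c θ ∈ carrierSet θ) :
    LocallyLipschitz fun θ => nerveFlow P θ 1 (c θ) :=
  locallyLipschitz_of_eventuallyEq fun θ₀ =>
    let ⟨g, hg, hgeq⟩ := exists_eventually_nerveFlow_one_eq hP hfin θ₀
    ⟨g, hg, hgeq.mono fun θ hθ => hθ (c θ) (hc θ)⟩

theorem locLipHomotopic_nerveFlow_one_id (hP : IsContractionSystem U P)
    (hfin : NerveIsLocallyFinite U) {f : M → NerveSetInf U} (hf : LocallyLipschitz f)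
    (hfx : ∀ x, x ∈ carrierSet (f x)) :
    LocLipHomotopic (fun x => nerveFlow P (f x) 1 x) id := by
  refine ⟨fun q => nerveFlow P (f q.1) (1 - q.2) q.1, ?_, fun x => ?_, fun x => ?_⟩
  · have hfst : LocallyLipschitz (Prod.fst : M × unitInterval → M) :=
      LipschitzWith.prod_fst.locallyLipschitz
    have htime : LocallyLipschitz fun q : M × unitInterval => 1 - (q.2 : ℝ) :=
      (LocallyLipschitz.const 1).sub LipschitzWith.prod_snd.locallyLipschitz
    exact locallyLipschitz_nerveFlow hP hfin (hf.comp hfst) htime hfst fun q => hfx q.1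
  · simp only [Icc.coe_zero, sub_zero]
  · simpa only [Icc.coe_one, sub_self, id_eq] using nerveFlow_zero hP (f x) x

end NerveMaps

theorem locallyFinite_of_finite_nonempty_inter {M J : Type*} [TopologicalSpace M] {U : J → Set M}
    (hopen : ∀ j, IsOpen (U j)) (hcover : ⋃ j, U j = univ)
    (hstar : ∀ j, {k | (U j ∩ U k).Nonempty}.Finite) : LocallyFinite U := fun x => by
  obtain ⟨j, hj⟩ := mem_iUnion.1 (hcover.ge (mem_univ x))
  exact ⟨U j, (hopen j).mem_nhds hj, (hstar j).subset fun _ ⟨y, hk, hj⟩ => ⟨y, hj, hk⟩⟩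

theorem exists_isContractionSystem {M J : Type*} [MetricSpace M] {U : J → Set M}
    (hcontr : ∀ σ : Finset J, σ.Nonempty → (⋂ j ∈ σ, U j).Nonempty →
      IsLipContractible (⋂ j ∈ σ, U j)) :
    ∃ P, IsContractionSystem U P := by
  have hex (σ : Finset J) : ∃ P, σ.Nonempty → IsLipContraction (⋂ j ∈ σ, U j) P := by
    rcases (⋂ j ∈ σ, U j).eq_empty_or_nonempty with hempty | hne
    · exact ⟨Prod.fst, fun _ => hempty ▸ isLipContraction_empty⟩
    · by_cases hσ : σ.Nonempty
      · exact (hcontr σ hσ hne).exists_isLipContraction.imp fun P hP _ => hP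
      · exact ⟨Prod.fst, fun h => (hσ h).elim⟩
  choose P hP using hex
  exact ⟨P, hP⟩

theorem IsGoodCovering.finite_nonempty_inter {M J : Type*} [MetricSpace M] {U : J → Set M}
    (hU : IsGoodCovering U) (j : J) : {k | (U j ∩ U k).Nonempty}.Finite :=
  let ⟨_, _, hfin, hcompact, _⟩ := hU
  (hfin.finite_nonempty_inter_compact (hcompact j)).subset fun _ ⟨x, hj, hk⟩ =>
    ⟨x, hk, subset_closure hj⟩

theorem sigmaCompact_locLipHomotopyEquiv_nerve_general {M : Type*} [MetricSpace M] {J : Type*}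
    {U : J → Set M} (hopen : ∀ j, IsOpen (U j)) (hcover : ⋃ j, U j = univ)
    (hstar : ∀ j, {k | (U j ∩ U k).Nonempty}.Finite)
    (hcontr : ∀ σ : Finset J, σ.Nonempty → (⋂ j ∈ σ, U j).Nonempty →
      IsLipContractible (⋂ j ∈ σ, U j)) :
    LocLipHomotopyEquiv M (NerveSetInf U) := by
  have hfin := nerveIsLocallyFinite_of_finite_nonempty_inter hstar
  obtain ⟨P, hP⟩ := exists_isContractionSystem hcontr
  obtain ⟨f, hf, hfx⟩ := exists_locallyLipschitz_map_to_nerve hopen hcover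
    (locallyFinite_of_finite_nonempty_inter hopen hcover hstar)
  obtain ⟨r, hr, hrθ⟩ := exists_locallyLipschitz_sharpening hfin
  choose c hc using carrierSet_nonempty (U := U)
  let realize (θ : NerveSetInf U) : M := nerveFlow P θ 1 (c θ)
  have hrealize : LocallyLipschitz realize := locallyLipschitz_nerveFlow_one hP hfin hc
  have realize_mem (θ : NerveSetInf U) : realize θ ∈ carrierSet (r θ) :=
    mem_iInter₂.2 fun j hj => nerveFlow_mem hP (hc θ) 1 (hrθ θ j hj).1 (hrθ θ j hj).2
  have center_mem (θ : NerveSetInf U) : c θ ∈ carrierSet (r θ) :=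
    biInter_subset_biInter_left (fun j hj => (hrθ θ j hj).1) (hc θ)
  refine ⟨f, realize, hf, hrealize, ?_, ?_⟩
  · have realize_comp : realize ∘ f = fun x => nerveFlow P (f x) 1 x :=
      funext fun x => nerveFlow_one_eq hP hfin (hc (f x)) (hfx x)
    exact realize_comp ▸ locLipHomotopic_nerveFlow_one_id hP hfin hf hfx
  · exact (locLipHomotopic_of_segment_subset (hf.comp hrealize) hr fun θ =>
      segment_subset_nerveSetInf (hfx (realize θ)) (realize_mem θ)).trans <|
      locLipHomotopic_of_segment_subset hr LipschitzWith.id.locallyLipschitz fun θ =>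
        segment_subset_nerveSetInf (center_mem θ) (hc θ)

/-- A σ-compact metric space admitting a good covering (with countable
index set) is locally Lipschitz homotopy equivalent to the geometric realization of the
nerve of the covering. -/
theorem sigmaCompact_locLipHomotopyEquiv_nerve {M : Type*} [MetricSpace M]
    [SigmaCompactSpace M] {J : Type*} [Countable J]
    (U : J → Set M) (hU : IsGoodCovering U) :
    LocLipHomotopyEquiv M (NerveSetInf U) := by
  have ⟨hopen, hcover, _, _, hsdr⟩ := hU
  exact sigmaCompact_locLipHomotopyEquiv_nerve_general hopen hcover hU.finite_nonempty_inter
    fun σ hσ hne => (hsdr σ hσ hne).isLipContractible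
end

section
/- Let X be a σ-compact metric space admitting a good covering, and let Y be a locally Lipschitz contractible metric space. Then the natural map [X,Y]_{loc-Lip} → [X,Y], sending the locally Lipschitz homotopy class of a locally Lipschitz map to its (continuous) homotopy class, is bijective. In particular, every continuous map from X to Y is homotopic to a locally Lipschitz map. -/
open Metric Set

/-- Two maps are (continuously) *homotopic*. -/
def ContHomotopic {X Y : Type*} [TopologicalSpace X] [TopologicalSpace Y]
    (f g : X → Y) : Prop :=
  ∃ H : X × unitInterval → Y, Continuous H ∧
    (∀ x, H (x, 0) = f x) ∧ (∀ x, H (x, 1) = g x)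

/-- A metric space `Y` is *locally Lipschitz contractible* if for every `y ∈ Y` and every
neighborhood `U` of `y` there are a neighborhood `V ⊆ U` of `y` and a Lipschitz homotopy
`H : V × [0,1] → U` contracting `V` to `y` inside `U`, keeping `y` fixed. -/
def LocallyLipschitzContractible (Y : Type*) [MetricSpace Y] : Prop :=
  ∀ y : Y, ∀ U ∈ nhds y, ∃ V ∈ nhds y, V ⊆ U ∧
    ∃ (H : V × unitInterval → Y) (K : NNReal), LipschitzWith K H ∧
      (∀ v, H (v, 0) = (v : Y)) ∧ (∀ v, H (v, 1) = y) ∧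
      (∀ (hy : y ∈ V) (t : unitInterval), H (⟨y, hy⟩, t) = y) ∧
      (∀ v t, H (v, t) ∈ U)

/-!
Call a set `W ⊆ X` deformable if every family of maps `W → Y`, parametrized by a
finite-dimensional normed space `T` and already locally Lipschitz for large parameters, can be
deformed to a locally Lipschitz family without being changed for large parameters. Allowing
parameters is what makes gluing possible: over `W₁ ∩ W₂`, the deformations obtained on `W₁` and on
`W₂` join up to a family with one more real parameter; deforming that family and restricting it to
the graph of a function separating `W₁ \ W₂` from `W₂ \ W₁` gives a deformation over `W₁ ∪ W₂`.

Over an open set that contracts to a point in a Lipschitz way, a family is essentially a map from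
`T` to `Y`, and `T` is covered by finitely many scattered families of small open sets, each mapped
into a ball of `Y` that is Lipschitz contractible. The elements of a good covering are organised by
distance in the nerve into layers that are finite unions and of which only consecutive ones meet.
Taking `T = ℝ` gives injectivity, and taking `T` to be a point gives surjectivity.
-/

open Filter Topology

section LipschitzAt

variable {α β γ : Type*} [PseudoEMetricSpace α] [PseudoEMetricSpace β] [PseudoEMetricSpace γ]

/-- `f` is Lipschitz on a neighborhood of `x`; thus `LocallyLipschitz f` is by definition
`∀ x, LipschitzAt f x`. -/
def LipschitzAt (f : α → β) (x : α) : Prop :=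
  ∃ K, ∃ t ∈ 𝓝 x, LipschitzOnWith K f t

namespace LipschitzAt

lemma continuousAt {f : α → β} {x : α} (h : LipschitzAt f x) : ContinuousAt f x :=
  let ⟨_, _, ht, hf⟩ := h
  hf.continuousOn.continuousAt ht

lemma congr {f g : α → β} {x : α} (h : LipschitzAt f x) (hfg : g =ᶠ[𝓝 x] f) :
    LipschitzAt g x := by
  obtain ⟨K, t, ht, hf⟩ := h
  refine ⟨K, _, inter_mem ht hfg, fun a ha b hb => ?_⟩
  rw [show g a = f a from ha.2, show g b = f b from hb.2]
  exact hf ha.1 hb.1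

lemma comp {g : β → γ} {f : α → β} {x : α} {y : β} (hg : LipschitzAt g y)
    (hf : LipschitzAt f x) (hy : f x = y) : LipschitzAt (fun a => g (f a)) x := by
  subst hy
  have hcont := hf.continuousAt
  obtain ⟨K, t, ht, hg⟩ := hg
  obtain ⟨L, u, hu, hf⟩ := hf
  exact ⟨K * L, u ∩ f ⁻¹' t, inter_mem hu (hcont ht),
    hg.comp (hf.mono inter_subset_left) fun _ ha => ha.2⟩

lemma prodMk {f : α → β} {g : α → γ} {x : α} (hf : LipschitzAt f x) (hg : LipschitzAt g x) :
    LipschitzAt (fun a => (f a, g a)) x := by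
  obtain ⟨K, t, ht, hf⟩ := hf
  obtain ⟨L, u, hu, hg⟩ := hg
  exact ⟨max K L, t ∩ u, inter_mem ht hu,
    (hf.mono inter_subset_left).prodMk (hg.mono inter_subset_right)⟩

lemma fst {f : α → β × γ} {x : α} (hf : LipschitzAt f x) : LipschitzAt (fun a => (f a).1) x :=
  comp (LipschitzWith.prod_fst.locallyLipschitz _) hf rfl

lemma snd {f : α → β × γ} {x : α} (hf : LipschitzAt f x) : LipschitzAt (fun a => (f a).2) x :=
  comp (LipschitzWith.prod_snd.locallyLipschitz _) hf rfl

end LipschitzAt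

lemma lipschitzAt_id (x : α) : LipschitzAt (fun a : α => a) x :=
  LocallyLipschitz.id x

end LipschitzAt

section RelHomotopy

variable {Z Y T : Type*} [TopologicalSpace Z] [TopologicalSpace Y] [TopologicalSpace T]

/-- `Φ` is a homotopy from `H` to `H'`, relative to `R`, whose graph stays in `D` over `W`.

The maps are defined on all of `Z` but only controlled over `W`, which avoids subtypes; the
homotopy parameter runs through `ℝ`, being stationary outside `[0, 1]`, and the equations are
imposed over all of `Z`, which costs nothing as values outside `W` are irrelevant. -/
structure IsRelHomotopy (W : Set Z) (R : Set (Z × T)) (D : Set (Z × Y)) (H H' : Z × T → Y)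
    (Φ : Z × T × ℝ → Y) : Prop where
  continuousAt : ∀ z ∈ W, ∀ t u, ContinuousAt Φ (z, t, u)
  eq_left : ∀ z t, ∀ u ≤ 0, Φ (z, t, u) = H (z, t)
  eq_right : ∀ z t, ∀ u ≥ 1, Φ (z, t, u) = H' (z, t)
  eq_of_mem : ∀ z t, (z, t) ∈ R → ∀ u, Φ (z, t, u) = H (z, t)
  mem : ∀ z ∈ W, ∀ t u, (z, Φ (z, t, u)) ∈ D

namespace IsRelHomotopy

variable {W : Set Z} {R R' : Set (Z × T)} {D D' : Set (Z × Y)} {H H' H'' : Z × T → Y}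
  {Φ Ψ : Z × T × ℝ → Y}

lemma mono (h : IsRelHomotopy W R D H H' Φ) (hR : R' ⊆ R) (hD : D ⊆ D') :
    IsRelHomotopy W R' D' H H' Φ where
  __ := h
  eq_of_mem z t hzt := h.eq_of_mem z t (hR hzt)
  mem z hz t u := hD (h.mem z hz t u)

lemma continuousAt_left (h : IsRelHomotopy W R D H H' Φ) {z : Z} (hz : z ∈ W) (t : T) :
    ContinuousAt H (z, t) := by
  have hH : H = fun p => Φ (p.1, p.2, 0) := funext fun p => (h.eq_left p.1 p.2 0 le_rfl).symm
  rw [hH]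
  exact (h.continuousAt z hz t 0).comp_of_eq (by fun_prop) rfl

lemma continuousAt_right (h : IsRelHomotopy W R D H H' Φ) {z : Z} (hz : z ∈ W) (t : T) :
    ContinuousAt H' (z, t) := by
  have hH : H' = fun p => Φ (p.1, p.2, 1) := funext fun p => (h.eq_right p.1 p.2 1 le_rfl).symm
  rw [hH]
  exact (h.continuousAt z hz t 1).comp_of_eq (by fun_prop) rfl

lemma right_eq_left (h : IsRelHomotopy W R D H H' Φ) {z : Z} {t : T} (hzt : (z, t) ∈ R) :
    H' (z, t) = H (z, t) := by
  rw [← h.eq_right z t 1 le_rfl, h.eq_of_mem z t hzt]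

lemma refl (hH : ∀ z ∈ W, ∀ t, ContinuousAt H (z, t)) (hD : ∀ z ∈ W, ∀ t, (z, H (z, t)) ∈ D) :
    IsRelHomotopy W univ D H H fun p => H (p.1, p.2.1) where
  continuousAt z hz t _ := (hH z hz t).comp_of_eq (by fun_prop) rfl
  eq_left _ _ _ _ := rfl
  eq_right _ _ _ _ := rfl
  eq_of_mem _ _ _ _ := rfl
  mem z hz t _ := hD z hz t

lemma trans (hΦ : IsRelHomotopy W R D H H' Φ) (hΨ : IsRelHomotopy W R D H' H'' Ψ) :
    IsRelHomotopy W R D H H'' fun p =>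
      if p.2.2 ≤ 1 / 2 then Φ (p.1, p.2.1, 3 * p.2.2) else Ψ (p.1, p.2.1, 3 * p.2.2 - 2) where
  continuousAt z hz t u := by
    have hΦ_cont : ContinuousAt (fun p : Z × T × ℝ => Φ (p.1, p.2.1, 3 * p.2.2)) (z, t, u) :=
      (hΦ.continuousAt z hz t (3 * u)).comp_of_eq (by fun_prop) rfl
    have hΨ_cont : ContinuousAt (fun p : Z × T × ℝ => Ψ (p.1, p.2.1, 3 * p.2.2 - 2)) (z, t, u) :=
      (hΨ.continuousAt z hz t (3 * u - 2)).comp_of_eq (by fun_prop) rfl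
    -- both branches are equal to `H'` for `1 / 3 ≤ u ≤ 2 / 3`
    rcases lt_or_ge u (1 / 2) with hu | hu
    · refine hΦ_cont.congr ?_
      have : ∀ᶠ p : Z × T × ℝ in 𝓝 (z, t, u), p.2.2 < 1 / 2 :=
        ContinuousAt.eventually_lt (by fun_prop) continuousAt_const hu
      filter_upwards [this] with p hp
      rw [if_pos hp.le]
    · refine hΨ_cont.congr ?_
      have : ∀ᶠ p : Z × T × ℝ in 𝓝 (z, t, u), 1 / 3 < p.2.2 :=
        ContinuousAt.eventually_lt continuousAt_const (by fun_prop) (by dsimp only; linarith)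
      filter_upwards [this] with p hp
      split_ifs with hp'
      · rw [hΦ.eq_right _ _ _ (by linarith), hΨ.eq_left _ _ _ (by linarith)]
      · rfl
  eq_left z t u hu := by
    rw [if_pos (by linarith), hΦ.eq_left _ _ _ (by linarith)]
  eq_right z t u hu := by
    rw [if_neg (by linarith), hΨ.eq_right _ _ _ (by linarith)]
  eq_of_mem z t hzt u := by
    split_ifs
    · exact hΦ.eq_of_mem z t hzt _
    · rw [hΨ.eq_of_mem z t hzt, hΦ.right_eq_left hzt]
  mem z hz t u := by
    split_ifs
    exacts [hΦ.mem z hz t _, hΨ.mem z hz t _]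

lemma slice {Θ : Z × T × ℝ → Y} {ψ : Z × T → ℝ} (hψ : ∀ z ∈ W, ∀ t, ContinuousAt ψ (z, t))
    (hΘ : ∀ z ∈ W, ∀ t, ∀ a : unitInterval, ContinuousAt Θ (z, t, a * ψ (z, t)))
    (hleft : ∀ z t, Θ (z, t, 0) = H (z, t))
    (hR : ∀ z t, (z, t) ∈ R → ∀ a : unitInterval, Θ (z, t, a * ψ (z, t)) = H (z, t))
    (hD : ∀ z ∈ W, ∀ t, ∀ a : unitInterval, (z, Θ (z, t, a * ψ (z, t))) ∈ D) :
    IsRelHomotopy W R D H (fun p => Θ (p.1, p.2, ψ p))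
      fun p => Θ (p.1, p.2.1, projIcc 0 1 zero_le_one p.2.2 * ψ (p.1, p.2.1)) where
  continuousAt z hz t u := by
    have hψ' : ContinuousAt (fun p : Z × T × ℝ => ψ (p.1, p.2.1)) (z, t, u) :=
      (hψ z hz t).comp_of_eq (by fun_prop) rfl
    have ha : Continuous fun p : Z × T × ℝ => (projIcc (0 : ℝ) 1 zero_le_one p.2.2 : ℝ) :=
      continuous_subtype_val.comp (continuous_projIcc.comp (by fun_prop))
    exact (hΘ z hz t _).comp_of_eq (continuousAt_fst.prodMk
      ((continuousAt_fst.comp continuousAt_snd).prodMk (ha.continuousAt.mul hψ'))) rfl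
  eq_left z t u hu := by simp only [projIcc_of_le_left _ hu, zero_mul, hleft]
  eq_right z t u hu := by simp only [projIcc_of_right_le _ hu, one_mul]
  eq_of_mem z t hzt u := hR z t hzt _
  mem z hz t u := hD z hz t _

end IsRelHomotopy

end RelHomotopy

lemma exists_index_of_pairwise_disjoint {Z ι : Type*} [Nonempty ι] {W : ι → Set Z}
    (hW : Pairwise (Function.onFun Disjoint W)) : ∃ idx : Z → ι, ∀ z i, z ∈ W i → idx z = i := by
  have hidx : ∀ z, ∃ i, ∀ j, z ∈ W j → i = j := fun z => by
    by_cases hz : ∃ i, z ∈ W i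
    · obtain ⟨i, hi⟩ := hz
      exact ⟨i, fun j hj => hW.eq (not_disjoint_iff.2 ⟨z, hi, hj⟩)⟩
    · exact ⟨Classical.arbitrary ι, fun j hj => (hz ⟨j, hj⟩).elim⟩
  choose idx hidx using hidx
  exact ⟨idx, hidx⟩

section HasLipDeformation

variable {Z Y : Type*} [MetricSpace Z] [MetricSpace Y]

/-- Over `W`, every family of maps with graph in `D`, parametrized by a finite-dimensional normed
space and already locally Lipschitz where the parameter has norm `> r`, can be deformed within `D'`
to a locally Lipschitz family, without changing it where the parameter has norm `≥ r' > r`.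

Deforming families rather than maps is what makes the property pass from `W₁`, `W₂` and
`W₁ ∩ W₂` to `W₁ ∪ W₂`: two deformations over `W₁` and `W₂` join to a family over `W₁ ∩ W₂` with
one more parameter. -/
def HasLipDeformation (W : Set Z) (D D' : Set (Z × Y)) : Prop :=
  ∀ (T : Type) [NormedAddCommGroup T] [NormedSpace ℝ T] [FiniteDimensional ℝ T] (r r' : ℝ),
    0 < r → r < r' → ∀ H : Z × T → Y,
    (∀ z ∈ W, ∀ t, ContinuousAt H (z, t)) →
    (∀ z ∈ W, ∀ t, r < ‖t‖ → LipschitzAt H (z, t)) →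
    (∀ z ∈ W, ∀ t, (z, H (z, t)) ∈ D) →
    ∃ H' Φ, IsRelHomotopy W {p : Z × T | r' ≤ ‖p.2‖} D' H H' Φ ∧
      ∀ z ∈ W, ∀ t, LipschitzAt H' (z, t)

namespace HasLipDeformation

variable {W : Set Z} {D D' E E' : Set (Z × Y)}

lemma mono (h : HasLipDeformation W D D') (hD : E ⊆ D) (hD' : D' ⊆ E') :
    HasLipDeformation W E E' := fun T _ _ _ r r' hr hr' H hcont hlip hmem =>
  let ⟨H', Φ, hΦ, hH'⟩ := h T r r' hr hr' H hcont hlip fun z hz t => hD (hmem z hz t)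
  ⟨H', Φ, hΦ.mono Subset.rfl hD', hH'⟩

lemma empty (D D' : Set (Z × Y)) : HasLipDeformation ∅ D D' := fun _ _ _ _ _ _ _ _ H _ _ _ =>
  ⟨H, fun p => H (p.1, p.2.1), (IsRelHomotopy.refl (by simp) (by simp)).mono (subset_univ _)
    Subset.rfl, by simp⟩

lemma iUnion {ι : Type*} {W : ι → Set Z} (hW : ∀ i, IsOpen (W i))
    (hdisj : Pairwise (Function.onFun Disjoint W)) (h : ∀ i, HasLipDeformation (W i) D D') :
    HasLipDeformation (⋃ i, W i) D D' := by
  intro T _ _ _ r r' hr hr' H hcont hlip hmem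
  rcases isEmpty_or_nonempty ι with hι | hι
  · rw [iUnion_of_empty]
    exact empty D D' T r r' hr hr' H (by simp) (by simp) (by simp)
  have hsub i : W i ⊆ ⋃ i, W i := subset_iUnion W i
  choose H' Φ hΦ hH' using fun i => h i T r r' hr hr' H (fun z hz => hcont z (hsub i hz))
    (fun z hz => hlip z (hsub i hz)) (fun z hz => hmem z (hsub i hz))
  obtain ⟨idx, hidx⟩ := exists_index_of_pairwise_disjoint hdisj
  have hev {S : Type _} [TopologicalSpace S] {i : ι} {z : Z} (hz : z ∈ W i) (x : S) :
      ∀ᶠ p in 𝓝 (z, x), idx p.1 = i :=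
    ((continuous_fst.tendsto (z, x)).eventually ((hW i).eventually_mem hz)).mono
      fun p hp => hidx p.1 i hp
  refine ⟨fun p => H' (idx p.1) p, fun p => Φ (idx p.1) p, ⟨?_, ?_, ?_, ?_, ?_⟩, ?_⟩
  · intro z hz t u
    obtain ⟨i, hi⟩ := mem_iUnion.1 hz
    refine ((hΦ i).continuousAt z hi t u).congr ?_
    filter_upwards [hev hi (t, u)] with p hp
    rw [hp]
  · exact fun z t u hu => (hΦ _).eq_left z t u hu
  · exact fun z t u hu => (hΦ _).eq_right z t u hu
  · exact fun z t hzt u => (hΦ _).eq_of_mem z t hzt u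
  · intro z hz t u
    obtain ⟨i, hi⟩ := mem_iUnion.1 hz
    simp only [hidx z i hi]
    exact (hΦ i).mem z hi t u
  · intro z hz t
    obtain ⟨i, hi⟩ := mem_iUnion.1 hz
    refine (hH' i z hi t).congr ?_
    filter_upwards [hev hi t] with p hp
    rw [hp]

end HasLipDeformation

lemma exists_lipschitz_pos_iff_mem {W : Set Z} (hW : IsOpen W) :
    ∃ f : Z → ℝ, LipschitzWith 1 f ∧ (∀ z, 0 ≤ f z) ∧ ∀ z, z ∈ W ↔ 0 < f z := by
  rcases Wᶜ.eq_empty_or_nonempty with hW' | hW'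
  · rw [compl_empty_iff] at hW'
    exact ⟨fun _ => 1, LipschitzWith.const' 1, by simp, by simp [hW']⟩
  · refine ⟨fun z => infDist z Wᶜ, lipschitz_infDist_pt _, fun z => infDist_nonneg, fun z => ?_⟩
    rw [← hW.isClosed_compl.notMem_iff_infDist_pos hW', notMem_compl_iff]

lemma exists_lipschitzAt_separating {W₁ W₂ : Set Z} (h₁ : IsOpen W₁) (h₂ : IsOpen W₂) {a : ℝ}
    (ha : 0 ≤ a) :
    ∃ φ : Z → ℝ, (∀ z ∈ W₁ ∪ W₂, LipschitzAt φ z) ∧ (∀ z ∈ W₁ ∪ W₂, φ z < 0 → z ∈ W₁) ∧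
      (∀ z ∈ W₁ ∪ W₂, 0 < φ z → z ∈ W₂) ∧ ∀ z ∈ W₁ ∪ W₂, z ∉ W₁ ∩ W₂ → |φ z| = a := by
  obtain ⟨f₁, hf₁, hf₁_nonneg, hf₁_pos⟩ := exists_lipschitz_pos_iff_mem h₁
  obtain ⟨f₂, hf₂, hf₂_nonneg, hf₂_pos⟩ := exists_lipschitz_pos_iff_mem h₂
  set φ : Z → ℝ := fun z => a * (f₂ z - f₁ z) / (f₂ z + f₁ z) with hφ
  have hφ_left z (hz₁ : z ∈ W₁) (hz₂ : z ∉ W₂) : φ z = -a := by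
    have hpos := (hf₁_pos z).1 hz₁
    have hzero : f₂ z = 0 := (hf₂_nonneg z).antisymm' (not_lt.1 (mt (hf₂_pos z).2 hz₂))
    simp only [hφ, hzero]
    field_simp
    ring
  have hφ_right z (hz₂ : z ∈ W₂) (hz₁ : z ∉ W₁) : φ z = a := by
    have hpos := (hf₂_pos z).1 hz₂
    have hzero : f₁ z = 0 := (hf₁_nonneg z).antisymm' (not_lt.1 (mt (hf₁_pos z).2 hz₁))
    simp only [hφ, hzero]
    field_simp
    ring
  refine ⟨φ, fun z hz => ?_, fun z hz hneg => ?_, fun z hz hpos => ?_, fun z hz hz' => ?_⟩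
  · have hne : f₂ z + f₁ z ≠ 0 := by
      rcases hz with hz | hz
      · exact (add_pos_of_nonneg_of_pos (hf₂_nonneg z) ((hf₁_pos z).1 hz)).ne'
      · exact (add_pos_of_pos_of_nonneg ((hf₂_pos z).1 hz) (hf₁_nonneg z)).ne'
    have hquot : LipschitzAt (fun q : ℝ × ℝ => a * (q.2 - q.1) / (q.2 + q.1)) (f₁ z, f₂ z) :=
      ContDiffAt.exists_lipschitzOnWith (𝕂 := ℝ) (by fun_prop (disch := assumption))
    exact hquot.comp (.prodMk (hf₁.locallyLipschitz z) (hf₂.locallyLipschitz z)) rfl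
  · by_contra hz₁
    linarith [hφ_right z (hz.resolve_left hz₁) hz₁]
  · by_contra hz₂
    linarith [hφ_left z (hz.resolve_right hz₂) hz₂]
  · rcases hz with hz | hz
    · rw [hφ_left z hz fun h => hz' ⟨hz, h⟩, abs_neg, abs_of_nonneg ha]
    · rw [hφ_right z hz fun h => hz' ⟨h, hz⟩, abs_of_nonneg ha]

section Gluing

variable {T : Type*} [NormedAddCommGroup T]

/-- Two homotopies `Φ₁`, `Φ₂` starting at the same family, joined to a family with an additional
parameter `v ∈ ℝ`: it runs through `Φ₁` as `v` decreases from `-s / 2` to `-s`, and through `Φ₂` as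
`v` increases from `s / 2` to `s`. -/
noncomputable def joinHomotopies (s : ℝ) (Φ₁ Φ₂ : Z × T × ℝ → Y) (p : Z × T × ℝ) : Y :=
  if p.2.2 ≤ 0 then Φ₁ (p.1, p.2.1, -(2 * p.2.2 / s) - 1)
  else Φ₂ (p.1, p.2.1, 2 * p.2.2 / s - 1)

namespace joinHomotopies

variable {s : ℝ} {W₁ W₂ : Set Z} {R₁ R₂ : Set (Z × T)} {D : Set (Z × Y)} {H H₁ H₂ : Z × T → Y}
  {Φ₁ Φ₂ : Z × T × ℝ → Y}

lemma eq_base (hs : 0 < s) (hΦ₁ : IsRelHomotopy W₁ R₁ D H H₁ Φ₁)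
    (hΦ₂ : IsRelHomotopy W₂ R₂ D H H₂ Φ₂) {z : Z} {t : T} {v : ℝ} (hv : |v| ≤ s / 2) :
    joinHomotopies s Φ₁ Φ₂ (z, t, v) = H (z, t) := by
  obtain ⟨hv₁, hv₂⟩ := abs_le.1 hv
  unfold joinHomotopies
  split_ifs
  · refine hΦ₁.eq_left z t _ ?_
    rw [sub_nonpos, neg_le, le_div_iff₀ hs]
    linarith
  · refine hΦ₂.eq_left z t _ ?_
    rw [sub_nonpos, div_le_one hs]
    linarith

lemma eq_left (hs : 0 < s) (hΦ₁ : IsRelHomotopy W₁ R₁ D H H₁ Φ₁) {z : Z} {t : T} {v : ℝ}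
    (hv : v ≤ -s) : joinHomotopies s Φ₁ Φ₂ (z, t, v) = H₁ (z, t) := by
  unfold joinHomotopies
  rw [if_pos (by dsimp only; linarith)]
  refine hΦ₁.eq_right z t _ ?_
  rw [ge_iff_le, le_sub_iff_add_le, le_neg, div_le_iff₀ hs]
  linarith

lemma eq_right (hs : 0 < s) (hΦ₂ : IsRelHomotopy W₂ R₂ D H H₂ Φ₂) {z : Z} {t : T} {v : ℝ}
    (hv : s ≤ v) : joinHomotopies s Φ₁ Φ₂ (z, t, v) = H₂ (z, t) := by
  unfold joinHomotopies
  rw [if_neg (by dsimp only; linarith)]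
  refine hΦ₂.eq_right z t _ ?_
  rw [ge_iff_le, le_sub_iff_add_le, le_div_iff₀ hs]
  linarith

lemma eq_of_mem (hΦ₁ : IsRelHomotopy W₁ R₁ D H H₁ Φ₁) (hΦ₂ : IsRelHomotopy W₂ R₂ D H H₂ Φ₂)
    {z : Z} {t : T} {v : ℝ} (h₁ : (z, t) ∈ R₁) (h₂ : (z, t) ∈ R₂ ∨ v ≤ 0) :
    joinHomotopies s Φ₁ Φ₂ (z, t, v) = H (z, t) := by
  unfold joinHomotopies
  split_ifs with hv
  · exact hΦ₁.eq_of_mem z t h₁ _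
  · exact hΦ₂.eq_of_mem z t (h₂.resolve_right hv) _

lemma mem (hs : 0 < s) (hΦ₁ : IsRelHomotopy W₁ R₁ D H H₁ Φ₁)
    (hΦ₂ : IsRelHomotopy W₂ R₂ D H H₂ Φ₂) {z : Z} {v : ℝ} (hz : z ∈ W₁ ∪ W₂)
    (hz₁ : v < 0 → z ∈ W₁) (hz₂ : 0 < v → z ∈ W₂) (t : T) :
    (z, joinHomotopies s Φ₁ Φ₂ (z, t, v)) ∈ D := by
  rcases lt_trichotomy v 0 with hv | rfl | hv
  · rw [joinHomotopies, if_pos hv.le]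
    exact hΦ₁.mem z (hz₁ hv) t _
  · rw [eq_base hs hΦ₁ hΦ₂ (by rw [abs_zero]; positivity)]
    rcases hz with hz | hz
    · exact hΦ₁.eq_left z t 0 le_rfl ▸ hΦ₁.mem z hz t 0
    · exact hΦ₂.eq_left z t 0 le_rfl ▸ hΦ₂.mem z hz t 0
  · rw [joinHomotopies, if_neg hv.not_ge]
    exact hΦ₂.mem z (hz₂ hv) t _

lemma continuousAt (hs : 0 < s) (hΦ₁ : IsRelHomotopy W₁ R₁ D H H₁ Φ₁)
    (hΦ₂ : IsRelHomotopy W₂ R₂ D H H₂ Φ₂) {z : Z} {v : ℝ} (hz : z ∈ W₁ ∪ W₂)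
    (hz₁ : v < 0 → z ∈ W₁) (hz₂ : 0 < v → z ∈ W₂) (t : T) :
    ContinuousAt (joinHomotopies s Φ₁ Φ₂) (z, t, v) := by
  have hv_cont : ContinuousAt (fun p : Z × T × ℝ => p.2.2) (z, t, v) := by fun_prop
  rcases lt_trichotomy v 0 with hv | rfl | hv
  · refine ((hΦ₁.continuousAt z (hz₁ hv) t _).comp_of_eq (f := fun p : Z × T × ℝ =>
      (p.1, p.2.1, -(2 * p.2.2 / s) - 1)) (by fun_prop) rfl).congr ?_
    filter_upwards [hv_cont.eventually_lt_const hv] with p hp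
    exact (if_pos hp.le).symm
  · have hH : ContinuousAt H (z, t) := by
      rcases hz with hz | hz
      exacts [hΦ₁.continuousAt_left hz t, hΦ₂.continuousAt_left hz t]
    refine (hH.comp_of_eq (f := fun p : Z × T × ℝ => (p.1, p.2.1)) (by fun_prop) rfl).congr ?_
    filter_upwards [hv_cont.abs.eventually_lt_const (u := s / 2) (by simpa using hs)] with p hp
    exact (eq_base hs hΦ₁ hΦ₂ hp.le).symm
  · refine ((hΦ₂.continuousAt z (hz₂ hv) t _).comp_of_eq (f := fun p : Z × T × ℝ =>
      (p.1, p.2.1, 2 * p.2.2 / s - 1)) (by fun_prop) rfl).congr ?_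
    filter_upwards [hv_cont.eventually_const_lt hv] with p hp
    exact (if_neg hp.not_ge).symm

lemma lipschitzAt_of_lt_abs (hs : 0 < s) (hΦ₁ : IsRelHomotopy W₁ R₁ D H H₁ Φ₁)
    (hΦ₂ : IsRelHomotopy W₂ R₂ D H H₂ Φ₂) {z : Z} {t : T} {v : ℝ}
    (hH₁ : v < 0 → LipschitzAt H₁ (z, t)) (hH₂ : 0 < v → LipschitzAt H₂ (z, t)) (hv : s < |v|) :
    LipschitzAt (joinHomotopies s Φ₁ Φ₂) (z, t, v) := by
  have hv_cont : ContinuousAt (fun p : Z × T × ℝ => p.2.2) (z, t, v) := by fun_prop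
  have hproj : LipschitzAt (fun p : Z × T × ℝ => (p.1, p.2.1)) (z, t, v) :=
    (lipschitzAt_id _).fst.prodMk (lipschitzAt_id _).snd.fst
  rcases lt_abs.1 hv with hv | hv
  · refine ((hH₂ (hs.trans hv)).comp hproj rfl).congr ?_
    filter_upwards [hv_cont.eventually_const_lt hv] with p hp
    exact eq_right hs hΦ₂ hp.le
  · refine ((hH₁ (by linarith)).comp hproj rfl).congr ?_
    filter_upwards [hv_cont.eventually_lt_const (lt_neg_of_lt_neg hv)] with p hp
    exact eq_left hs hΦ₁ hp.le

lemma lipschitzAt_of_lt_norm (hΦ₁ : IsRelHomotopy W₁ R₁ D H H₁ Φ₁)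
    (hΦ₂ : IsRelHomotopy W₂ R₂ D H H₂ Φ₂) {ρ : ℝ}
    (hR₁ : {p | ρ ≤ ‖p.2‖} ⊆ R₁) (hR₂ : {p | ρ ≤ ‖p.2‖} ⊆ R₂) {z : Z} {t : T}
    (hH : LipschitzAt H (z, t)) (ht : ρ < ‖t‖) (v : ℝ) :
    LipschitzAt (joinHomotopies s Φ₁ Φ₂) (z, t, v) := by
  refine (hH.comp (f := fun p : Z × T × ℝ => (p.1, p.2.1))
    ((lipschitzAt_id _).fst.prodMk (lipschitzAt_id _).snd.fst) rfl).congr ?_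
  have ht_cont : ContinuousAt (fun p : Z × T × ℝ => ‖p.2.1‖) (z, t, v) := by fun_prop
  filter_upwards [ht_cont.eventually_const_lt ht] with p hp
  exact eq_of_mem hΦ₁ hΦ₂ (hR₁ hp.le) (.inl (hR₂ hp.le))

lemma isRelHomotopy_graph (hs : 0 < s) (hΦ₁ : IsRelHomotopy W₁ R₁ D H H₁ Φ₁)
    (hΦ₂ : IsRelHomotopy W₂ R₂ D H H₂ Φ₂) {φ : Z → ℝ} (hφ : ∀ z ∈ W₁ ∪ W₂, ContinuousAt φ z)
    (hφ₁ : ∀ z ∈ W₁ ∪ W₂, φ z < 0 → z ∈ W₁) (hφ₂ : ∀ z ∈ W₁ ∪ W₂, 0 < φ z → z ∈ W₂) :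
    ∃ Φ, IsRelHomotopy (W₁ ∪ W₂) {p | p ∈ R₁ ∧ (p ∈ R₂ ∨ φ p.1 ≤ 0)} D H
      (fun p => joinHomotopies s Φ₁ Φ₂ (p.1, p.2, φ p.1)) Φ := by
  have hv₁ {z} (hz : z ∈ W₁ ∪ W₂) (a : unitInterval) (h : a * φ z < 0) : z ∈ W₁ :=
    hφ₁ z hz (neg_of_mul_neg_right h a.2.1)
  have hv₂ {z} (hz : z ∈ W₁ ∪ W₂) (a : unitInterval) (h : 0 < a * φ z) : z ∈ W₂ :=
    hφ₂ z hz (pos_of_mul_pos_right h a.2.1)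
  exact ⟨_, IsRelHomotopy.slice (ψ := fun p => φ p.1)
    (fun z hz t => (hφ z hz).comp_of_eq continuousAt_fst rfl)
    (fun z hz t a => continuousAt hs hΦ₁ hΦ₂ hz (hv₁ hz a) (hv₂ hz a) t)
    (fun z t => eq_base hs hΦ₁ hΦ₂ (by rw [abs_zero]; positivity))
    (fun z t hzt a => eq_of_mem hΦ₁ hΦ₂ hzt.1
      (hzt.2.imp_right (mul_nonpos_of_nonneg_of_nonpos a.2.1)))
    (fun z hz t a => mem hs hΦ₁ hΦ₂ hz (hv₁ hz a) (hv₂ hz a) t)⟩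

end joinHomotopies

variable {W V : Set Z} {D : Set (Z × Y)} {φ : Z → ℝ} {s' : ℝ} {K K' : Z × T × ℝ → Y}
  {Ψ : Z × (T × ℝ) × ℝ → Y}

lemma IsRelHomotopy.restrict_graph (hφ : ∀ z ∈ V, ContinuousAt φ z)
    (hΨ : IsRelHomotopy W {p | s' ≤ ‖p.2‖} D K K' Ψ) (hV : ∀ z ∈ V \ W, s' < |φ z|)
    (hK : ∀ z ∈ V \ W, ∀ t, ContinuousAt K (z, t, φ z))
    (hD : ∀ z ∈ V \ W, ∀ t, (z, K (z, t, φ z)) ∈ D) :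
    IsRelHomotopy V {p | s' ≤ ‖(p.2, φ p.1)‖} D (fun p => K (p.1, p.2, φ p.1))
      (fun p => K' (p.1, p.2, φ p.1)) fun p => Ψ (p.1, (p.2.1, φ p.1), p.2.2) where
  continuousAt z hz t u := by
    have hφz : ContinuousAt (fun p : Z × T × ℝ => φ p.1) (z, t, u) :=
      (hφ z hz).comp_of_eq continuousAt_fst rfl
    by_cases hzW : z ∈ W
    · exact (hΨ.continuousAt z hzW _ u).comp_of_eq
        (f := fun p : Z × T × ℝ => (p.1, (p.2.1, φ p.1), p.2.2)) (by fun_prop) rfl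
    · refine ((hK z ⟨hz, hzW⟩ t).comp_of_eq
        (f := fun p : Z × T × ℝ => (p.1, p.2.1, φ p.1)) (by fun_prop) rfl).congr ?_
      filter_upwards [hφz.abs.eventually_const_lt (hV z ⟨hz, hzW⟩)] with p hp
      exact (hΨ.eq_of_mem _ _ (hp.le.trans (norm_snd_le (p.2.1, φ p.1))) _).symm
  eq_left z t u hu := hΨ.eq_left z _ u hu
  eq_right z t u hu := hΨ.eq_right z _ u hu
  eq_of_mem z t hzt u := hΨ.eq_of_mem z _ hzt u
  mem z hz t u := by
    by_cases hzW : z ∈ W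
    · exact hΨ.mem z hzW _ u
    · rw [hΨ.eq_of_mem z _ ((hV z ⟨hz, hzW⟩).le.trans (norm_snd_le (t, φ z)))]
      exact hD z ⟨hz, hzW⟩ t

lemma IsRelHomotopy.lipschitzAt_restrict_graph (hΨ : IsRelHomotopy W {p | s' ≤ ‖p.2‖} D K K' Ψ)
    (hK' : ∀ z ∈ W, ∀ t, LipschitzAt K' (z, t)) {z : Z} (hφ : LipschitzAt φ z)
    (hV : z ∉ W → s' < |φ z|) {t : T} (hK : z ∉ W → LipschitzAt K (z, t, φ z)) :
    LipschitzAt (fun p => K' (p.1, p.2, φ p.1)) (z, t) := by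
  have hφz : LipschitzAt (fun p : Z × T => φ p.1) (z, t) := hφ.comp (lipschitzAt_id _).fst rfl
  have hgraph : LipschitzAt (fun p : Z × T => (p.1, p.2, φ p.1)) (z, t) :=
    (lipschitzAt_id _).fst.prodMk ((lipschitzAt_id _).snd.prodMk hφz)
  by_cases hzW : z ∈ W
  · exact (hK' z hzW _).comp hgraph rfl
  · refine ((hK hzW).comp hgraph rfl).congr ?_
    filter_upwards [hφz.continuousAt.abs.eventually_const_lt (hV hzW)] with p hp
    exact hΨ.right_eq_left (hp.le.trans (norm_snd_le (p.2, φ p.1)))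

end Gluing

lemma exists_isRelHomotopy_union {T : Type} [NormedAddCommGroup T] [NormedSpace ℝ T]
    [FiniteDimensional ℝ T] {W₁ W₂ : Set Z} (hW₁ : IsOpen W₁) (hW₂ : IsOpen W₂)
    {R₁ R₂ : Set (Z × T)} {D D' : Set (Z × Y)} (hD : D ⊆ D') {H H₁ H₂ : Z × T → Y}
    {Φ₁ Φ₂ : Z × T × ℝ → Y} (hΦ₁ : IsRelHomotopy W₁ R₁ D H H₁ Φ₁)
    (hΦ₂ : IsRelHomotopy W₂ R₂ D H H₂ Φ₂) {s s' : ℝ} (hs : 0 < s) (hs' : s < s')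
    (hR₁ : {p | s ≤ ‖p.2‖} ⊆ R₁) (hR₂ : {p | s ≤ ‖p.2‖} ⊆ R₂)
    (hH : ∀ z ∈ W₁ ∩ W₂, ∀ t, s < ‖t‖ → LipschitzAt H (z, t))
    (hH₁ : ∀ z ∈ W₁, ∀ t, LipschitzAt H₁ (z, t)) (hH₂ : ∀ z ∈ W₂, ∀ t, LipschitzAt H₂ (z, t))
    (hW : HasLipDeformation (W₁ ∩ W₂) D D') :
    ∃ H' Φ, IsRelHomotopy (W₁ ∪ W₂)
        {p | p ∈ R₁ ∧ (p ∈ R₂ ∧ s' ≤ ‖p.2‖ ∨ p.1 ∈ W₁ \ W₂)} D' H H' Φ ∧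
      ∀ z ∈ W₁ ∪ W₂, ∀ t, LipschitzAt H' (z, t) := by
  have hs'_pos : 0 < s' := hs.trans hs'
  obtain ⟨φ, hφ, hφ₁, hφ₂, hφ_eq⟩ :=
    exists_lipschitzAt_separating hW₁ hW₂ (a := 2 * s') (by positivity)
  have hφ_abs z (hz : z ∈ (W₁ ∪ W₂) \ (W₁ ∩ W₂)) : s' < |φ z| := by
    rw [hφ_eq z hz.1 hz.2]
    linarith
  obtain ⟨K', Ψ, hΨ, hK'⟩ := hW (T × ℝ) s s' hs hs' (joinHomotopies s Φ₁ Φ₂)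
    (fun z hz p => joinHomotopies.continuousAt hs hΦ₁ hΦ₂ (.inl hz.1) (fun _ => hz.1)
      (fun _ => hz.2) p.1)
    (fun z hz p hp => (lt_max_iff.1 hp).elim
      (fun ht => joinHomotopies.lipschitzAt_of_lt_norm hΦ₁ hΦ₂ hR₁ hR₂ (hH z hz p.1 ht) ht p.2)
      (joinHomotopies.lipschitzAt_of_lt_abs hs hΦ₁ hΦ₂ (fun _ => hH₁ z hz.1 p.1)
        fun _ => hH₂ z hz.2 p.1))
    (fun z hz p => joinHomotopies.mem hs hΦ₁ hΦ₂ (.inl hz.1) (fun _ => hz.1) (fun _ => hz.2) p.1)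
  obtain ⟨Φ, hΦ⟩ := joinHomotopies.isRelHomotopy_graph hs hΦ₁ hΦ₂
    (fun z hz => (hφ z hz).continuousAt) hφ₁ hφ₂
  have hΨ_graph := hΨ.restrict_graph (V := W₁ ∪ W₂) (fun z hz => (hφ z hz).continuousAt) hφ_abs
    (fun z hz t => joinHomotopies.continuousAt hs hΦ₁ hΦ₂ hz.1 (hφ₁ z hz.1) (hφ₂ z hz.1) t)
    (fun z hz t => hD (joinHomotopies.mem hs hΦ₁ hΦ₂ hz.1 (hφ₁ z hz.1) (hφ₂ z hz.1) t))
  refine ⟨_, _, (hΦ.mono ?_ hD).trans (hΨ_graph.mono ?_ Subset.rfl), fun z hz t =>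
    hΨ.lipschitzAt_restrict_graph hK' (hφ z hz) (fun hzW => hφ_abs z ⟨hz, hzW⟩) fun hzW =>
      joinHomotopies.lipschitzAt_of_lt_abs hs hΦ₁ hΦ₂ (fun h => hH₁ z (hφ₁ z hz h) t)
        (fun h => hH₂ z (hφ₂ z hz h) t) (hs'.trans (hφ_abs z ⟨hz, hzW⟩))⟩
  · exact fun p hp => ⟨hp.1, hp.2.imp And.left fun hpW =>
      not_lt.1 fun h => hpW.2 (hφ₂ _ (.inl hpW.1) h)⟩
  · rintro p ⟨-, ⟨-, hp⟩ | hp⟩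
    · exact hp.trans (norm_fst_le (p.2, φ p.1))
    · exact (hφ_abs _ ⟨.inl hp.1, fun h => hp.2 h.2⟩).le.trans (norm_snd_le (p.2, φ p.1))

lemma HasLipDeformation.union {W₁ W₂ : Set Z} (hW₁ : IsOpen W₁) (hW₂ : IsOpen W₂)
    {D₀ D D' : Set (Z × Y)} (hD : D ⊆ D') (h₁ : HasLipDeformation W₁ D₀ D)
    (h₂ : HasLipDeformation W₂ D₀ D) (h : HasLipDeformation (W₁ ∩ W₂) D D') :
    HasLipDeformation (W₁ ∪ W₂) D₀ D' := by
  intro T _ _ _ r r' hr hr' H hcont hlip hmem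
  obtain ⟨s, hrs, hsr'⟩ := exists_between hr'
  obtain ⟨H₁, Φ₁, hΦ₁, hH₁⟩ := h₁ T r s hr hrs H (fun z hz => hcont z (.inl hz))
    (fun z hz => hlip z (.inl hz)) (fun z hz => hmem z (.inl hz))
  obtain ⟨H₂, Φ₂, hΦ₂, hH₂⟩ := h₂ T r s hr hrs H (fun z hz => hcont z (.inr hz))
    (fun z hz => hlip z (.inr hz)) (fun z hz => hmem z (.inr hz))
  obtain ⟨H', Φ, hΦ, hH'⟩ := exists_isRelHomotopy_union hW₁ hW₂ hD hΦ₁ hΦ₂ (hr.trans hrs) hsr'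
    Subset.rfl Subset.rfl (fun z hz t ht => hlip z (.inl hz.1) t (hrs.trans ht)) hH₁ hH₂ h
  exact ⟨H', Φ, hΦ.mono (fun p hp => ⟨hsr'.le.trans hp, .inl ⟨hsr'.le.trans hp, hp⟩⟩) Subset.rfl,
    hH'⟩

variable (Y) in
/-- Over `W`, every family of maps into `Y` can be deformed to a locally Lipschitz one, without any
control on the images. -/
abbrev IsLipDeformable (W : Set Z) : Prop :=
  HasLipDeformation W (univ : Set (Z × Y)) univ

end HasLipDeformation

section LipContractsIn

variable {Y : Type*} [MetricSpace Y]

/-- `B` can be contracted to a point within `B'` by a locally Lipschitz homotopy `C`, extended to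
`u ∈ ℝ`. As only the values of `C` over `B` matter, the end equations are imposed everywhere. -/
def LipContractsIn (B B' : Set Y) : Prop :=
  ∃ (y : Y) (C : Y × ℝ → Y), (∀ v, C (v, 0) = v) ∧ (∀ v, C (v, 1) = y) ∧
    ∀ v ∈ B, ∀ u, LipschitzAt C (v, u) ∧ C (v, u) ∈ B'

lemma LipContractsIn.mono {A B A' B' : Set Y} (h : LipContractsIn A A') (hB : B ⊆ A)
    (hB' : A' ⊆ B') : LipContractsIn B B' :=
  let ⟨y, C, h₀, h₁, hC⟩ := h
  ⟨y, C, h₀, h₁, fun v hv u => ⟨(hC v (hB hv) u).1, hB' (hC v (hB hv) u).2⟩⟩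

lemma lipContractsIn_interior {V B : Set Y} {F : V × unitInterval → Y} {K : NNReal}
    (hF : LipschitzWith K F) {y : Y} (h₀ : ∀ v, F (v, 0) = v) (h₁ : ∀ v, F (v, 1) = y)
    (hB : ∀ p, F p ∈ B) : LipContractsIn (interior V) B := by
  classical
  set C : Y × ℝ → Y := fun p =>
    if h : p.1 ∈ V then F (⟨p.1, h⟩, projIcc 0 1 zero_le_one p.2)
    else if p.2 ≤ 0 then p.1 else y with hC
  have hC_eq {v : Y} (hv : v ∈ V) (u : ℝ) :
      C (v, u) = F (⟨v, hv⟩, projIcc 0 1 zero_le_one u) := dif_pos hv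
  have hC_lip : LipschitzOnWith K C (V ×ˢ univ) := by
    rintro ⟨a, s⟩ ⟨ha, -⟩ ⟨b, t⟩ ⟨hb, -⟩
    rw [hC_eq ha, hC_eq hb]
    refine (hF _ _).trans (mul_le_mul_right (max_le_max le_rfl ?_) _)
    simpa only [ENNReal.coe_one, one_mul] using LipschitzWith.projIcc (zero_le_one' ℝ) s t
  refine ⟨y, C, fun v => ?_, fun v => ?_, fun v hv u => ⟨⟨K, V ×ˢ univ, ?_, hC_lip⟩, ?_⟩⟩
  · by_cases hv : v ∈ V
    · exact (hC_eq hv 0).trans ((congrArg F (by rw [projIcc_left]; rfl)).trans (h₀ ⟨v, hv⟩))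
    · simp only [hC, dif_neg hv, le_refl, if_true]
  · by_cases hv : v ∈ V
    · exact (hC_eq hv 1).trans ((congrArg F (by rw [projIcc_right]; rfl)).trans (h₁ ⟨v, hv⟩))
    · simp only [hC, dif_neg hv, not_le.2 one_pos, if_false]
  · exact prod_mem_nhds (mem_interior_iff_mem_nhds.1 hv) univ_mem
  · rw [hC_eq (interior_subset hv)]
    exact hB _

lemma IsLipSDRToPoint.lipContractsIn {V : Set Y} (hV : IsOpen V) (h : IsLipSDRToPoint V) :
    LipContractsIn V V := by
  obtain ⟨p, F, K, hF, h₀, h₁, -⟩ := h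
  simpa only [hV.interior_eq] using lipContractsIn_interior ((LipschitzWith.subtype_val V).comp hF)
    (fun v => congrArg Subtype.val (h₀ v)) (fun v => congrArg Subtype.val (h₁ v)) fun q => (F q).2

lemma LocallyLipschitzContractible.exists_lipContractsIn_ball
    (hY : LocallyLipschitzContractible Y) (y : Y) {ε : ℝ} (hε : 0 < ε) :
    ∃ δ > 0, LipContractsIn (ball y δ) (ball y ε) := by
  obtain ⟨V, hV, -, F, K, hF, h₀, h₁, -, hmem⟩ := hY y (ball y ε) (ball_mem_nhds y hε)
  obtain ⟨δ, hδ, hball⟩ := Metric.mem_nhds_iff.1 hV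
  exact ⟨δ, hδ, (lipContractsIn_interior hF h₀ h₁ fun p => hmem p.1 p.2).mono
    (interior_maximal hball isOpen_ball) Subset.rfl⟩

/-- Small balls centered in `C` are contractible within slightly larger ones, at uniform scales. -/
def UniformlyLipContractible (C : Set Y) : Prop :=
  ∀ ε > 0, ∃ δ > 0, ∀ y ∈ C, LipContractsIn (ball y δ) (ball y ε)

lemma LocallyLipschitzContractible.uniformlyLipContractible
    (hY : LocallyLipschitzContractible Y) {C : Set Y} (hC : IsCompact C) :
    UniformlyLipContractible C := by
  intro ε hε
  choose δ hδ hcontr using fun y => hY.exists_lipContractsIn_ball y (half_pos hε)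
  obtain ⟨η, hη, hball⟩ := lebesgue_number_lemma_of_metric
    (c := fun y => ball y (min (δ y) (ε / 2))) hC (fun y => isOpen_ball)
    (fun y _ => mem_iUnion.2 ⟨y, mem_ball_self (lt_min (hδ y) (half_pos hε))⟩)
  refine ⟨η, hη, fun x hx => ?_⟩
  obtain ⟨y, hy⟩ := hball x hx
  have hxy : dist y x < ε / 2 :=
    mem_ball'.1 (ball_subset_ball (min_le_right _ _) (hy (mem_ball_self hη)))
  exact (hcontr y).mono (hy.trans (ball_subset_ball (min_le_left _ _)))
    (ball_subset_ball' (by linarith))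

end LipContractsIn

section TargetContraction

variable {Z Y : Type*} [MetricSpace Z] [MetricSpace Y]

lemma exists_locallyLipschitz_cutoff (T : Type*) [SeminormedAddCommGroup T] {a b : ℝ}
    (hab : a < b) :
    ∃ ψ : T → ℝ, LocallyLipschitz ψ ∧ (∀ t, ‖t‖ ≤ a → ψ t = 1) ∧ ∀ t, b ≤ ‖t‖ → ψ t = 0 := by
  refine ⟨fun t => projIcc 0 1 zero_le_one ((b - ‖t‖) / (b - a)), fun t => ?_, fun t ht => ?_,
    fun t ht => ?_⟩
  · have hline : LipschitzAt (fun s : ℝ => (b - s) / (b - a)) ‖t‖ :=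
      ContDiffAt.exists_lipschitzOnWith (𝕂 := ℝ) (by fun_prop)
    exact LipschitzAt.comp ((LipschitzWith.subtype_val _).locallyLipschitz _)
      (.comp ((LipschitzWith.projIcc (zero_le_one' ℝ)).locallyLipschitz _)
        (hline.comp (lipschitzWith_one_norm.locallyLipschitz t) rfl) rfl) rfl
  · have h : 1 ≤ (b - ‖t‖) / (b - a) := by
      rw [one_le_div (sub_pos.2 hab)]
      linarith
    simp only [projIcc_of_right_le _ h]
  · have h : (b - ‖t‖) / (b - a) ≤ 0 :=
      div_nonpos_of_nonpos_of_nonneg (sub_nonpos.2 ht) (sub_pos.2 hab).le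
    simp only [projIcc_of_le_left _ h]

lemma LipContractsIn.hasLipDeformation {B B' : Set Y} (hB : LipContractsIn B B') {W : Set Z}
    {D D' : Set (Z × Y)} (hD : ∀ z ∈ W, ∀ y, (z, y) ∈ D → y ∈ B)
    (hD' : ∀ z ∈ W, ∀ y ∈ B', (z, y) ∈ D') : HasLipDeformation W D D' := by
  intro T _ _ _ r r' _ hr' H hcont hlip hmem
  obtain ⟨y, C, hC₀, hC₁, hC⟩ := hB
  obtain ⟨s, hrs, hsr'⟩ := exists_between hr'
  obtain ⟨ψ, hψ, hψ_one, hψ_zero⟩ := exists_locallyLipschitz_cutoff T hsr'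
  have hC_H {z} (hz : z ∈ W) t u := hC (H (z, t)) (hD z hz _ (hmem z hz t)) u
  have hψ_snd z t : LipschitzAt (fun p : Z × T => ψ p.2) (z, t) :=
    LipschitzAt.comp (hψ t) (lipschitzAt_id _).snd rfl
  refine ⟨_, _, IsRelHomotopy.slice (Θ := fun p => C (H (p.1, p.2.1), p.2.2))
    (ψ := fun p => ψ p.2) (fun z _ t => (hψ_snd z t).continuousAt) (fun z hz t a => ?_)
    (fun z t => hC₀ _) (fun z t ht a => ?_) (fun z hz t a => hD' z hz _ (hC_H hz t _).2),
    fun z hz t => ?_⟩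
  · have hH : ContinuousAt (fun p : Z × T × ℝ => H (p.1, p.2.1)) (z, t, a * ψ t) :=
      (hcont z hz t).comp_of_eq (by fun_prop) rfl
    exact (hC_H hz t _).1.continuousAt.comp_of_eq (hH.prodMk (by fun_prop)) rfl
  · simp only [hψ_zero t ht, mul_zero, hC₀]
  · rcases lt_or_ge r ‖t‖ with ht | ht
    · exact (hC_H hz t _).1.comp ((hlip z hz t ht).prodMk (hψ_snd z t)) rfl
    · refine LipschitzAt.congr (LocallyLipschitz.const y (z, t)) ?_
      have hnorm : ContinuousAt (fun p : Z × T => ‖p.2‖) (z, t) := by fun_prop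
      filter_upwards [hnorm.eventually_lt_const (ht.trans_lt hrs)] with p hp
      simp only [hψ_one p.2 hp.le, hC₁]

end TargetContraction

section Tube

variable {Z Y : Type*} [MetricSpace Y]

/-- The points at distance `< ε` from the graph of `q`, measured along the fibers `{z} × Y`. -/
def tube (q : Z → Y) (ε : ℝ) : Set (Z × Y) :=
  {p | p.2 ∈ ball (q p.1) ε}

lemma tube_mono (q : Z → Y) {δ ε : ℝ} (h : δ ≤ ε) : tube q δ ⊆ tube q ε :=
  fun _ hp => ball_subset_ball h hp

variable [MetricSpace Z]

/-- `W` is a disjoint union of open sets, each mapped by `q` into a `δ`-ball centered in `C`. -/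
def IsScattered (C : Set Y) (q : Z → Y) (δ : ℝ) (W : Set Z) : Prop :=
  ∃ (ι : Type) (P : ι → Set Z), (∀ i, IsOpen (P i)) ∧ Pairwise (Function.onFun Disjoint P) ∧
    W = ⋃ i, P i ∧ ∀ i, ∃ y ∈ C, MapsTo q (P i) (ball y δ)

namespace IsScattered

variable {C : Set Y} {q : Z → Y} {δ δ' : ℝ} {W V : Set Z}

lemma isOpen (h : IsScattered C q δ W) : IsOpen W := by
  obtain ⟨ι, P, hP, -, rfl, -⟩ := h
  exact isOpen_iUnion hP

lemma mono (h : IsScattered C q δ W) (hδ : δ ≤ δ') : IsScattered C q δ' W := by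
  obtain ⟨ι, P, hP, hdisj, hW, hmaps⟩ := h
  refine ⟨ι, P, hP, hdisj, hW, fun i => ?_⟩
  obtain ⟨y, hy, hi⟩ := hmaps i
  exact ⟨y, hy, hi.mono_right (ball_subset_ball hδ)⟩

lemma inter (h : IsScattered C q δ W) (hV : IsOpen V) : IsScattered C q δ (W ∩ V) := by
  obtain ⟨ι, P, hP, hdisj, rfl, hmaps⟩ := h
  refine ⟨ι, fun i => P i ∩ V, fun i => (hP i).inter hV,
    fun i j hij => (hdisj hij).mono inter_subset_left inter_subset_left, iUnion_inter _ _,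
    fun i => ?_⟩
  obtain ⟨y, hy, hi⟩ := hmaps i
  exact ⟨y, hy, hi.mono_left inter_subset_left⟩

end IsScattered

namespace UniformlyLipContractible

variable {C : Set Y}

lemma exists_hasLipDeformation_of_isScattered (hC : UniformlyLipContractible C) {ε : ℝ}
    (hε : 0 < ε) :
    ∃ δ > 0, ∀ (q : Z → Y) (W : Set Z), IsScattered C q δ W →
      HasLipDeformation W (tube q δ) (tube q ε) := by
  obtain ⟨δ, hδ, hcontr⟩ := hC (ε / 2) (half_pos hε)
  refine ⟨min (δ / 2) (ε / 2), lt_min (half_pos hδ) (half_pos hε), ?_⟩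
  rintro q W ⟨ι, P, hP, hdisj, rfl, hmaps⟩
  refine .iUnion hP hdisj fun i => ?_
  obtain ⟨y, hy, hi⟩ := hmaps i
  refine (hcontr y hy).hasLipDeformation (fun z hz v hv => ?_) fun z hz v hv => ?_
  · calc dist v y ≤ dist v (q z) + dist (q z) y := dist_triangle _ _ _
      _ < δ / 2 + δ / 2 := add_lt_add (lt_min_iff.1 hv).1 (lt_min_iff.1 (hi hz)).1
      _ = δ := add_halves δ
  · calc dist v (q z) ≤ dist v y + dist (q z) y := dist_triangle_right _ _ _
      _ < ε / 2 + ε / 2 := add_lt_add hv (lt_min_iff.1 (hi hz)).2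
      _ = ε := add_halves ε

lemma exists_hasLipDeformation_biUnion (hC : UniformlyLipContractible C) {κ : Type*}
    (s : Finset κ) {ε : ℝ} (hε : 0 < ε) :
    ∃ δ > 0, δ ≤ ε ∧ ∀ (q : Z → Y) (W : κ → Set Z), (∀ k ∈ s, IsScattered C q δ (W k)) →
      HasLipDeformation (⋃ k ∈ s, W k) (tube q δ) (tube q ε) := by
  classical
  induction s using Finset.induction_on generalizing ε with
  | empty =>
    refine ⟨ε, hε, le_rfl, fun q W _ => ?_⟩
    simpa only [Finset.notMem_empty, iUnion_of_empty, iUnion_empty] using .empty _ _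
  | insert a s _ ih =>
    obtain ⟨δ, hδ, hδε, hinter⟩ := ih hε
    obtain ⟨δ₁, hδ₁, hδ₁δ, hs⟩ := ih hδ
    obtain ⟨δ₂, hδ₂, ha⟩ := hC.exists_hasLipDeformation_of_isScattered (Z := Z) hδ
    refine ⟨min δ₁ δ₂, lt_min hδ₁ hδ₂, (min_le_left _ _).trans (hδ₁δ.trans hδε), fun q W hW => ?_⟩
    have hWs k (hk : k ∈ s) : IsScattered C q δ₁ (W k) :=
      (hW k (Finset.mem_insert_of_mem hk)).mono (min_le_left _ _)
    have hWa : IsScattered C q δ₂ (W a) :=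
      (hW a (Finset.mem_insert_self _ _)).mono (min_le_right _ _)
    rw [Finset.set_biUnion_insert]
    refine .union hWa.isOpen (isOpen_biUnion fun k hk => (hWs k hk).isOpen) (tube_mono q hδε)
      ((ha q _ hWa).mono (tube_mono q (min_le_right _ _)) Subset.rfl)
      ((hs q W hWs).mono (tube_mono q (min_le_left _ _)) Subset.rfl) ?_
    rw [inter_comm, iUnion₂_inter]
    exact hinter q _ fun k hk => ((hWs k hk).inter hWa.isOpen).mono hδ₁δ

end UniformlyLipContractible

end Tube

section FiniteDimensional

lemma exists_mem_Ioo_add_zsmul {p : ℝ} (hp : 0 < p) (x : ℝ) :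
    ∃ (b : Bool) (n : ℤ), x ∈ Ioo (cond b 0 (p / 2) + n • p) (cond b 0 (p / 2) + (n + 1) • p) := by
  obtain ⟨n, hn⟩ := mem_iUnion.1 (iUnion_Ico_add_zsmul hp 0 ▸ mem_univ x)
  rcases hn.1.eq_or_lt with rfl | hlt
  · refine ⟨false, n - 1, ?_⟩
    simp only [cond_false, zsmul_eq_mul, Int.cast_sub, Int.cast_add, Int.cast_one, mem_Ioo]
    constructor <;> linarith
  · exact ⟨true, n, hlt, hn.2⟩

lemma exists_disjoint_open_cover_pi (n : ℕ) {ε : ℝ} (hε : 0 < ε) :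
    ∃ P : (Fin n → Bool) → (Fin n → ℤ) → Set (Fin n → ℝ), (∀ k i, IsOpen (P k i)) ∧
      (∀ k, Pairwise (Function.onFun Disjoint (P k))) ∧ (⋃ k, ⋃ i, P k i = univ) ∧
      ∀ k i, ∀ x ∈ P k i, ∀ y ∈ P k i, dist x y < ε := by
  set I : Bool → ℤ → Set ℝ := fun b m =>
    Ioo (cond b 0 (ε / 2) + m • ε) (cond b 0 (ε / 2) + (m + 1) • ε) with hI
  refine ⟨fun k i => univ.pi fun j => I (k j) (i j),
    fun k i => isOpen_set_pi finite_univ fun j _ => isOpen_Ioo, fun k i i' hii' => ?_,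
    eq_univ_of_forall fun x => ?_, fun k i x hx y hy => ?_⟩
  · obtain ⟨j, hj⟩ := Function.ne_iff.1 hii'
    exact disjoint_univ_pi.2 ⟨j, pairwise_disjoint_Ioo_add_zsmul _ ε hj⟩
  · choose k i hx using fun j => exists_mem_Ioo_add_zsmul hε (x j)
    exact mem_iUnion₂.2 ⟨k, i, fun j _ => hx j⟩
  · refine (dist_pi_lt_iff hε).2 fun j => ?_
    have hx := hx j (mem_univ j)
    have hy := hy j (mem_univ j)
    simp only [hI, mem_Ioo, add_smul, one_smul] at hx hy
    rw [Real.dist_eq, abs_lt]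
    constructor <;> linarith

variable (T : Type*) [NormedAddCommGroup T] [NormedSpace ℝ T] [FiniteDimensional ℝ T]

lemma exists_finite_colored_open_cover :
    ∃ (κ : Type) (_ : Fintype κ) (ι : Type), ∀ ε > 0, ∃ P : κ → ι → Set T,
      (∀ k i, IsOpen (P k i)) ∧ (∀ k, Pairwise (Function.onFun Disjoint (P k))) ∧
      (⋃ k, ⋃ i, P k i = univ) ∧ ∀ k i, ∀ x ∈ P k i, ∀ y ∈ P k i, dist x y < ε := by
  set n := Module.finrank ℝ T
  let e : T ≃L[ℝ] (Fin n → ℝ) := .ofFinrankEq (Module.finrank_fin_fun ℝ).symm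
  refine ⟨Fin n → Bool, inferInstance, Fin n → ℤ, fun ε hε => ?_⟩
  obtain ⟨δ, hδ, he⟩ := Metric.uniformContinuous_iff.1
    (e.symm : (Fin n → ℝ) →L[ℝ] T).uniformContinuous ε hε
  obtain ⟨P, hP, hdisj, hcover, hdiam⟩ := exists_disjoint_open_cover_pi n hδ
  refine ⟨fun k i => e ⁻¹' P k i, fun k i => (hP k i).preimage e.continuous,
    fun k i j hij => (hdisj k hij).preimage e, ?_, fun k i x hx y hy => ?_⟩
  · simp only [← preimage_iUnion, hcover, preimage_univ]
  · simpa only [ContinuousLinearEquiv.coe_coe, e.symm_apply_apply] using he (hdiam k i _ hx _ hy)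

variable {T} {Y : Type*} [MetricSpace Y]

lemma LocallyLipschitzContractible.exists_hasLipDeformation_tube
    (hY : LocallyLipschitzContractible Y) {h : T → Y} (hh : Continuous h) {L : Set T}
    (hL : IsCompact L) {ε : ℝ} (hε : 0 < ε) :
    ∃ δ > 0, ∀ S ⊆ L, IsOpen S → HasLipDeformation S (tube h δ) (tube h ε) := by
  obtain ⟨κ, _, ι, hcover⟩ := exists_finite_colored_open_cover T
  obtain ⟨δ, hδ, -, hdeform⟩ := (hY.uniformlyLipContractible
    (hL.image hh)).exists_hasLipDeformation_biUnion (Z := T) (Finset.univ : Finset κ) hε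
  obtain ⟨η, hη, hh_unif⟩ := Metric.uniformContinuousOn_iff.1
    (hL.uniformContinuousOn_of_continuous hh.continuousOn) δ hδ
  obtain ⟨P, hP, hdisj, hP_cover, hdiam⟩ := hcover η hη
  refine ⟨δ, hδ, fun S hSL hS => ?_⟩
  have hscat k : IsScattered (h '' L) h δ (⋃ i : {i // (P k i ∩ S).Nonempty}, P k i ∩ S) := by
    refine ⟨{i // (P k i ∩ S).Nonempty}, fun i => P k i ∩ S, fun i => (hP k i).inter hS,
      fun i j hij => (hdisj k (Subtype.coe_ne_coe.2 hij)).mono inter_subset_left inter_subset_left,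
      rfl, ?_⟩
    rintro ⟨i, x, hx, hxS⟩
    exact ⟨h x, mem_image_of_mem h (hSL hxS), fun z hz =>
      hh_unif z (hSL hz.2) x (hSL hxS) (hdiam k i z hz.1 x hx)⟩
  have hS_eq : ⋃ k ∈ Finset.univ, ⋃ i : {i // (P k i ∩ S).Nonempty}, P k i ∩ S = S := by
    refine Subset.antisymm (iUnion₂_subset fun k _ => iUnion_subset fun i => inter_subset_right)
      fun x hx => ?_
    obtain ⟨k, i, hki⟩ := mem_iUnion₂.1 (hP_cover ▸ mem_univ x)
    exact mem_biUnion (Finset.mem_univ k) (mem_iUnion.2 ⟨⟨i, x, hki, hx⟩, hki, hx⟩)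
  rw [← hS_eq]
  exact hdeform h _ fun k _ => hscat k

lemma HasLipDeformation.exists_isRelHomotopy_unit {Z : Type*} [MetricSpace Z] {W : Set Z}
    {D D' : Set (Z × Y)} (h : HasLipDeformation W D D') {f : Z → Y}
    (hf : ∀ z ∈ W, ContinuousAt f z) (hD : ∀ z ∈ W, (z, f z) ∈ D) :
    ∃ H' Φ, IsRelHomotopy W (∅ : Set (Z × Unit)) D' (fun p => f p.1) H' Φ ∧
      ∀ z ∈ W, ∀ v, LipschitzAt H' (z, v) := by
  obtain ⟨H', Φ, hΦ, hH'⟩ := h Unit 1 2 one_pos one_lt_two (fun p => f p.1)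
    (fun z hz _ => (hf z hz).comp_of_eq continuousAt_fst rfl)
    (fun _ _ v hv => by simp only [PUnit.norm_eq_zero, zero_lt_one.not_gt] at hv)
    fun z hz _ => hD z hz
  exact ⟨H', Φ, hΦ.mono (empty_subset _) Subset.rfl, hH'⟩

lemma LocallyLipschitzContractible.exists_isRelHomotopy_of_lipschitzAt_of_lt_norm
    (hY : LocallyLipschitzContractible Y) {h : T → Y} (hh : Continuous h) {r r' : ℝ} (hr' : r < r')
    (hlip : ∀ t, r < ‖t‖ → LipschitzAt h t) :
    ∃ H' Φ, IsRelHomotopy univ {p : T × Unit | r' ≤ ‖p.1‖} univ (fun p => h p.1) H' Φ ∧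
      ∀ t v, LipschitzAt H' (t, v) := by
  have htube {ε : ℝ} (hε : 0 < ε) :=
    hY.exists_hasLipDeformation_tube hh (isCompact_closedBall 0 r') hε
  obtain ⟨δ₁, hδ₁, hinter⟩ := htube one_pos
  obtain ⟨δ, hδ, hball⟩ := htube hδ₁
  have hW₁ : IsOpen {t : T | r < ‖t‖} := isOpen_lt continuous_const continuous_norm
  have hcover : {t : T | r < ‖t‖} ∪ ball 0 r' = univ := eq_univ_of_forall fun t =>
    (lt_or_ge r ‖t‖).imp id fun ht => mem_ball_zero_iff.2 (ht.trans_lt hr')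
  have hv (v : Unit) : ‖v‖ < 1 := by simp only [PUnit.norm_eq_zero, zero_lt_one]
  obtain ⟨H₂, Φ₂, hΦ₂, hH₂⟩ := (hball (ball 0 r') ball_subset_closedBall
    isOpen_ball).exists_isRelHomotopy_unit (fun t _ => hh.continuousAt)
    fun t _ => mem_ball_self hδ
  obtain ⟨H', Φ, hΦ, hH'⟩ := exists_isRelHomotopy_union hW₁ isOpen_ball (subset_univ _)
    (.refl (D := tube h δ₁) (fun t _ v => by fun_prop) fun t _ v => mem_ball_self hδ₁) hΦ₂
    one_pos one_lt_two (subset_univ _) (fun p hp => ((hv p.2).not_ge hp).elim)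
    (fun t _ v hv' => ((hv v).not_gt hv').elim)
    (fun t ht v => LipschitzAt.comp (hlip t ht) (lipschitzAt_id _).fst rfl) hH₂
    ((hinter _ (inter_subset_right.trans ball_subset_closedBall) (hW₁.inter isOpen_ball)).mono
      Subset.rfl (subset_univ _))
  rw [hcover] at hΦ hH'
  refine ⟨H', Φ, hΦ.mono (fun p hp => ⟨mem_univ _, .inr ⟨hr'.trans_le hp, ?_⟩⟩) Subset.rfl,
    fun t => hH' t (mem_univ t)⟩
  rw [mem_ball_zero_iff]
  exact not_lt.2 hp

lemma LocallyLipschitzContractible.isLipDeformable_unit (hY : LocallyLipschitzContractible Y) :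
    IsLipDeformable Y (univ : Set Unit) := by
  intro T _ _ _ r r' _ hr' H hcont hlip _
  obtain ⟨H', Φ, hΦ, hH'⟩ := hY.exists_isRelHomotopy_of_lipschitzAt_of_lt_norm
    (h := fun t => H ((), t)) (continuous_iff_continuousAt.2 fun t =>
      (hcont () (mem_univ _) t).comp_of_eq (by fun_prop) rfl) hr'
    fun t ht => LipschitzAt.comp (hlip () (mem_univ _) t ht)
      (.prodMk (LocallyLipschitz.const () t) (lipschitzAt_id t)) rfl
  exact ⟨fun p => H' (p.2, p.1), fun p => Φ (p.2.1, p.1, p.2.2),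
    ⟨fun v _ t u => (hΦ.continuousAt t (mem_univ t) v u).comp_of_eq
        (f := fun p : Unit × T × ℝ => (p.2.1, p.1, p.2.2)) (by fun_prop) rfl,
      fun v t => hΦ.eq_left t v, fun v t => hΦ.eq_right t v, fun v t => hΦ.eq_of_mem t v,
      fun v _ t u => mem_univ _⟩,
    fun v _ t => (hH' t v).comp ((lipschitzAt_id _).snd.prodMk (lipschitzAt_id _).fst) rfl⟩

end FiniteDimensional

section SourceContraction

variable {X Y : Type*} [MetricSpace X] [MetricSpace Y]

lemma IsRelHomotopy.insert_of_norm_lt {T : Type*} [NormedAddCommGroup T] {W : Set X} {ρ s : ℝ}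
    (hs : ρ < s) {M : X × T → Y} (hM : ∀ z ∈ W, ∀ t, ContinuousAt M (z, t))
    {H H' : Unit × T → Y} {Ξ : Unit × T × ℝ → Y}
    (hΞ : IsRelHomotopy univ {p | ρ ≤ ‖p.2‖} univ H H' Ξ)
    (hMH : ∀ z t, ‖t‖ < s → M (z, t) = H ((), t)) :
    IsRelHomotopy W {p : X × T | ρ ≤ ‖p.2‖} univ M
      (fun p => if ‖p.2‖ < s then H' ((), p.2) else M p)
      fun p => if ‖p.2.1‖ < s then Ξ ((), p.2) else M (p.1, p.2.1) where
  continuousAt z hz t u := by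
    have hnorm : ContinuousAt (fun p : X × T × ℝ => ‖p.2.1‖) (z, t, u) := by fun_prop
    rcases lt_or_ge ‖t‖ s with ht | ht
    · refine ((hΞ.continuousAt () (mem_univ _) t u).comp_of_eq
        (f := fun p : X × T × ℝ => ((), p.2)) (by fun_prop) rfl).congr ?_
      filter_upwards [hnorm.eventually_lt_const ht] with p hp
      exact (if_pos hp).symm
    · refine ((hM z hz t).comp_of_eq
        (f := fun p : X × T × ℝ => (p.1, p.2.1)) (by fun_prop) rfl).congr ?_
      filter_upwards [hnorm.eventually_const_lt (hs.trans_le ht)] with p hp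
      split_ifs with hps
      · exact (hMH _ _ hps).trans (hΞ.eq_of_mem () _ hp.le _).symm
      · rfl
  eq_left z t u hu := by
    split_ifs with ht
    exacts [(hΞ.eq_left () t u hu).trans (hMH z t ht).symm, rfl]
  eq_right z t u hu := by
    simp only [hΞ.eq_right () t u hu]
  eq_of_mem z t ht u := by
    split_ifs with hts
    exacts [(hΞ.eq_of_mem () t ht u).trans (hMH z t hts).symm, rfl]
  mem _ _ _ _ := mem_univ _

lemma LipContractsIn.exists_isRelHomotopy_const_of_norm_le {T : Type*} [NormedAddCommGroup T]
    {V : Set X} (hV : LipContractsIn V V) (hV' : V.Nonempty) {r s s' : ℝ} (hs : s < s')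
    {H : X × T → Y} (hcont : ∀ z ∈ V, ∀ t, ContinuousAt H (z, t))
    (hlip : ∀ z ∈ V, ∀ t, r < ‖t‖ → LipschitzAt H (z, t)) :
    ∃ x ∈ V, ∃ M Φ, IsRelHomotopy V {p | s' ≤ ‖p.2‖} univ H M Φ ∧
      (∀ z t, ‖t‖ ≤ s → M (z, t) = H (x, t)) ∧
      ∀ z ∈ V, ∀ t, r < ‖t‖ → LipschitzAt M (z, t) := by
  obtain ⟨v, hv⟩ := hV'
  obtain ⟨x, C, hC₀, hC₁, hC⟩ := hV
  obtain ⟨ψ, hψ, hψ_one, hψ_zero⟩ := exists_locallyLipschitz_cutoff T hs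
  have hψ_snd z t : LipschitzAt (fun p : X × T => ψ p.2) (z, t) :=
    LipschitzAt.comp (hψ t) (lipschitzAt_id _).snd rfl
  refine ⟨x, hC₁ v ▸ (hC v hv 1).2, _, _,
    .slice (Θ := fun p => H (C (p.1, p.2.2), p.2.1)) (ψ := fun p => ψ p.2)
      (fun z _ t => (hψ_snd z t).continuousAt) (fun z hz t a => ?_)
      (fun z t => by simp only [hC₀]) (fun z t ht a => by simp only [hψ_zero t ht, mul_zero, hC₀])
      fun _ _ _ _ => mem_univ _,
    fun z t ht => by simp only [hψ_one t ht, hC₁], fun z hz t ht => ?_⟩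
  · have hC_cont : ContinuousAt (fun p : X × T × ℝ => C (p.1, p.2.2)) (z, t, a * ψ t) :=
      (hC z hz _).1.continuousAt.comp_of_eq (f := fun p : X × T × ℝ => (p.1, p.2.2))
        (by fun_prop) rfl
    exact (hcont _ (hC z hz _).2 t).comp_of_eq (f := fun p : X × T × ℝ => (C (p.1, p.2.2), p.2.1))
      (hC_cont.prodMk (by fun_prop)) rfl
  · exact (hlip _ (hC z hz _).2 t ht).comp
      (((hC z hz _).1.comp ((lipschitzAt_id _).fst.prodMk (hψ_snd z t)) rfl).prodMk
        (lipschitzAt_id _).snd) rfl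

lemma LipContractsIn.isLipDeformable (hY : LocallyLipschitzContractible Y) {V : Set X}
    (hV : LipContractsIn V V) : IsLipDeformable Y V := by
  rcases V.eq_empty_or_nonempty with rfl | hV'
  · exact .empty _ _
  intro T _ _ _ r r' hr hr' H hcont hlip _
  obtain ⟨s, hrs, hsr'⟩ := exists_between hr'
  obtain ⟨ρ, hrρ, hρs⟩ := exists_between hrs
  obtain ⟨x, hx, M, Φ, hΦ, hM, hM_lip⟩ :=
    hV.exists_isRelHomotopy_const_of_norm_le hV' hsr' hcont hlip
  obtain ⟨H', Ξ, hΞ, hH'⟩ := hY.isLipDeformable_unit T r ρ hr hrρ (fun p => H (x, p.2))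
    (fun _ _ t => (hcont x hx t).comp_of_eq (by fun_prop) rfl)
    (fun _ _ t ht => (hlip x hx t ht).comp
      (.prodMk (LocallyLipschitz.const x _) (lipschitzAt_id _).snd) rfl) fun _ _ _ => mem_univ _
  have hinsert := hΞ.insert_of_norm_lt hρs (fun z hz t => hΦ.continuousAt_right hz t)
    fun z t ht => hM z t ht.le
  refine ⟨_, _, hΦ.trans (hinsert.mono (fun p hp => (hρs.trans hsr').le.trans hp) Subset.rfl),
    fun z hz t => ?_⟩
  have hnorm : ContinuousAt (fun p : X × T => ‖p.2‖) (z, t) := by fun_prop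
  rcases lt_or_ge ‖t‖ s with ht | ht
  · refine ((hH' () (mem_univ _) t).comp
      (.prodMk (LocallyLipschitz.const () _) (lipschitzAt_id _).snd) rfl).congr ?_
    filter_upwards [hnorm.eventually_lt_const ht] with p hp
    exact if_pos hp
  · refine (hM_lip z hz t (hrs.trans_le ht)).congr ?_
    filter_upwards [hnorm.eventually_const_lt (hρs.trans_le ht)] with p hp
    exact hinsert.right_eq_left hp.le

end SourceContraction

namespace IsLipDeformable

variable {X Y J : Type*} [MetricSpace X] [MetricSpace Y]

lemma biUnion_finset {s : Finset J} {V : J → Set X} (hV : ∀ i, IsOpen (V i))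
    (h : ∀ t ⊆ s, t.Nonempty → IsLipDeformable Y (⋂ i ∈ t, V i)) :
    IsLipDeformable Y (⋃ i ∈ s, V i) := by
  classical
  induction s using Finset.induction_on generalizing V with
  | empty => simpa only [Finset.notMem_empty, iUnion_of_empty, iUnion_empty] using .empty _ _
  | insert a s _ ih =>
    have ha : IsLipDeformable Y (V a) := by
      simpa only [Finset.mem_singleton, iInter_iInter_eq_left] using
        h {a} (Finset.singleton_subset_iff.2 (Finset.mem_insert_self a s))
          (Finset.singleton_nonempty a)
    rw [Finset.set_biUnion_insert]
    refine .union (hV a) (isOpen_biUnion fun i _ => hV i) Subset.rfl ha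
      (ih hV fun t hts => h t (hts.trans (Finset.subset_insert a s))) ?_
    rw [inter_comm, iUnion₂_inter]
    refine ih (fun i => (hV i).inter (hV a)) fun t hts ht => ?_
    have hinter : ⋂ i ∈ t, V i ∩ V a = ⋂ i ∈ insert a t, V i := by
      rw [Finset.set_biInter_insert, inter_comm]
      exact biInter_inter (Finset.coe_nonempty.2 ht) V (V a)
    rw [hinter]
    exact h _ (Finset.insert_subset_insert a hts) (Finset.insert_nonempty a t)

lemma biUnion_inter_biUnion {U : J → Set X} (hU : ∀ j, IsOpen (U j))
    (h : ∀ t : Finset J, t.Nonempty → IsLipDeformable Y (⋂ j ∈ t, U j)) (s t : Finset J) :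
    IsLipDeformable Y ((⋃ i ∈ s, U i) ∩ ⋃ j ∈ t, U j) := by
  classical
  have hunion : (⋃ i ∈ s, U i) ∩ ⋃ j ∈ t, U j = ⋃ p ∈ s ×ˢ t, U p.1 ∩ U p.2 := by
    ext x
    simp only [mem_inter_iff, mem_iUnion, Finset.mem_product, Prod.exists, exists_prop]
    tauto
  rw [hunion]
  refine biUnion_finset (fun p => (hU p.1).inter (hU p.2)) fun u _ hu => ?_
  have hinter : ⋂ p ∈ u, U p.1 ∩ U p.2 = ⋂ j ∈ u.image Prod.fst ∪ u.image Prod.snd, U j := by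
    simp only [Finset.set_biInter_inter, Finset.set_biInter_finset_image, iInter_inter_distrib]
  rw [hinter]
  exact h _ ((hu.image _).mono Finset.subset_union_left)

lemma iUnion_nat {A : ℕ → Set X} (hA : ∀ n, IsOpen (A n))
    (hadj : ∀ m n, (A m ∩ A n).Nonempty → m ≤ n + 1) (h₁ : ∀ n, IsLipDeformable Y (A n))
    (h₂ : ∀ n, IsLipDeformable Y (A n ∩ A (n + 1))) : IsLipDeformable Y (⋃ n, A n) := by
  have hdisj {B : ℕ → Set X} (hB : ∀ m n, (B m ∩ B n).Nonempty → m = n) :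
      Pairwise (Function.onFun Disjoint B) := fun m n hmn =>
    disjoint_iff_inter_eq_empty.2 (not_nonempty_iff_eq_empty.1 (mt (hB m n) hmn))
  have hsplit : ⋃ n, A n = (⋃ n, A (2 * n)) ∪ ⋃ n, A (2 * n + 1) := by
    refine Subset.antisymm (iUnion_subset fun n => ?_)
      (union_subset (iUnion_subset fun n => subset_iUnion A _)
        (iUnion_subset fun n => subset_iUnion A _))
    obtain ⟨k, rfl | rfl⟩ := n.even_or_odd'
    · exact subset_union_of_subset_left (subset_iUnion (fun n => A (2 * n)) k) _
    · exact subset_union_of_subset_right (subset_iUnion (fun n => A (2 * n + 1)) k) _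
  have hinter : (⋃ n, A (2 * n)) ∩ ⋃ n, A (2 * n + 1) = ⋃ n, A n ∩ A (n + 1) := by
    ext x
    simp only [mem_inter_iff, mem_iUnion]
    refine ⟨fun ⟨⟨m, hm⟩, n, hn⟩ => ?_, fun ⟨n, hn, hn'⟩ => ?_⟩
    · have hmn := hadj _ _ ⟨x, hm, hn⟩
      have hnm := hadj _ _ ⟨x, hn, hm⟩
      obtain rfl | rfl : m = n ∨ m = n + 1 := by lia
      exacts [⟨2 * m, hm, hn⟩, ⟨2 * n + 1, hn, hm⟩]
    · obtain ⟨k, rfl | rfl⟩ := n.even_or_odd'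
      exacts [⟨⟨k, hn⟩, k, hn'⟩, ⟨⟨k + 1, hn'⟩, k, hn⟩]
  rw [hsplit]
  refine .union (isOpen_iUnion fun n => hA _) (isOpen_iUnion fun n => hA _) Subset.rfl
    (.iUnion (fun n => hA _) (hdisj fun m n hmn => ?_) fun n => h₁ _)
    (.iUnion (fun n => hA _) (hdisj fun m n hmn => ?_) fun n => h₁ _) ?_
  · have hmn' := hadj _ _ hmn
    have hnm := hadj _ _ (inter_comm _ _ ▸ hmn)
    lia
  · have hmn' := hadj _ _ hmn
    have hnm := hadj _ _ (inter_comm _ _ ▸ hmn)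
    lia
  · rw [hinter]
    refine .iUnion (fun n => (hA n).inter (hA _)) (hdisj fun m n ⟨x, hm, hn⟩ => ?_) h₂
    have hmn := hadj _ _ ⟨x, hm.2, hn.1⟩
    have hnm := hadj _ _ ⟨x, hn.2, hm.1⟩
    lia

end IsLipDeformable

section Nerve

variable {X J : Type*}

lemma finite_setOf_exists_walk_length_eq {G : SimpleGraph J}
    (hG : ∀ i, (G.neighborSet i).Finite) (n : ℕ) (i : J) :
    {j | ∃ w : G.Walk i j, w.length = n}.Finite := by
  induction n generalizing i with
  | zero => exact (finite_singleton i).subset fun j ⟨w, hw⟩ => (w.eq_of_length_eq_zero hw).symm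
  | succ n ih =>
    refine ((hG i).biUnion fun k _ => ih k).subset ?_
    rintro j ⟨_ | ⟨hik, w⟩, hw⟩
    · cases hw
    · exact mem_biUnion hik ⟨w, Nat.succ_injective hw⟩

/-- The 1-skeleton of the nerve of the family `U`. -/
def nerveGraph (U : J → Set X) : SimpleGraph J :=
  .fromRel fun i j => (U i ∩ U j).Nonempty

/-- The union of the `U j` with `j` at distance `n` from `i` in the nerve. -/
def nerveLayer (U : J → Set X) (i : J) (n : ℕ) : Set X :=
  ⋃ j ∈ {j | (nerveGraph U).edist i j = n}, U j

variable {U : J → Set X}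

lemma nerveGraph_edist_le_one {i j : J} (h : (U i ∩ U j).Nonempty) :
    (nerveGraph U).edist i j ≤ 1 := by
  rw [SimpleGraph.edist_le_one_iff_adj_or_eq, or_iff_not_imp_right]
  exact fun hij => ⟨hij, .inl h⟩

lemma finite_neighborSet_nerveGraph {i : J} (h : {j | (U i ∩ U j).Nonempty}.Finite) :
    ((nerveGraph U).neighborSet i).Finite :=
  h.subset fun _ hj => hj.2.elim id fun hji => hji.mono fun _ hx => hx.symm

lemma isOpen_nerveLayer [TopologicalSpace X] (hU : ∀ j, IsOpen (U j)) (i : J) (n : ℕ) :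
    IsOpen (nerveLayer U i n) :=
  isOpen_biUnion fun j _ => hU j

lemma nerveLayer_eq_biUnion_finset (hU : ∀ i, {j | (U i ∩ U j).Nonempty}.Finite) (i : J) (n : ℕ) :
    ∃ s : Finset J, nerveLayer U i n = ⋃ j ∈ s, U j := by
  have hfin : {j | (nerveGraph U).edist i j = n}.Finite :=
    (finite_setOf_exists_walk_length_eq (fun i => finite_neighborSet_nerveGraph (hU i)) n i).subset
      fun j hj => SimpleGraph.exists_walk_of_edist_eq_coe hj
  refine ⟨hfin.toFinset, ?_⟩
  simp only [nerveLayer, Finite.mem_toFinset]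

lemma le_add_one_of_nonempty_nerveLayer_inter {i : J} {m n : ℕ}
    (h : (nerveLayer U i m ∩ nerveLayer U i n).Nonempty) : m ≤ n + 1 := by
  obtain ⟨x, hm, hn⟩ := h
  obtain ⟨j, hij, hj⟩ := mem_iUnion₂.1 hm
  obtain ⟨k, hik, hk⟩ := mem_iUnion₂.1 hn
  have hm' : (m : ℕ∞) ≤ n + 1 := calc
    (m : ℕ∞) = (nerveGraph U).edist i j := hij.symm
    _ ≤ (nerveGraph U).edist i k + (nerveGraph U).edist k j := SimpleGraph.edist_triangle
    _ ≤ n + 1 := add_le_add hik.le (nerveGraph_edist_le_one ⟨x, hk, hj⟩)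
  exact_mod_cast hm'

lemma reachable_of_nonempty_nerveLayer_inter {i i' : J} {m n : ℕ}
    (h : (nerveLayer U i m ∩ nerveLayer U i' n).Nonempty) : (nerveGraph U).Reachable i i' := by
  obtain ⟨x, hm, hn⟩ := h
  obtain ⟨j, hij, hj⟩ := mem_iUnion₂.1 hm
  obtain ⟨k, hik, hk⟩ := mem_iUnion₂.1 hn
  have hij' := SimpleGraph.reachable_of_edist_ne_top (ne_of_eq_of_ne hij (ENat.natCast_ne_top m))
  have hik' := SimpleGraph.reachable_of_edist_ne_top (ne_of_eq_of_ne hik (ENat.natCast_ne_top n))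
  have hjk' := SimpleGraph.reachable_of_edist_ne_top
    ((nerveGraph_edist_le_one ⟨x, hj, hk⟩).trans_lt ENat.one_lt_top).ne
  exact hij'.trans (hjk'.trans hik'.symm)

lemma iUnion_iUnion_nerveLayer_out (hcover : ⋃ j, U j = univ) :
    ⋃ c : (nerveGraph U).ConnectedComponent, ⋃ n, nerveLayer U c.out n = univ := by
  refine eq_univ_of_forall fun x => ?_
  obtain ⟨j, hj⟩ := mem_iUnion.1 (hcover ▸ mem_univ x)
  let c := (nerveGraph U).connectedComponentMk j
  have hreach : (nerveGraph U).Reachable c.out j := SimpleGraph.ConnectedComponent.exact c.out_eq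
  exact mem_iUnion₂.2 ⟨c, _, mem_iUnion₂.2 ⟨j, hreach.coe_dist_eq_edist.symm, hj⟩⟩

lemma pairwise_disjoint_iUnion_nerveLayer_out :
    Pairwise (Function.onFun Disjoint
      fun c : (nerveGraph U).ConnectedComponent => ⋃ n, nerveLayer U c.out n) := by
  intro c d hcd
  refine disjoint_left.2 fun x hx hx' => hcd ?_
  obtain ⟨m, hm⟩ := mem_iUnion.1 hx
  obtain ⟨n, hn⟩ := mem_iUnion.1 hx'
  rw [← c.out_eq, ← d.out_eq]
  exact SimpleGraph.ConnectedComponent.sound (reachable_of_nonempty_nerveLayer_inter ⟨x, hm, hn⟩)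

variable {Y : Type*} [MetricSpace X] [MetricSpace Y]

lemma IsLipDeformable.iUnion_nerveLayer (hU : ∀ j, IsOpen (U j))
    (hfin : ∀ i, {j | (U i ∩ U j).Nonempty}.Finite)
    (h : ∀ t : Finset J, t.Nonempty → IsLipDeformable Y (⋂ j ∈ t, U j)) (i : J) :
    IsLipDeformable Y (⋃ n, nerveLayer U i n) := by
  choose s hs using nerveLayer_eq_biUnion_finset hfin i
  refine .iUnion_nat (isOpen_nerveLayer hU i)
    (fun m n hmn => le_add_one_of_nonempty_nerveLayer_inter hmn) (fun n => ?_) fun n => ?_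
  · rw [hs]
    exact .biUnion_finset hU fun t _ => h t
  · rw [hs, hs]
    exact .biUnion_inter_biUnion hU h _ _

lemma IsLipDeformable.univ_of_openCover (hU : ∀ j, IsOpen (U j)) (hcover : ⋃ j, U j = univ)
    (hfin : ∀ i, {j | (U i ∩ U j).Nonempty}.Finite)
    (h : ∀ t : Finset J, t.Nonempty → IsLipDeformable Y (⋂ j ∈ t, U j)) :
    IsLipDeformable Y (univ : Set X) := by
  rw [← iUnion_iUnion_nerveLayer_out hcover]
  exact .iUnion (fun c => isOpen_iUnion fun n => isOpen_nerveLayer hU c.out n)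
    pairwise_disjoint_iUnion_nerveLayer_out fun c =>
      IsLipDeformable.iUnion_nerveLayer hU hfin h c.out

end Nerve

section HomotopyClasses

variable {X Y : Type*} [MetricSpace X] [MetricSpace Y]

lemma ContHomotopic.exists_real_extension {f g : X → Y} (h : ContHomotopic f g) :
    ∃ H : X × ℝ → Y, Continuous H ∧ (∀ x, ∀ t ≤ -1, H (x, t) = f x) ∧
      ∀ x, ∀ t ≥ 1, H (x, t) = g x := by
  obtain ⟨h, hcont, h₀, h₁⟩ := h
  refine ⟨fun p => h (p.1, projIcc 0 1 zero_le_one ((p.2 + 1) / 2)), ?_, fun x t ht => ?_,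
    fun x t ht => ?_⟩
  · exact hcont.comp (continuous_fst.prodMk (continuous_projIcc.comp (by fun_prop)))
  · dsimp only
    rw [projIcc_of_le_left _ (by linarith)]
    exact h₀ x
  · dsimp only
    rw [projIcc_of_right_le _ (by linarith)]
    exact h₁ x

lemma IsLipDeformable.locLipHomotopic (h : IsLipDeformable Y (univ : Set X)) {f g : X → Y}
    (hf : LocallyLipschitz f) (hg : LocallyLipschitz g) (hfg : ContHomotopic f g) :
    LocLipHomotopic f g := by
  obtain ⟨H, hcont, hleft, hright⟩ := hfg.exists_real_extension
  have hlip (x : X) (t : ℝ) (ht : 1 < ‖t‖) : LipschitzAt H (x, t) := by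
    have hsnd : Tendsto (fun p : X × ℝ => p.2) (𝓝 (x, t)) (𝓝 t) := continuousAt_snd
    have hfst : LipschitzAt (fun p : X × ℝ => p.1) (x, t) := (lipschitzAt_id _).fst
    rcases lt_abs.1 ht with ht | ht
    · refine (LipschitzAt.comp (hg x) hfst rfl).congr ?_
      filter_upwards [hsnd.eventually (eventually_gt_nhds ht)] with p hp
      exact hright _ _ hp.le
    · refine (LipschitzAt.comp (hf x) hfst rfl).congr ?_
      filter_upwards [hsnd.eventually (eventually_lt_nhds (lt_neg.1 ht))] with p hp
      exact hleft _ _ hp.le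
  obtain ⟨H', Φ, hΦ, hH'⟩ := h ℝ 1 2 one_pos one_lt_two H (fun _ _ _ => hcont.continuousAt)
    (fun x _ => hlip x) fun _ _ _ => mem_univ _
  refine ⟨fun p => H' (p.1, 4 * (p.2 : ℝ) - 2), fun p => ?_, fun x => ?_, fun x => ?_⟩
  · have hpar : LocallyLipschitz fun s : ℝ => 4 * s - 2 :=
      ContDiff.locallyLipschitz (𝕂 := ℝ) (by fun_prop)
    have hcoe : LipschitzAt (fun q : X × unitInterval => (q.2 : ℝ)) p :=
      .comp ((LipschitzWith.subtype_val _).locallyLipschitz p.2) (lipschitzAt_id p).snd rfl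
    exact (hH' p.1 (mem_univ _) _).comp
      ((lipschitzAt_id p).fst.prodMk (.comp (hpar _) hcoe rfl)) rfl
  · dsimp only
    rw [hΦ.right_eq_left (by norm_num), hleft _ _ (by norm_num)]
  · dsimp only
    rw [hΦ.right_eq_left (by norm_num), hright _ _ (by norm_num)]

lemma IsLipDeformable.exists_locallyLipschitz_contHomotopic
    (h : IsLipDeformable Y (univ : Set X)) {f : X → Y} (hf : Continuous f) :
    ∃ g : X → Y, LocallyLipschitz g ∧ ContHomotopic f g := by
  obtain ⟨H', Φ, hΦ, hH'⟩ := h.exists_isRelHomotopy_unit (fun _ _ => hf.continuousAt)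
    fun _ _ => mem_univ _
  refine ⟨fun x => H' (x, ()), fun x => (hH' x (mem_univ x) ()).comp
    ((lipschitzAt_id x).prodMk (LocallyLipschitz.const _ x)) rfl, fun p => Φ (p.1, (), p.2),
    continuous_iff_continuousAt.2 fun p => ?_, fun x => hΦ.eq_left x () _ le_rfl,
    fun x => hΦ.eq_right x () _ le_rfl⟩
  exact (hΦ.continuousAt p.1 (mem_univ _) () p.2).comp_of_eq (by fun_prop) rfl

end HomotopyClasses

lemma IsGoodCovering.finite_setOf_inter_nonempty {X J : Type*} [MetricSpace X] {U : J → Set X}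
    (hU : IsGoodCovering U) (i : J) : {j | (U i ∩ U j).Nonempty}.Finite := by
  obtain ⟨-, -, hfin, hcpt, -⟩ := hU
  refine (hfin.finite_nonempty_inter_compact (hcpt i)).subset fun j ⟨x, hi, hj⟩ => ?_
  exact ⟨x, hj, subset_closure hi⟩

theorem locLip_classes_bijective_general {X Y : Type*} [MetricSpace X] [MetricSpace Y] {J : Type*}
    (U : J → Set X) (hopen : ∀ j, IsOpen (U j)) (hcover : ⋃ j, U j = univ)
    (hfin : ∀ i, {j | (U i ∩ U j).Nonempty}.Finite)
    (hretract : ∀ s : Finset J, s.Nonempty → (⋂ j ∈ s, U j).Nonempty →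
      IsLipSDRToPoint (⋂ j ∈ s, U j))
    (hY : LocallyLipschitzContractible Y) :
    (∀ f g : X → Y, LocallyLipschitz f → LocallyLipschitz g →
      ContHomotopic f g → LocLipHomotopic f g) ∧
    (∀ f : X → Y, Continuous f → ∃ g : X → Y, LocallyLipschitz g ∧ ContHomotopic f g) := by
  have hinter (s : Finset J) (hs : s.Nonempty) : IsLipDeformable Y (⋂ j ∈ s, U j) := by
    rcases (⋂ j ∈ s, U j).eq_empty_or_nonempty with hempty | hne
    · exact hempty ▸ .empty _ _
    · exact ((hretract s hs hne).lipContractsIn (isOpen_biInter_finset fun j _ => hopen j))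
        |>.isLipDeformable hY
  have hX : IsLipDeformable Y (univ : Set X) := .univ_of_openCover hopen hcover hfin hinter
  exact ⟨fun f g => hX.locLipHomotopic, fun f => hX.exists_locallyLipschitz_contHomotopic⟩

/-- Let `X` be a σ-compact metric space admitting a good covering and `Y`
a locally Lipschitz contractible metric space.  Then the natural map
`[X,Y]_{loc-Lip} → [X,Y]` is bijective: it is injective (continuously homotopic locally
Lipschitz maps are locally Lipschitz homotopic) and surjective (every continuous map is
homotopic to a locally Lipschitz one). -/
theorem locLip_classes_bijective {X Y : Type*} [MetricSpace X] [SigmaCompactSpace X]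
    [MetricSpace Y] {J : Type*} (U : J → Set X) (hU : IsGoodCovering U)
    (hY : LocallyLipschitzContractible Y) :
    (∀ f g : X → Y, LocallyLipschitz f → LocallyLipschitz g →
      ContHomotopic f g → LocLipHomotopic f g) ∧
    (∀ f : X → Y, Continuous f → ∃ g : X → Y, LocallyLipschitz g ∧ ContHomotopic f g) :=
  locLip_classes_bijective_general U hU.1 hU.2.1 hU.finite_setOf_inter_nonempty hU.2.2.2.2 hY
end
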